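/- arXiv:1608.03954 — 4 statements merged into one kernel-verified Lean document; each statement's English description precedes it below -/
import Mathlib

section
/- Let X and Y be proper metric spaces, let n ∈ ℕ, and let f : X → Y be coarse, coarsely n-to-1 and coarsely surjective. Then asdim(Y) ≤ asdim(X) + n − 1. -/
open Metric Bornology Function Set

/-- A map between metric spaces is (coarsely) proper if preimages of bounded
sets are bounded. -/
def MetricallyProper {X Y : Type*} [MetricSpace X] [MetricSpace Y] (f : X → Y) : Prop :=
  ∀ B : Set Y, IsBounded B → IsBounded (f ⁻¹' B)

/-- A coarse map: proper, and uniformly bornologous. -/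
def CoarseMap {X Y : Type*} [MetricSpace X] [MetricSpace Y] (f : X → Y) : Prop :=
  MetricallyProper f ∧
    ∀ R > (0:ℝ), ∃ S > (0:ℝ), ∀ x x' : X, dist x x' ≤ R → dist (f x) (f x') ≤ S

/-- Coarsely surjective map. -/
def CoarselySurjective {X Y : Type*} [MetricSpace X] [MetricSpace Y] (f : X → Y) : Prop :=
  ∃ R > (0:ℝ), ∀ y : Y, ∃ x : X, dist y (f x) ≤ R

/-- `f` is coarsely `n`-to-1. -/
def CoarselyNTo1 {X Y : Type*} [MetricSpace X] [MetricSpace Y] (f : X → Y) (n : ℕ) : Prop :=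
  ∀ R > (0:ℝ), ∃ S > (0:ℝ), ∀ A : Set Y, (∀ y ∈ A, ∀ y' ∈ A, dist y y' ≤ R) →
    ∃ V : Fin n → Set X, (∀ i, ∀ x ∈ V i, ∀ x' ∈ V i, dist x x' ≤ S) ∧ f ⁻¹' A ⊆ ⋃ i, V i

/-- `f` is coarsely finite-to-1. -/
def CoarselyFiniteTo1 {X Y : Type*} [MetricSpace X] [MetricSpace Y] (f : X → Y) : Prop :=
  ∀ R > (0:ℝ), ∃ S > (0:ℝ), ∃ m : ℕ, ∀ A : Set Y, (∀ y ∈ A, ∀ y' ∈ A, dist y y' ≤ R) →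
    ∃ V : Fin m → Set X, (∀ i, ∀ x ∈ V i, ∀ x' ∈ V i, dist x x' ≤ S) ∧ f ⁻¹' A ⊆ ⋃ i, V i

/-- Two maps are close. -/
def Close {X Y : Type*} [MetricSpace X] [MetricSpace Y] (f g : X → Y) : Prop :=
  ∃ R > (0:ℝ), ∀ x : X, dist (f x) (g x) ≤ R

/-- `f` is a coarse equivalence. -/
def CoarseEquivalence {X Y : Type*} [MetricSpace X] [MetricSpace Y] (f : X → Y) : Prop :=
  CoarseMap f ∧ ∃ g : Y → X, CoarseMap g ∧ Close (f ∘ g) id ∧ Close (g ∘ f) id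

/-- `X` and `Y` are coarsely equivalent. -/
def CoarselyEquivalent (X Y : Type*) [MetricSpace X] [MetricSpace Y] : Prop :=
  ∃ f : X → Y, CoarseEquivalence f

/-- A family of subsets is uniformly bounded. -/
def UnifBounded {X : Type*} [MetricSpace X] (𝒰 : Set (Set X)) : Prop :=
  ∃ S : ℝ, ∀ U ∈ 𝒰, ∀ x ∈ U, ∀ y ∈ U, dist x y ≤ S

/-- A family of subsets is `R`-disjoint: distinct members lie at distance `> R`. -/
def RDisjointFam {X : Type*} [MetricSpace X] (𝒰 : Set (Set X)) (R : ℝ) : Prop :=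
  ∀ U ∈ 𝒰, ∀ V ∈ 𝒰, U ≠ V → ∀ x ∈ U, ∀ y ∈ V, R < dist x y

/-- `asdim X ≤ n`. -/
def ASDimLE (X : Type*) [MetricSpace X] (n : ℕ) : Prop :=
  ∀ R > (0:ℝ), ∃ 𝒰 : Fin (n + 1) → Set (Set X),
    (∀ i, UnifBounded (𝒰 i)) ∧ (∀ i, RDisjointFam (𝒰 i) R) ∧
      ∀ x : X, ∃ i, ∃ U ∈ 𝒰 i, x ∈ U

/-- The asymptotic dimension of `X`, valued in `ℕ∞`. -/
noncomputable def asdim (X : Type*) [MetricSpace X] : ℕ∞ :=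
  sInf {n : ℕ∞ | ∃ m : ℕ, n = (m : ℕ∞) ∧ ASDimLE X m}

/-- TI-increasing functions `[0,∞) → [0,∞)`. -/
def TIIncreasing (ρ : NNReal → NNReal) : Prop :=
  Monotone ρ ∧ Filter.Tendsto ρ Filter.atTop Filter.atTop

/-- The variable-radius neighborhood `N(A, ρ)` with respect to a basepoint `x₀`. -/
def GrowNbhd {X : Type*} [MetricSpace X] (x₀ : X) (A : Set X) (ρ : NNReal → NNReal) : Set X :=
  {x' | ∃ x ∈ A, nndist x' x ≤ ρ (nndist x x₀)}

/-- `f` is coarsely open (with respect to basepoints `x₀`, `y₀`). -/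
def CoarselyOpen {X Y : Type*} [MetricSpace X] [MetricSpace Y] (f : X → Y)
    (x₀ : X) (y₀ : Y) : Prop :=
  ∀ A : Set X, ¬ IsBounded A → ∀ ρ : NNReal → NNReal, TIIncreasing ρ →
    ∃ ρ' : NNReal → NNReal, TIIncreasing ρ' ∧
      GrowNbhd y₀ (f '' A) ρ' ⊆ f '' GrowNbhd x₀ A ρ

/-- `N(A, R)`, the closed `R`-neighborhood of `A`. -/
def NbhdR {X : Type*} [MetricSpace X] (A : Set X) (R : ℝ) : Set X :=
  {x | ∃ a ∈ A, dist x a ≤ R}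

/-- A finite collection of subsets is gradually disjoint. -/
def GraduallyDisjoint {X : Type*} [MetricSpace X] {k : ℕ} (A : Fin k → Set X) : Prop :=
  ∀ R > (0:ℝ), ∃ B : Set X, IsBounded B ∧
    ∀ i j, i ≠ j → Disjoint (NbhdR (A i) R \ B) (NbhdR (A j) R \ B)

/-- A finite collection of subsets diverges. -/
def Diverges {X : Type*} [MetricSpace X] {k : ℕ} (A : Fin k → Set X) : Prop :=
  ∀ R > (0:ℝ), IsBounded (⋂ i, NbhdR (A i) R)

/-- A countable collection of subsets is gradually disjoint: every finite
subcollection is. -/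
def GraduallyDisjointSeq {X : Type*} [MetricSpace X] (A : ℕ → Set X) : Prop :=
  ∀ s : Finset ℕ, ∀ R > (0:ℝ), ∃ B : Set X, IsBounded B ∧
    ∀ i ∈ s, ∀ j ∈ s, i ≠ j → Disjoint (NbhdR (A i) R \ B) (NbhdR (A j) R \ B)

/-- A countable collection of subsets diverges: some finite subcollection diverges. -/
def DivergesSeq {X : Type*} [MetricSpace X] (A : ℕ → Set X) : Prop :=
  ∃ s : Finset ℕ, ∀ R > (0:ℝ), IsBounded (⋂ i ∈ s, NbhdR (A i) R)

/-- A complex-valued function on a metric space is slowly oscillating. -/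
def SlowlyOscillating {X : Type*} [MetricSpace X] (φ : X → ℂ) : Prop :=
  ∀ R > (0:ℝ), ∀ ε > (0:ℝ), ∃ A : Set X, IsBounded A ∧
    ∀ x : X, ∀ p ∈ closedBall x R \ A, ∀ p' ∈ closedBall x R \ A, dist (φ p) (φ p') ≤ ε

open Filter

namespace CDR

/-- A coloring of `A` with `k` colors and representatives of the `r`-components. -/
structure IsCol {X : Type*} [MetricSpace X] (A : Set X) (k : ℕ) (r D : ℝ)
    (χ : X → ℕ) (l : X → X) : Prop where
  lt : ∀ a ∈ A, χ a < k
  mem : ∀ a ∈ A, l a ∈ A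
  rep : ∀ a ∈ A, dist a (l a) ≤ D
  same : ∀ a ∈ A, ∀ b ∈ A, χ a = χ b → dist a b ≤ r → l a = l b
  col : ∀ a ∈ A, ∀ b ∈ A, l a = l b → χ a = χ b
  bdd : ∀ a ∈ A, ∀ b ∈ A, l a = l b → dist a b ≤ D

/-- `A` has dimension `< k` at scale `r`, with bound `D`. -/
def Ctl {X : Type*} [MetricSpace X] (A : Set X) (k : ℕ) (r D : ℝ) : Prop :=
  ∃ χ l, IsCol A k r D χ l

theorem Ctl.of_label {X ι : Type*} [MetricSpace X] {A : Set X} {k : ℕ} {r D : ℝ}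
    (χ : X → ℕ) (lab : X → ι) (h1 : ∀ a ∈ A, χ a < k)
    (h2 : ∀ a ∈ A, ∀ b ∈ A, χ a = χ b → dist a b ≤ r → lab a = lab b)
    (h3 : ∀ a ∈ A, ∀ b ∈ A, χ a = χ b → lab a = lab b → dist a b ≤ D) : Ctl A k r D := by
  classical
  rcases isEmpty_or_nonempty X with hX | ⟨⟨x0⟩⟩
  · exact ⟨χ, id, fun a => hX.elim a, fun a => hX.elim a, fun a => hX.elim a,
      fun a => hX.elim a, fun a => hX.elim a, fun a => hX.elim a⟩
  have key : ∃ F : ℕ × ι → X, ∀ a ∈ A, F (χ a, lab a) ∈ A ∧ χ (F (χ a, lab a)) = χ a ∧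
      lab (F (χ a, lab a)) = lab a := by
    refine ⟨fun p => if h : ∃ b ∈ A, χ b = p.1 ∧ lab b = p.2 then h.choose else x0, ?_⟩
    intro a ha
    have h : ∃ b ∈ A, χ b = (χ a, lab a).1 ∧ lab b = (χ a, lab a).2 := ⟨a, ha, rfl, rfl⟩
    simp only [dif_pos h]
    exact h.choose_spec
  obtain ⟨F, hF⟩ := key
  refine ⟨χ, fun a => F (χ a, lab a), h1, fun a ha => (hF a ha).1, ?_, ?_, ?_, ?_⟩
  · intro a ha
    exact h3 a ha _ (hF a ha).1 (hF a ha).2.1.symm (hF a ha).2.2.symm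
  · intro a ha b hb hc hd
    simp only [hc, h2 a ha b hb hc hd]
  · intro a ha b hb hl
    rw [← (hF a ha).2.1, hl, (hF b hb).2.1]
  · intro a ha b hb hl
    have e1 : χ a = χ b := by rw [← (hF a ha).2.1, hl, (hF b hb).2.1]
    have e2 : lab a = lab b := by rw [← (hF a ha).2.2, hl, (hF b hb).2.2]
    exact h3 a ha b hb e1 e2

section basic
variable {X : Type*} [MetricSpace X]

theorem Ctl.mono {A B : Set X} {k k' : ℕ} {r r' D D' : ℝ} (h : Ctl B k r' D)
    (hA : A ⊆ B) (hk : k ≤ k') (hr : r ≤ r') (hD : D ≤ D') : Ctl A k' r D' := by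
  obtain ⟨χ, l, H⟩ := h
  refine Ctl.of_label χ l (fun a ha => (H.lt a (hA ha)).trans_le hk) ?_ ?_
  · intro a ha b hb hc hd
    exact H.same a (hA ha) b (hA hb) hc (hd.trans hr)
  · intro a ha b hb hc hl
    exact (H.bdd a (hA ha) b (hA hb) hl).trans hD

theorem Ctl.of_empty {A : Set X} (hA : ∀ a, a ∉ A) (k : ℕ) (r D : ℝ) : Ctl A k r D :=
  ⟨fun _ => 0, id, fun a ha => (hA a ha).elim, fun a ha => (hA a ha).elim,
    fun a ha => (hA a ha).elim, fun a ha => (hA a ha).elim, fun a ha => (hA a ha).elim,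
    fun a ha => (hA a ha).elim⟩

theorem Ctl.pull {A B : Set X} {k : ℕ} {r D ε : ℝ} (h : Ctl A k (r + 2 * ε) D)
    (hB : ∀ b ∈ B, ∃ a ∈ A, dist b a ≤ ε) : Ctl B k r (D + 2 * ε) := by
  classical
  obtain ⟨χ, l, H⟩ := h
  have : ∀ b : X, ∃ a : X, b ∈ B → a ∈ A ∧ dist b a ≤ ε := by
    intro b
    by_cases hb : b ∈ B
    · obtain ⟨a, ha, hd⟩ := hB b hb
      exact ⟨a, fun _ => ⟨ha, hd⟩⟩
    · exact ⟨b, fun h => (hb h).elim⟩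
  choose g hg using this
  refine Ctl.of_label (fun b => χ (g b)) (fun b => l (g b)) (fun b hb => H.lt _ (hg b hb).1) ?_ ?_
  · intro a ha b hb hc hd
    refine H.same _ (hg a ha).1 _ (hg b hb).1 hc ?_
    have h1 := dist_triangle4 (g a) a b (g b)
    have h2 := (hg a ha).2
    have h3 := (hg b hb).2
    rw [dist_comm] at h2
    linarith
  · intro a ha b hb hc hl
    have h0 := H.bdd _ (hg a ha).1 _ (hg b hb).1 hl
    have h1 := dist_triangle4 a (g a) (g b) b
    have h2 := (hg a ha).2
    have h3 := (hg b hb).2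
    rw [dist_comm] at h3
    linarith

theorem Ctl.union {A B : Set X} {k : ℕ} {r D r' D' : ℝ} (hr : 0 ≤ r) (hD : 0 ≤ D)
    (hA : Ctl A k r D) (hB : Ctl B k r' D') (hr' : D + 2 * r ≤ r') :
    Ctl (A ∪ B) k r (max D (D' + 2 * (D + r))) := by
  classical
  obtain ⟨χ1, l1, H1⟩ := hA
  obtain ⟨χ2, l2, H2⟩ := hB
  -- near x b
  let near : X → X → Prop := fun x b => b ∈ B ∧ ((x ∈ B ∧ b = x) ∨
    (x ∉ B ∧ ∃ a ∈ A, a ∉ B ∧ l1 a = l1 x ∧ χ2 b = χ1 x ∧ dist a b ≤ r))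
  let χ : X → ℕ := fun x => if x ∈ B then χ2 x else χ1 x
  have hχB : ∀ x ∈ B, χ x = χ2 x := fun x hx => if_pos hx
  have hχA : ∀ x, x ∉ B → χ x = χ1 x := fun x hx => if_neg hx
  let lab : X → X ⊕ X := fun x => if h : ∃ b, near x b then Sum.inr (l2 h.choose)
    else Sum.inl (l1 x)
  have hnd : ∀ x ∈ A ∪ B, ∀ b, near x b → dist x b ≤ D + r := by
    rintro x hx b ⟨hb, ⟨_, rfl⟩ | ⟨hxB, a, ha, haB, hl, hc, hd⟩⟩
    · rw [dist_self]; linarith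
    · have hxA : x ∈ A := hx.resolve_right hxB
      have := H1.bdd x hxA a ha hl.symm
      linarith [dist_triangle x a b]
  have hnc : ∀ x b, near x b → χ2 b = χ x := by
    rintro x b ⟨hb, ⟨hx, rfl⟩ | ⟨hxB, a, ha, haB, hl, hc, hd⟩⟩
    · exact (hχB _ hx).symm
    · rw [hχA _ hxB, hc]
  -- uniqueness
  have huniq : ∀ x ∈ A ∪ B, ∀ b b', near x b → near x b' → l2 b = l2 b' := by
    rintro x hx b b' hb hb'
    refine H2.same b hb.1 b' hb'.1 (by rw [hnc x b hb, hnc x b' hb']) ?_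
    obtain ⟨hb1, ⟨hx1, rfl⟩ | ⟨hxB, a, ha, haB, hl, hc, hd⟩⟩ := hb
    · obtain ⟨hb2, ⟨hx2, rfl⟩ | ⟨hxB2, _⟩⟩ := hb'
      · rw [dist_self]; linarith
      · exact (hxB2 hx1).elim
    · obtain ⟨hb2, ⟨hx2, rfl⟩ | ⟨hxB2, a', ha', haB', hl', hc', hd'⟩⟩ := hb'
      · exact (hxB hx2).elim
      · have h1 := H1.bdd a ha a' ha' (hl.trans hl'.symm)
        have h2 := dist_triangle4 b a a' b'
        rw [dist_comm b a] at h2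
        linarith
  have hlabr : ∀ x ∈ A ∪ B, ∀ b, near x b → lab x = Sum.inr (l2 b) := by
    intro x hx b hb
    have h : ∃ b, near x b := ⟨b, hb⟩
    have e : lab x = Sum.inr (l2 h.choose) := dif_pos h
    rw [e, huniq x hx _ _ h.choose_spec hb]
  have hlabl : ∀ x, (¬ ∃ b, near x b) → lab x = Sum.inl (l1 x) := fun x h => dif_neg h
  -- label of points with same l1
  have hmove : ∀ x y, x ∉ B → y ∉ B → l1 x = l1 y → χ1 x = χ1 y → ∀ b, near x b → near y b := by
    rintro x y hx hy hl hc b ⟨hb, ⟨hx1, rfl⟩ | ⟨hxB, a, ha, haB, hl', hc', hd⟩⟩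
    · exact (hx hx1).elim
    · exact ⟨hb, Or.inr ⟨hy, a, ha, haB, hl'.trans hl, hc'.trans hc, hd⟩⟩
  have hBA : ∀ a ∈ A ∪ B, ∀ b ∈ B, χ a = χ b → dist a b ≤ r → lab a = lab b := by
    intro a ha b hb hc hd
    have nb : near b b := ⟨hb, Or.inl ⟨hb, rfl⟩⟩
    rw [hlabr b (Or.inr hb) b nb]
    by_cases haB : a ∈ B
    · rw [hlabr a ha a ⟨haB, Or.inl ⟨haB, rfl⟩⟩]
      rw [hχB a haB, hχB b hb] at hc
      rw [H2.same a haB b hb hc (by linarith)]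
    · refine hlabr a ha b ⟨hb, Or.inr ⟨haB, a, ha.resolve_right haB, haB, rfl, ?_, hd⟩⟩
      rw [hχA a haB, hχB b hb] at hc
      exact hc.symm
  refine Ctl.of_label χ lab ?_ ?_ ?_
  · intro a ha
    by_cases haB : a ∈ B
    · rw [hχB a haB]; exact H2.lt a haB
    · rw [hχA a haB]; exact H1.lt a (ha.resolve_right haB)
  · intro a ha b hb hc hd
    by_cases hbB : b ∈ B
    · exact hBA a ha b hbB hc hd
    by_cases haB : a ∈ B
    · exact (hBA b hb a haB hc.symm (by rwa [dist_comm])).symm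
    rw [hχA a haB, hχA b hbB] at hc
    have hl := H1.same a (ha.resolve_right haB) b (hb.resolve_right hbB) hc hd
    by_cases hn : ∃ c, near a c
    · obtain ⟨c, hnc⟩ := hn
      rw [hlabr a ha c hnc, hlabr b hb c (hmove a b haB hbB hl hc c hnc)]
    · have hn' : ¬ ∃ c, near b c := fun ⟨c, h⟩ =>
        hn ⟨c, hmove b a hbB haB hl.symm hc.symm c h⟩
      rw [hlabl a hn, hlabl b hn', hl]
  · intro a ha b hb hc hl
    by_cases hna : ∃ c, near a c
    · obtain ⟨c, hca⟩ := hna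
      by_cases hnb : ∃ c, near b c
      · obtain ⟨e, heb⟩ := hnb
        rw [hlabr a ha c hca, hlabr b hb e heb] at hl
        have hl' := Sum.inr.inj hl
        have h1 := H2.bdd c hca.1 e heb.1 hl'
        have h2 := dist_triangle4 a c e b
        have h3 := hnd a ha c hca
        have h4 := hnd b hb e heb
        rw [dist_comm b e] at h4
        exact le_max_of_le_right (by linarith)
      · rw [hlabr a ha c hca, hlabl b hnb] at hl
        cases hl
    · by_cases hnb : ∃ c, near b c
      · obtain ⟨e, heb⟩ := hnb
        rw [hlabl a hna, hlabr b hb e heb] at hl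
        cases hl
      · rw [hlabl a hna, hlabl b hnb] at hl
        have haB : a ∉ B := fun h => hna ⟨a, h, Or.inl ⟨h, rfl⟩⟩
        have hbB : b ∉ B := fun h => hnb ⟨b, h, Or.inl ⟨h, rfl⟩⟩
        exact le_max_of_le_left
          (H1.bdd a (ha.resolve_right haB) b (hb.resolve_right hbB) (Sum.inl.inj hl))

theorem Ctl.pieces {ι : Type*} {Q : Set X} {k : ℕ} {r D : ℝ} (lam : X → ι)
    (h : ∀ a ∈ Q, ∀ b ∈ Q, dist a b ≤ r → lam a = lam b)
    (hp : ∀ v, Ctl {a ∈ Q | lam a = v} k r D) : Ctl Q k r D := by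
  choose χ l H using hp
  refine Ctl.of_label (fun a => χ (lam a) a) (fun a => (lam a, l (lam a) a)) ?_ ?_ ?_
  · intro a ha
    exact (H (lam a)).lt a ⟨ha, rfl⟩
  · intro a ha b hb hc hd
    have e := h a ha b hb hd
    simp only [e] at hc ⊢
    rw [(H (lam b)).same a ⟨ha, e⟩ b ⟨hb, rfl⟩ hc hd]
  · intro a ha b hb hc hl
    obtain ⟨e, hl⟩ := Prod.mk.inj hl
    rw [e] at hl
    exact (H (lam b)).bdd a ⟨ha, e⟩ b ⟨hb, rfl⟩ hl

theorem Ctl.addColor {ι : Type*} {B Z : Set X} {d : ℕ} {r D D' : ℝ} (hZ : Ctl Z d r D)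
    (lab : X → ι) (h1 : ∀ a ∈ B \ Z, ∀ b ∈ B \ Z, dist a b ≤ r → lab a = lab b)
    (h2 : ∀ a ∈ B \ Z, ∀ b ∈ B \ Z, lab a = lab b → dist a b ≤ D') :
    Ctl B (d + 1) r (max D D') := by
  classical
  obtain ⟨χ, l, H⟩ := hZ
  refine Ctl.of_label (fun a => if a ∈ Z then χ a else d)
    (fun a => if a ∈ Z then Sum.inl (l a) else Sum.inr (lab a)) ?_ ?_ ?_
  · intro a ha
    split_ifs with h
    · exact (H.lt a h).trans (Nat.lt_succ_self d)
    · exact Nat.lt_succ_self d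
  · intro a ha b hb hc hd
    split_ifs at hc ⊢ with h h' h'
    · rw [H.same a h b h' hc hd]
    · exact absurd hc (H.lt a h).ne
    · exact absurd hc.symm (H.lt b h').ne
    · rw [h1 a ⟨ha, h⟩ b ⟨hb, h'⟩ hd]
  · intro a ha b hb hc hl
    split_ifs at hl with h h' h'
    · exact le_max_of_le_left (H.bdd a h b h' (Sum.inl.inj hl))
    · exact le_max_of_le_right (h2 a ⟨ha, h⟩ b ⟨hb, h'⟩ (Sum.inr.inj hl))

/-- Asymptotic dimension `< k` along a filter. -/
def Dim {ι : Type*} (J : Filter ι) (A : ι → Set X) (k : ℕ) : Prop :=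
  ∀ r : ℝ, ∃ D : ℝ, ∀ᶠ i in J, Ctl (A i) k r D

theorem Dim.union {ι : Type*} {J : Filter ι} {A B : ι → Set X} {k : ℕ}
    (hA : Dim J A k) (hB : Dim J B k) : Dim J (fun i => A i ∪ B i) k := by
  intro r
  obtain ⟨D, hD⟩ := hA (max r 0)
  obtain ⟨D', hD'⟩ := hB (max D 0 + 2 * max r 0)
  refine ⟨max (max D 0) (D' + 2 * (max D 0 + max r 0)), ?_⟩
  · filter_upwards [hD, hD'] with i h1 h2
    exact (Ctl.union (le_max_right r 0) (le_max_right D 0)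
      (h1.mono subset_rfl le_rfl le_rfl (le_max_left D 0)) h2 le_rfl).mono subset_rfl le_rfl
      (le_max_left r 0) le_rfl

theorem Dim.mono {ι : Type*} {J : Filter ι} {A B : ι → Set X} {k : ℕ}
    (hB : Dim J B k) (h : ∀ᶠ i in J, A i ⊆ B i) : Dim J A k := by
  intro r
  obtain ⟨D, hD⟩ := hB r
  refine ⟨D, ?_⟩
  filter_upwards [hD, h] with i h1 h2
  exact h1.mono h2 le_rfl le_rfl le_rfl

theorem Dim.biUnion {ι κ : Type*} {J : Filter ι} {k : ℕ} (s : Finset κ) (A : κ → ι → Set X)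
    (hA : ∀ a ∈ s, Dim J (A a) k) : Dim J (fun i => ⋃ a ∈ s, A a i) k := by
  classical
  induction s using Finset.induction_on with
  | empty =>
    intro r
    refine ⟨0, Eventually.of_forall fun i => Ctl.of_empty (by simp) _ _ _⟩
  | insert a s ha ih =>
    have := (hA a (Finset.mem_insert_self a s)).union
      (ih fun b hb => hA b (Finset.mem_insert_of_mem hb))
    refine this.mono (Eventually.of_forall fun i => ?_)
    simp

end basic

section boundary

/-- iterated composition -/
def iter {X : Type*} (φ : ℕ → X → X) : ℕ → X → X
  | 0 => id
  | j + 1 => fun x => φ j (iter φ j x)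

theorem iter_eq {X : Type*} (φ : ℕ → X → X) (x y : X) (j : ℕ) (h : iter φ j x = iter φ j y) :
    ∀ i, j ≤ i → iter φ i x = iter φ i y := by
  intro i hi
  induction i, hi using Nat.le_induction with
  | base => exact h
  | succ i hi ih => simp only [iter, ih]

variable {X : Type*} [MetricSpace X]

/-- The `L`-boundary of the partition of `A` given by `l`. -/
def Fr (A : Set X) (L : ℝ) (l : X → X) : Set X :=
  {x | x ∈ A ∧ ∃ z ∈ A, dist x z ≤ L ∧ l x ≠ l z}

/-- Weak version of `IsCol`. -/
structure IsPart (A : Set X) (k : ℕ) (r D : ℝ) (χ : X → ℕ) (l : X → X) : Prop where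
  lt : ∀ a ∈ A, χ a < k
  same : ∀ a ∈ A, ∀ b ∈ A, χ a = χ b → dist a b ≤ r → l a = l b
  bdd : ∀ a ∈ A, ∀ b ∈ A, l a = l b → dist a b ≤ D

/-- Auxiliary scales: displacement. -/
noncomputable def err (Df : ℝ → ℝ) (L : ℝ) : ℕ → ℝ
  | 0 => 0
  | j + 1 => err Df L j + Df (j + 2 * (err Df L j + L))

theorem boundary {F : Filter (Set X)} {k : ℕ} (hF : Dim F id (k + 1)) (L : ℝ) (hL : 0 ≤ L) :
    ∃ D' : ℕ → ℝ, ∀ N : ℕ, ∃ D0 : ℝ, ∀ᶠ A in F, ∃ χ l,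
      IsPart A (k + 1) N D0 χ l ∧ ∀ j ≤ N, Ctl (Fr A L l) k j (D' j) := by
  classical
  choose Df0 hDf0 using hF
  let Df : ℝ → ℝ := fun r => max (Df0 r) 0
  have hDf : ∀ r, ∀ᶠ A in F, Ctl A (k + 1) r (Df r) := fun r =>
    (hDf0 r).mono fun A h => Ctl.mono h subset_rfl le_rfl le_rfl (le_max_left _ _)
  have hDfpos : ∀ r, 0 ≤ Df r := fun r => le_max_right _ _
  let e := err Df L
  let s : ℕ → ℝ := fun j => j + 2 * (e j + L)
  have he0 : e 0 = 0 := rfl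
  have hes : ∀ j, e (j + 1) = e j + Df (s j) := fun j => rfl
  have hepos : ∀ j, 0 ≤ e j := by
    intro j
    induction j with
    | zero => exact he0.ge
    | succ j ih => rw [hes]; linarith [hDfpos (s j)]
  refine ⟨fun j => Df (s j) + 2 * (e j + L), fun N =>
    ⟨Df (N + 2 * e (N + 1)) + 2 * e (N + 1), ?_⟩⟩
  have hfin : ∀ᶠ A in F, ∀ j ∈ Finset.range (N + 1), Ctl A (k + 1) (s j) (Df (s j)) :=
    (Filter.eventually_all_finset _).2 fun j _ => hDf (s j)
  filter_upwards [hfin, hDf (N + 2 * e (N + 1))] with A hA hP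
  obtain ⟨χP, lP, HP⟩ := hP
  have : ∀ j : ℕ, ∃ v : X → ℕ, ∃ l : X → X, j ≤ N → IsCol A (k + 1) (s j) (Df (s j)) v l := by
    intro j
    by_cases hj : j ≤ N
    · obtain ⟨v, l, h⟩ := hA j (Finset.mem_range.2 (Nat.lt_succ_of_le hj))
      exact ⟨v, l, fun _ => h⟩
    · exact ⟨fun _ => 0, id, fun h => (hj h).elim⟩
  choose v l H using this
  let φ : ℕ → X → X := fun j x => if v j x = 0 then l j x else x
  have hφ : ∀ j ≤ N, ∀ x ∈ A, φ j x ∈ A ∧ dist x (φ j x) ≤ Df (s j) := by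
    intro j hj x hx
    by_cases h : v j x = 0
    · have : φ j x = l j x := if_pos h
      rw [this]
      exact ⟨(H j hj).mem x hx, (H j hj).rep x hx⟩
    · have : φ j x = x := if_neg h
      rw [this, dist_self]
      exact ⟨hx, hDfpos _⟩
  have hΦ : ∀ j ≤ N + 1, ∀ x ∈ A, iter φ j x ∈ A ∧ dist x (iter φ j x) ≤ e j := by
    intro j
    induction j with
    | zero => intro _ x hx; exact ⟨hx, by simp [iter, he0]⟩
    | succ j ih =>
      intro hj x hx
      obtain ⟨h1, h2⟩ := ih (by omega) x hx
      obtain ⟨h3, h4⟩ := hφ j (by omega) _ h1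
      refine ⟨h3, ?_⟩
      have := dist_triangle x (iter φ j x) (φ j (iter φ j x))
      rw [hes]
      exact this.trans (by linarith)
  have hΦd : ∀ j ≤ N + 1, ∀ x ∈ A, ∀ y ∈ A, dist (iter φ j x) (iter φ j y) ≤ dist x y + 2 * e j := by
    intro j hj x hx y hy
    have h1 := (hΦ j hj x hx).2
    have h2 := (hΦ j hj y hy).2
    have h3 := dist_triangle4 (iter φ j x) x y (iter φ j y)
    rw [dist_comm] at h1
    linarith
  refine ⟨fun x => χP (iter φ (N + 1) x), fun x => lP (iter φ (N + 1) x), ⟨?_, ?_, ?_⟩, ?_⟩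
  · intro a ha
    exact HP.lt _ (hΦ _ le_rfl a ha).1
  · intro a ha b hb hc hd
    refine HP.same _ (hΦ _ le_rfl a ha).1 _ (hΦ _ le_rfl b hb).1 hc ?_
    linarith [hΦd _ le_rfl a ha b hb]
  · intro a ha b hb hl
    have h0 := HP.bdd _ (hΦ _ le_rfl a ha).1 _ (hΦ _ le_rfl b hb).1 hl
    have h1 := (hΦ _ le_rfl a ha).2
    have h2 := (hΦ _ le_rfl b hb).2
    have h3 := dist_triangle4 a (iter φ (N + 1) a) (iter φ (N + 1) b) b
    rw [dist_comm] at h2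
    linarith
  · intro j hj
    have hz : ∀ x : X, ∃ z : X, x ∈ Fr A L (fun x => lP (iter φ (N + 1) x)) →
        z ∈ A ∧ v j z ≠ 0 ∧ dist x z ≤ e j + L := by
      intro x
      by_cases hx : x ∈ Fr A L (fun x => lP (iter φ (N + 1) x))
      swap
      · exact ⟨x, fun h => (hx h).elim⟩
      obtain ⟨hxA, x', hx', hd, hne⟩ := hx
      have hne' : iter φ (j + 1) x ≠ iter φ (j + 1) x' := fun h =>
        hne (congrArg lP (iter_eq φ x x' (j + 1) h (N + 1) (by omega)))
      have h1 := hΦ j (by omega) x hxA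
      have h2 := hΦ j (by omega) x' hx'
      by_cases c1 : v j (iter φ j x) = 0
      · by_cases c2 : v j (iter φ j x') = 0
        · exfalso
          apply hne'
          have e1 : iter φ (j + 1) x = l j (iter φ j x) := if_pos c1
          have e2 : iter φ (j + 1) x' = l j (iter φ j x') := if_pos c2
          rw [e1, e2]
          refine (H j hj).same _ h1.1 _ h2.1 (by rw [c1, c2]) ?_
          have := hΦd j (by omega) x hxA x' hx'
          have hj0 : (0 : ℝ) ≤ j := Nat.cast_nonneg j
          simp only [s]
          linarith
        · refine ⟨_, fun _ => ⟨h2.1, c2, ?_⟩⟩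
          linarith [dist_triangle x x' (iter φ j x')]
      · exact ⟨_, fun _ => ⟨h1.1, c1, by linarith⟩⟩
    choose g hg using hz
    refine Ctl.of_label (fun x => v j (g x) - 1) (fun x => l j (g x)) ?_ ?_ ?_
    · intro a ha
      have h1 := (H j hj).lt _ (hg a ha).1
      have h2 := (hg a ha).2.1
      omega
    · intro a ha b hb hc hd
      have h1 := (hg a ha).2.1
      have h2 := (hg b hb).2.1
      refine (H j hj).same _ (hg a ha).1 _ (hg b hb).1 (by omega) ?_
      have h3 := (hg a ha).2.2
      have h4 := (hg b hb).2.2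
      rw [dist_comm] at h3
      have := dist_triangle4 (g a) a b (g b)
      simp only [s]
      linarith
    · intro a ha b hb hc hl
      have h0 := (H j hj).bdd _ (hg a ha).1 _ (hg b hb).1 hl
      have h3 := (hg a ha).2.2
      have h4 := (hg b hb).2.2
      rw [dist_comm] at h4
      have := dist_triangle4 a (g a) (g b) b
      linarith

end boundary

section maps
variable {X Y : Type*} [MetricSpace X] [MetricSpace Y]

/-- Coarsely `n`-to-1 along a filter of subsets. -/
def NTo (F : Filter (Set X)) (f : X → Y) (n : ℕ) : Prop :=
  ∀ q : ℝ, ∃ S : ℝ, ∀ᶠ A in F, ∀ B : Set Y, (∀ y ∈ B, ∀ y' ∈ B, dist y y' ≤ q) →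
    ∃ V : Fin n → Set X, (∀ i, ∀ x ∈ V i, ∀ x' ∈ V i, dist x x' ≤ S) ∧ A ∩ f ⁻¹' B ⊆ ⋃ i, V i

theorem weak {F : Filter (Set X)} {f : X → Y} {k n : ℕ} (β : ℝ → ℝ)
    (hβ : ∀ R x x', dist x x' ≤ R → dist (f x) (f x') ≤ β R)
    (hD : Dim F id k) (hN : NTo F f n) : Dim F (fun A => f '' A) (k * n) := by
  classical
  rcases isEmpty_or_nonempty X with hX | ⟨⟨p0⟩⟩
  · exact fun r => ⟨0, Eventually.of_forall fun A => Ctl.of_empty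
      (by rintro a ⟨x, _⟩; exact hX.elim x) _ _ _⟩
  intro r0
  obtain ⟨r, hr, hr0⟩ : ∃ r : ℝ, 0 ≤ r ∧ r0 ≤ r := ⟨max r0 0, le_max_right _ _, le_max_left _ _⟩
  obtain ⟨S, hS⟩ := hN (2 * (n * r))
  obtain ⟨D, hD⟩ := hD S
  refine ⟨β D + 2 * (n * r), ?_⟩
  filter_upwards [hS, hD] with A hV hC
  obtain ⟨χ, l, H⟩ := hC
  change IsCol A k S D χ l at H
  suffices h : Ctl (f '' A) (k * n) r (β D + 2 * (n * r)) from
    h.mono subset_rfl le_rfl hr0 le_rfl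
  let σ : ℕ → ℕ → Y → Set X := fun c j y => {u | ∃ x ∈ A, χ x = c ∧ dist (f x) y ≤ j * r ∧ l x = u}
  have σmono : ∀ c j y, σ c j y ⊆ σ c (j + 1) y := by
    rintro c j y u ⟨x, hx, hc, hd, rfl⟩
    refine ⟨x, hx, hc, hd.trans ?_, rfl⟩
    push_cast
    linarith
  have σsub : ∀ c j y y', dist y y' ≤ r → σ c j y' ⊆ σ c (j + 1) y := by
    rintro c j y y' hyy u ⟨x, hx, hc, hd, rfl⟩
    refine ⟨x, hx, hc, ?_, rfl⟩
    push_cast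
    rw [dist_comm] at hyy
    linarith [dist_triangle (f x) y' y]
  have σcard : ∀ c y, ∀ j ≤ n, (σ c j y).Finite ∧ (σ c j y).ncard ≤ n := by
    intro c y j hj
    obtain ⟨V, hVd, hVc⟩ := hV (closedBall y (n * r)) (by
      intro a ha b hb
      rw [mem_closedBall] at ha hb
      rw [dist_comm] at hb
      linarith [dist_triangle a y b])
    have hex : ∀ u : σ c j y, ∃ i : Fin n, ∃ x ∈ A, χ x = c ∧ l x = u ∧ x ∈ V i := by
      rintro ⟨u, x, hx, hc, hd, rfl⟩
      have hx2 : x ∈ A ∩ f ⁻¹' closedBall y (n * r) := by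
        refine ⟨hx, ?_⟩
        rw [mem_preimage, mem_closedBall]
        refine hd.trans (mul_le_mul_of_nonneg_right ?_ hr)
        exact_mod_cast hj
      obtain ⟨i, hi⟩ := mem_iUnion.1 (hVc hx2)
      exact ⟨i, x, hx, hc, rfl, hi⟩
    choose g hg using hex
    have ginj : Function.Injective g := by
      intro u u' huu
      obtain ⟨x, hx, hc, hl, hi⟩ := hg u
      obtain ⟨x', hx', hc', hl', hi'⟩ := hg u'
      rw [← huu] at hi'
      apply Subtype.ext
      rw [← hl, ← hl']
      exact H.same x hx x' hx' (hc.trans hc'.symm) (hVd _ x hi x' hi')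
    have hfin : Finite (σ c j y) := Finite.of_injective g ginj
    refine ⟨Set.toFinite _, ?_⟩
    have := Nat.card_le_card_of_injective g ginj
    rwa [Nat.card_coe_set_eq, Nat.card_fin] at this
  have hsel : ∀ y : Y, ∃ x : X, ∃ j : ℕ, y ∈ f '' A → x ∈ A ∧ f x = y ∧ j < n ∧
      σ (χ x) j y = σ (χ x) (j + 1) y := by
    intro y
    by_cases hy : y ∈ f '' A
    swap
    · exact ⟨p0, 0, fun h => (hy h).elim⟩
    obtain ⟨x, hx, hxy⟩ := hy
    by_contra hcon
    push Not at hcon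
    have hall : ∀ j < n, σ (χ x) j y ≠ σ (χ x) (j + 1) y := fun j hj =>
      (hcon x j).2 hx hxy hj
    have hcard : ∀ j ≤ n, j + 1 ≤ (σ (χ x) j y).ncard := by
      intro j
      induction j with
      | zero =>
        intro h0
        have hne : (σ (χ x) 0 y).Nonempty := ⟨l x, x, hx, rfl, by simp [hxy], rfl⟩
        exact (Set.ncard_pos (σcard _ y 0 h0).1).2 hne
      | succ j ih =>
        intro hj
        have h1 := ih (by omega)
        have h2 : σ (χ x) j y ⊂ σ (χ x) (j + 1) y :=
          (σmono _ j y).ssubset_of_ne (hall j (by omega))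
        have h3 := Set.ncard_lt_ncard h2 (σcard _ y (j + 1) hj).1
        omega
    have h1 := hcard n le_rfl
    have h2 := (σcard (χ x) y n le_rfl).2
    omega
  choose g j hg using hsel
  have hdec : ∀ a ∈ f '' A, ∀ b ∈ f '' A, χ (g a) * n + j a = χ (g b) * n + j b →
      χ (g a) = χ (g b) ∧ j a = j b := by
    intro a ha b hb h
    have h1 := (hg a ha).2.2.1
    have h2 := (hg b hb).2.2.1
    have hn : 0 < n := by omega
    have e : χ (g a) = χ (g b) := by
      have := congrArg (· / n) h
      simp only [Nat.mul_comm _ n, Nat.mul_add_div hn, Nat.div_eq_of_lt h1,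
        Nat.div_eq_of_lt h2, add_zero] at this
      exact this
    rw [e] at h
    exact ⟨e, by omega⟩
  refine Ctl.of_label (fun y => χ (g y) * n + j y) (fun y => σ (χ (g y)) (j y) y) ?_ ?_ ?_
  · intro a ha
    have h1 := (hg a ha).2.2.1
    have h2 := H.lt _ (hg a ha).1
    calc χ (g a) * n + j a < χ (g a) * n + n := by omega
      _ = (χ (g a) + 1) * n := by ring
      _ ≤ k * n := Nat.mul_le_mul_right n h2
  · intro a ha b hb hc hd
    obtain ⟨h1, h2⟩ := hdec a ha b hb hc
    have ea := (hg a ha).2.2.2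
    have eb := (hg b hb).2.2.2
    rw [← h1, ← h2] at eb ⊢
    apply Subset.antisymm
    · rw [eb]
      exact σsub _ _ _ _ (by rwa [dist_comm])
    · rw [ea]
      exact σsub _ _ _ _ hd
  · intro a ha b hb hc hl
    obtain ⟨h1, h2⟩ := hdec a ha b hb hc
    have hm : l (g a) ∈ σ (χ (g a)) (j a) a :=
      ⟨g a, (hg a ha).1, rfl, by
        rw [(hg a ha).2.1, dist_self]; positivity, rfl⟩
    have hm2 := hm
    rw [hl] at hm2
    obtain ⟨x', hx', hc', hd', hl'⟩ := hm2
    have h3 := H.bdd _ (hg a ha).1 _ hx' hl'.symm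
    have h4 := hβ _ _ _ h3
    rw [(hg a ha).2.1] at h4
    have h5 : (j b : ℝ) * r ≤ n * r := by
      refine mul_le_mul_of_nonneg_right ?_ hr
      exact_mod_cast (hg b hb).2.2.1.le
    have h6 : 0 ≤ (n : ℝ) * r := by positivity
    linarith [dist_triangle a (f x') b]

end maps

section main
variable {X Y : Type*} [MetricSpace X] [MetricSpace Y]

theorem ev_choice {α β : Type*} [Nonempty β] {l : Filter α} {P : α → β → Prop}
    (h : ∀ᶠ a in l, ∃ b, P a b) : ∃ g : α → β, ∀ᶠ a in l, P a (g a) := by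
  classical
  refine ⟨fun a => if h : ∃ b, P a b then h.choose else Classical.arbitrary β, ?_⟩
  filter_upwards [h] with a ha
  rw [dif_pos ha]
  exact ha.choose_spec

/-- The pieces on which `f` is `(n-1)`-to-1. -/
def Pc (f : X → Y) (r : ℝ) (A : Set X) (L : ℝ) (l : X → X) (u : X) : Set X :=
  {x | x ∈ A ∧ x ∉ Fr A L l ∧ l x ≠ u ∧
    ∃ x' ∈ A, x' ∉ Fr A L l ∧ l x' = u ∧ dist (f x') (f x) ≤ r}

/-- Points of the image meeting at least two elements of the partition. -/
def Zs (f : X → Y) (r : ℝ) (A : Set X) (l : X → X) : Set Y :=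
  {y | y ∈ f '' A ∧ ∃ x ∈ A, ∃ z ∈ A, dist (f x) y ≤ r ∧ dist (f z) y ≤ r ∧ l x ≠ l z}

/-- Points of the image close to the image of the boundary. -/
def ZF (f : X → Y) (r : ℝ) (A : Set X) (L : ℝ) (l : X → X) : Set Y :=
  {y | ∃ x ∈ Fr A L l, dist (f x) y ≤ r}

theorem cover {f : X → Y} {r : ℝ} (hr : 0 ≤ r) {A : Set X} {L : ℝ} {l : X → X} {ι : Type*}
    (U : ι → X) {y : Y} (hy : y ∈ Zs f r A l \ ZF f r A L l)
    (hU : ∀ x ∈ A, dist (f x) y ≤ r → ∃ a, U a = l x) : ∃ a, y ∈ f '' Pc f r A L l (U a) := by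
  obtain ⟨⟨⟨x0, hx0, rfl⟩, x1, hx1, x2, hx2, hd1, hd2, hne⟩, hF⟩ := hy
  have key : ∀ x ∈ A, dist (f x) (f x0) ≤ r → l x ≠ l x0 →
      ∃ a, f x0 ∈ f '' Pc f r A L l (U a) := by
    intro x hx hd hl
    obtain ⟨a, ha⟩ := hU x hx hd
    refine ⟨a, x0, ⟨hx0, ?_, by rw [ha]; exact hl.symm, x, hx, ?_, ha.symm, hd⟩, rfl⟩
    · intro h
      exact hF ⟨x0, h, by rwa [dist_self]⟩
    · intro h
      exact hF ⟨x, h, hd⟩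
  by_cases h : l x1 = l x0
  · exact key x2 hx2 hd2 fun h2 => hne (h.trans h2.symm)
  · exact key x1 hx1 hd1 h

theorem pieceNTo {f : X → Y} {r : ℝ} {A : Set X} {L S q : ℝ} {l : X → X} {n : ℕ} (hr : 0 ≤ r)
    (hSL : S ≤ L)
    (hA : ∀ B : Set Y, (∀ y ∈ B, ∀ y' ∈ B, dist y y' ≤ max q 0 + r) →
      ∃ V : Fin (n + 1) → Set X, (∀ i, ∀ x ∈ V i, ∀ x' ∈ V i, dist x x' ≤ S) ∧
        A ∩ f ⁻¹' B ⊆ ⋃ i, V i) (u : X) (B : Set Y) (hB : ∀ y ∈ B, ∀ y' ∈ B, dist y y' ≤ q) :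
    ∃ V : Fin n → Set X, (∀ i, ∀ x ∈ V i, ∀ x' ∈ V i, dist x x' ≤ S) ∧
        Pc f r A L l u ∩ f ⁻¹' B ⊆ ⋃ i, V i := by
  by_cases hne : (Pc f r A L l u ∩ f ⁻¹' B).Nonempty
  swap
  · refine ⟨fun _ => ∅, by simp, ?_⟩
    rw [Set.not_nonempty_iff_eq_empty.1 hne]
    exact empty_subset _
  obtain ⟨x0, ⟨hx0, hx0F, hx0u, x, hx, hxF, hxu, hd⟩, hx0B⟩ := hne
  have hq : q ≤ max q 0 := le_max_left _ _
  have hq0 : 0 ≤ max q 0 := le_max_right _ _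
  have hdB : ∀ y ∈ B, dist (f x) y ≤ max q 0 + r := by
    intro y hy
    have := hB _ hx0B y hy
    linarith [dist_triangle (f x) (f x0) y]
  obtain ⟨V, hV, hVc⟩ := hA (insert (f x) B) (by
    intro y hy y' hy'
    rcases hy with rfl | hy
    · rcases hy' with rfl | hy'
      · rw [dist_self]; linarith
      · exact hdB y' hy'
    · rcases hy' with rfl | hy'
      · rw [dist_comm]; exact hdB y hy
      · linarith [hB y hy y' hy'])
  obtain ⟨i0, hi0⟩ := mem_iUnion.1 (hVc ⟨hx, mem_insert _ _⟩)
  refine ⟨fun i => V (i0.succAbove i), fun i => hV _, ?_⟩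
  rintro z ⟨⟨hz, hzF, hzu, _⟩, hzB⟩
  obtain ⟨i, hi⟩ := mem_iUnion.1 (hVc ⟨hz, mem_insert_of_mem _ hzB⟩)
  have hne : i ≠ i0 := by
    rintro rfl
    apply hxF
    exact ⟨hx, z, hz, (hV _ x hi0 z hi).trans hSL, by rw [hxu]; exact hzu.symm⟩
  obtain ⟨j, rfl⟩ := Fin.exists_succAbove_eq hne
  exact mem_iUnion.2 ⟨j, hi⟩

theorem enumer [Nonempty X] {A : Set X} {k n : ℕ} {N S D0 : ℝ} {χ : X → ℕ} {l : X → X}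
    (H : IsPart A k N D0 χ l) (V : Fin n → Set X)
    (hV : ∀ i, ∀ x ∈ V i, ∀ x' ∈ V i, dist x x' ≤ S) (hS : S ≤ N) :
    ∃ U : Fin n × Fin k → X, ∀ x ∈ A, x ∈ ⋃ i, V i → ∃ a, U a = l x := by
  classical
  refine ⟨fun a => if h : ∃ x ∈ A, x ∈ V a.1 ∧ χ x = a.2 then l h.choose
    else Classical.arbitrary X, ?_⟩
  intro x hx hxV
  obtain ⟨i, hi⟩ := mem_iUnion.1 hxV
  refine ⟨(i, ⟨χ x, H.lt x hx⟩), ?_⟩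
  have h : ∃ z ∈ A, z ∈ V i ∧ χ z = χ x := ⟨x, hx, hi, rfl⟩
  simp only
  rw [dif_pos h]
  obtain ⟨h1, h2, h3⟩ := h.choose_spec
  exact H.same _ h1 x hx h3 ((hV i _ h2 x hi).trans hS)

theorem step {f : X → Y} {k n : ℕ} (β : ℝ → ℝ)
    (hβ : ∀ R x x', dist x x' ≤ R → dist (f x) (f x') ≤ β R)
    (ihk : ∀ F : Filter (Set X), Dim F id k → NTo F f (n + 1) → Dim F (fun A => f '' A) (k + n))
    (ihn : ∀ F : Filter (Set X), Dim F id (k + 1) → NTo F f n → Dim F (fun A => f '' A) (k + n))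
    (F : Filter (Set X)) (hD : Dim F id (k + 1)) (hN : NTo F f (n + 1)) :
    Dim F (fun A => f '' A) (k + n + 1) := by
  classical
  rcases isEmpty_or_nonempty X with hX | hX
  · exact fun r => ⟨0, Eventually.of_forall fun A => Ctl.of_empty
      (by rintro a ⟨x, _⟩; exact hX.elim x) _ _ _⟩
  have hY : Nonempty Y := hX.map f
  intro r0
  obtain ⟨r, hr, hr0⟩ : ∃ r : ℝ, 0 ≤ r ∧ r0 ≤ r := ⟨max r0 0, le_max_right _ _, le_max_left _ _⟩
  suffices h : ∃ D, ∀ᶠ A in F, Ctl (f '' A) (k + n + 1) r D by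
    obtain ⟨D, hD⟩ := h
    exact ⟨D, hD.mono fun A h => h.mono subset_rfl le_rfl hr0 le_rfl⟩
  -- partitions
  have hb := fun L : ℕ => boundary hD (L : ℝ) (Nat.cast_nonneg L)
  choose D' hb using hb
  choose D0 hb using hb
  have hb2 : ∀ L N : ℕ, ∃ g : Set X → (X → ℕ) × (X → X), ∀ᶠ A in F,
      IsPart A (k + 1) N (D0 L N) (g A).1 (g A).2 ∧
        ∀ j ≤ N, Ctl (Fr A L (g A).2) k j (D' L j) := by
    intro L N
    apply ev_choice (P := fun (A : Set X) (p : (X → ℕ) × (X → X)) => IsPart A (k + 1) N (D0 L N) p.1 p.2 ∧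
        ∀ j ≤ N, Ctl (Fr A L p.2) k j (D' L j))
    filter_upwards [hb L N] with A hA
    obtain ⟨χ, l, h⟩ := hA
    exact ⟨(χ, l), h⟩
  choose g hg using hb2
  let lb : ℕ × ℕ × Set X → X → X := fun j => (g j.1 j.2.1 j.2.2).2
  let J : Filter (ℕ × ℕ × Set X) := (atTop : Filter ℕ).curry ((atTop : Filter ℕ).curry F)
  have hJF : ∀ {p : Set X → Prop}, (∀ᶠ A in F, p A) → ∀ᶠ j in J, p j.2.2 := by
    intro p hp
    simp only [J, eventually_curry_iff]
    exact Eventually.of_forall fun L => Eventually.of_forall fun N => hp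
  -- step a
  have ha : ∀ ρ : ℝ, ∃ δ : ℝ, ∀ᶠ j in J, ∀ u,
      Ctl (f '' Pc f r j.2.2 j.1 (lb j) u) (k + n) ρ δ := by
    have := ihn (J.bind fun j => 𝓟 (Set.range (Pc f r j.2.2 j.1 (lb j)))) ?_ ?_
    · intro ρ
      obtain ⟨δ, hδ⟩ := this ρ
      refine ⟨δ, ?_⟩
      simpa only [eventually_bind, eventually_principal, forall_mem_range] using hδ
    · intro ρ
      obtain ⟨δ, hδ⟩ := hD ρ
      refine ⟨δ, ?_⟩
      simp only [eventually_bind, eventually_principal, forall_mem_range]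
      filter_upwards [hJF hδ] with j hj u
      exact hj.mono (fun x hx => hx.1) le_rfl le_rfl le_rfl
    · intro q
      obtain ⟨S, hS⟩ := hN (max q 0 + r)
      refine ⟨S, ?_⟩
      simp only [eventually_bind, eventually_principal, forall_mem_range]
      have hL : ∀ᶠ j in J, S ≤ (j.1 : ℝ) := by
        simp only [J, eventually_curry_iff]
        filter_upwards [eventually_ge_atTop ⌈S⌉₊] with L hL
        exact Eventually.of_forall fun N => Eventually.of_forall fun A => Nat.ceil_le.1 hL
      filter_upwards [hJF hS, hL] with j hj hjL u B hB
      exact pieceNTo hr hjL hj u B hB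
  -- step b
  have hb : ∀ ρ : ℝ, ∃ δ : ℝ, ∀ᶠ j in J, ∀ U : Fin (n + 1) × Fin (k + 1) → X,
      Ctl (⋃ a, f '' Pc f r j.2.2 j.1 (lb j) (U a)) (k + n) ρ δ := by
    have := Dim.biUnion (J := J.curry (⊤ : Filter (Fin (n + 1) × Fin (k + 1) → X))) (k := k + n)
      Finset.univ (fun a p => f '' Pc f r p.1.2.2 p.1.1 (lb p.1) (p.2 a)) (by
        intro a _ ρ
        obtain ⟨δ, hδ⟩ := ha ρ
        refine ⟨δ, ?_⟩
        rw [eventually_curry_iff]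
        filter_upwards [hδ] with j hj
        rw [eventually_top]
        exact fun U => hj (U a))
    intro ρ
    obtain ⟨δ, hδ⟩ := this ρ
    refine ⟨δ, ?_⟩
    rw [eventually_curry_iff] at hδ
    filter_upwards [hδ] with j hj U
    rw [eventually_top] at hj
    simpa using hj U
  -- step c
  have hw := fun ρ' : ℕ => weak β hβ hD hN (ρ' : ℝ)
  choose Dw hw using hw
  have hw2 : ∀ ρ' : ℕ, ∃ g : Set X → (Y → ℕ) × (Y → Y), ∀ᶠ A in F,
      IsCol (f '' A) ((k + 1) * (n + 1)) ρ' (Dw ρ') (g A).1 (g A).2 := by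
    intro ρ'
    apply ev_choice (P := fun (A : Set X) (p : (Y → ℕ) × (Y → Y)) =>
      IsCol (f '' A) ((k + 1) * (n + 1)) ρ' (Dw ρ') p.1 p.2)
    filter_upwards [hw ρ'] with A hA
    obtain ⟨χ, l, h⟩ := hA
    exact ⟨(χ, l), h⟩
  choose ω hω using hw2
  let J1 : Filter (ℕ × ℕ × ℕ × Set X) := (atTop : Filter ℕ).curry J
  let Zr : ℕ × ℕ × Set X → Set Y := fun j => Zs f r j.2.2 (lb j) \ ZF f r j.2.2 j.1 (lb j)
  have hQ : ∀ w : ℕ, Dim J1 (fun p => {y | y ∈ Zr p.2 ∧ (ω p.1 p.2.2.2).1 y = w}) (k + n) := by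
    intro w ρ
    obtain ⟨δ, hδ⟩ := hb ρ
    refine ⟨δ, ?_⟩
    refine eventually_curry_iff.2 ?_
    filter_upwards [eventually_ge_atTop ⌈ρ⌉₊] with ρ' hρ'
    have hρ' : ρ ≤ ρ' := Nat.ceil_le.1 hρ'
    obtain ⟨S, hS⟩ := hN (Dw ρ' + 2 * r)
    have hNS : ∀ᶠ j in J, S ≤ (j.2.1 : ℝ) := by
      simp only [J, eventually_curry_iff]
      refine Eventually.of_forall fun L => ?_
      filter_upwards [eventually_ge_atTop ⌈S⌉₊] with N hN
      exact Eventually.of_forall fun A => Nat.ceil_le.1 hN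
    have hgJ : ∀ᶠ j in J, IsPart j.2.2 (k + 1) j.2.1 (D0 j.1 j.2.1) (g j.1 j.2.1 j.2.2).1 (lb j) := by
      simp only [J, eventually_curry_iff]
      refine Eventually.of_forall fun L => Eventually.of_forall fun N => ?_
      filter_upwards [hg L N] with A hA
      exact hA.1
    filter_upwards [hδ, hJF hS, hNS, hgJ, hJF (hω ρ')] with j h1 h2 h3 h4 h5
    have hZA : ∀ y ∈ Zr j, y ∈ f '' j.2.2 := fun y hy => hy.1.1
    refine Ctl.pieces (ω ρ' j.2.2).2 ?_ ?_
    · rintro a ⟨ha, rfl⟩ b ⟨hb, hb'⟩ hd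
      exact h5.same a (hZA a ha) b (hZA b hb) hb'.symm (hd.trans hρ')
    · intro v
      obtain ⟨V, hV, hVc⟩ := h2 {y | ∃ z ∈ f '' j.2.2, (ω ρ' j.2.2).2 z = v ∧ dist y z ≤ r} (by
        rintro y ⟨z, hz, hzv, hd⟩ y' ⟨z', hz', hzv', hd'⟩
        have := h5.bdd z hz z' hz' (hzv.trans hzv'.symm)
        rw [dist_comm] at hd'
        linarith [dist_triangle4 y z z' y'])
      obtain ⟨U, hU⟩ := enumer h4 V hV h3
      refine (h1 U).mono ?_ le_rfl le_rfl le_rfl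
      rintro y ⟨⟨hy, hyw⟩, hyv⟩
      rw [mem_iUnion]
      refine cover hr U hy ?_
      intro x hx hd
      exact hU x hx (hVc ⟨hx, y, hZA y hy, hyv, hd⟩)
  -- step d
  have hd : ∃ δ, ∀ᶠ j in J, Ctl (Zr j) (k + n) r δ := by
    obtain ⟨δ, hδ⟩ := Dim.biUnion (Finset.range ((k + 1) * (n + 1))) _ (fun w _ => hQ w) r
    refine ⟨δ, ?_⟩
    have hδ := eventually_curry_iff.1 hδ
    obtain ⟨ρ', hρ'⟩ := hδ.exists
    filter_upwards [hρ', hJF (hω ρ')] with j h1 h2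
    refine h1.mono ?_ le_rfl le_rfl le_rfl
    intro y hy
    simp only [mem_iUnion]
    exact ⟨_, Finset.mem_range.2 (h2.lt y hy.1.1), hy, rfl⟩
  obtain ⟨δ, hδ⟩ := hd
  have hδ := eventually_curry_iff.1 hδ
  obtain ⟨L, hL⟩ := hδ.exists
  -- step e
  let J2 : Filter (ℕ × Set X) := (atTop : Filter ℕ).curry F
  have hJ2 : ∀ {p : Set X → Prop}, (∀ᶠ A in F, p A) → ∀ᶠ j in J2, p j.2 := by
    intro p hp
    simp only [J2, eventually_curry_iff]
    exact Eventually.of_forall fun N => hp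
  have hFd : ∀ ρ : ℝ, ∃ δ : ℝ, ∀ᶠ p in J2, Ctl (f '' Fr p.2 L (lb (L, p))) (k + n) ρ δ := by
    have := ihk (J2.map fun p => Fr p.2 L (lb (L, p))) ?_ ?_
    · intro ρ
      obtain ⟨δ, hδ⟩ := this ρ
      exact ⟨δ, hδ⟩
    · intro ρ
      refine ⟨D' L ⌈ρ⌉₊, ?_⟩
      rw [eventually_map]
      simp only [J2, eventually_curry_iff]
      filter_upwards [eventually_ge_atTop ⌈ρ⌉₊] with N hN
      filter_upwards [hg L N] with A hA
      exact (hA.2 _ hN).mono subset_rfl le_rfl (Nat.le_ceil ρ) le_rfl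
    · intro q
      obtain ⟨S, hS⟩ := hN q
      refine ⟨S, ?_⟩
      rw [eventually_map]
      filter_upwards [hJ2 hS] with p hp B hB
      obtain ⟨V, hV, hVc⟩ := hp B hB
      exact ⟨V, hV, fun x hx => hVc ⟨hx.1.1, hx.2⟩⟩
  obtain ⟨δF, hδF⟩ := hFd (max δ 0 + 2 * r + 2 * r)
  have hcomb : ∀ᶠ p in J2, Ctl (Zs f r p.2 (lb (L, p))) (k + n) r
      (max (max δ 0) (δF + 2 * r + 2 * (max δ 0 + r))) := by
    have hL' : ∀ᶠ p in J2, Ctl (Zr (L, p)) (k + n) r δ := by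
      exact hL
    filter_upwards [hL', hδF] with p h1 h2
    have h3 : Ctl (ZF f r p.2 L (lb (L, p))) (k + n) (max δ 0 + 2 * r) (δF + 2 * r) := by
      refine h2.pull ?_
      rintro y ⟨x, hx, hd⟩
      exact ⟨f x, ⟨x, hx, rfl⟩, by rwa [dist_comm]⟩
    refine (Ctl.union hr (le_max_right δ 0)
      (h1.mono subset_rfl le_rfl le_rfl (le_max_left δ 0)) h3 le_rfl).mono ?_ le_rfl le_rfl le_rfl
    intro y hy
    by_cases h : y ∈ ZF f r p.2 L (lb (L, p))
    · exact Or.inr h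
    · exact Or.inl ⟨hy, h⟩
  simp only [J2, eventually_curry_iff] at hcomb
  obtain ⟨N, hNN⟩ := hcomb.exists
  refine ⟨max (max (max δ 0) (δF + 2 * r + 2 * (max δ 0 + r))) (β (D0 L N)), ?_⟩
  filter_upwards [hNN, hg L N] with A h1 h2
  have hsel : ∀ y : Y, ∃ x : X, y ∈ f '' A → x ∈ A ∧ f x = y := by
    intro y
    by_cases hy : y ∈ f '' A
    · obtain ⟨x, hx, h⟩ := hy
      exact ⟨x, fun _ => ⟨hx, h⟩⟩
    · exact ⟨Classical.arbitrary X, fun h => (hy h).elim⟩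
  choose s hs using hsel
  refine Ctl.addColor h1 (fun y => lb (L, N, A) (s y)) ?_ ?_
  · rintro a ⟨ha, haZ⟩ b ⟨hb, hbZ⟩ hd
    by_contra hne
    refine haZ ⟨ha, s a, (hs a ha).1, s b, (hs b hb).1, ?_, ?_, hne⟩
    · rw [(hs a ha).2, dist_self]; exact hr
    · rw [(hs b hb).2, dist_comm]; exact hd
  · rintro a ⟨ha, haZ⟩ b ⟨hb, hbZ⟩ hl
    have := hβ _ _ _ (h2.1.bdd _ (hs a ha).1 _ (hs b hb).1 hl)
    rwa [(hs a ha).2, (hs b hb).2] at this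

theorem raising {f : X → Y} (β : ℝ → ℝ)
    (hβ : ∀ R x x', dist x x' ≤ R → dist (f x) (f x') ≤ β R) (k : ℕ) :
    ∀ (n : ℕ) (F : Filter (Set X)), Dim F id k → NTo F f n →
      Dim F (fun A => f '' A) (k + n - 1) := by
  induction k with
  | zero =>
    intro n F hD _ r
    obtain ⟨D, hD⟩ := hD 0
    refine ⟨0, ?_⟩
    filter_upwards [hD] with A hA
    obtain ⟨χ, l, H⟩ := hA
    refine Ctl.of_empty ?_ _ _ _
    rintro y ⟨x, hx, rfl⟩
    exact Nat.not_lt_zero _ (H.lt x hx)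
  | succ k ihk =>
    intro n
    induction n with
    | zero =>
      intro F _ hN r
      obtain ⟨S, hS⟩ := hN 0
      refine ⟨0, ?_⟩
      filter_upwards [hS] with A hA
      refine Ctl.of_empty ?_ _ _ _
      rintro y ⟨x, hx, rfl⟩
      obtain ⟨V, _, hV⟩ := hA {f x} (by rintro y rfl y' rfl; simp)
      obtain ⟨i, _⟩ := mem_iUnion.1 (hV ⟨hx, rfl⟩)
      exact i.elim0
    | succ n ihn =>
      intro F hD hN
      have e : k + 1 + (n + 1) - 1 = k + n + 1 := by omega
      rw [e]
      refine step β hβ (fun F h1 h2 => ?_) (fun F h1 h2 => ?_) F hD hN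
      · exact ihk (n + 1) F h1 h2
      · have := ihn F h1 h2
        have e : k + 1 + n - 1 = k + n := by omega
        rwa [e] at this

theorem final {n m : ℕ} {f : X → Y} (hf : CoarseMap f) (hn : CoarselyNTo1 f n)
    (hs : CoarselySurjective f) (hX : ASDimLE X m) (r : ℝ) :
    ∃ D, Ctl (Set.univ : Set Y) (m + n) r D := by
  classical
  have hβ : ∀ R : ℝ, ∃ S : ℝ, ∀ x x' : X, dist x x' ≤ R → dist (f x) (f x') ≤ S := by
    intro R
    obtain ⟨S, _, hS⟩ := hf.2 (max R 1) (by positivity)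
    exact ⟨S, fun x x' h => hS x x' (h.trans (le_max_left _ _))⟩
  choose β hβ using hβ
  have h1 : Dim (pure (Set.univ : Set X)) id (m + 1) := by
    intro R
    obtain ⟨U, hU1, hU2, hU3⟩ := hX (max R 1) (by positivity)
    choose S hS using hU1
    choose c V hV hxV using hU3
    refine ⟨∑ i, |S i|, ?_⟩
    rw [eventually_pure]
    refine Ctl.of_label (fun x => (c x : ℕ)) V (fun x _ => (c x).2) ?_ ?_
    · intro a _ b _ hc hd
      have hc : c a = c b := Fin.ext hc
      by_contra hne
      have := hU2 (c a) (V a) (hV a) (V b) (hc ▸ hV b) hne a (hxV a) b (hxV b)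
      linarith [le_max_left R 1]
    · intro a _ b _ hc hl
      have h2 := hS (c a) (V a) (hV a) a (hxV a) b (hl ▸ hxV b)
      have h3 := Finset.single_le_sum (f := fun i => |S i|) (fun i _ => abs_nonneg _)
        (Finset.mem_univ (c a))
      linarith [le_abs_self (S (c a))]
  have h2 : NTo (pure (Set.univ : Set X)) f n := by
    intro q
    obtain ⟨S, _, hS⟩ := hn (max q 1) (by positivity)
    refine ⟨S, ?_⟩
    rw [eventually_pure]
    intro B hB
    obtain ⟨V, hV, hVc⟩ := hS B fun y hy y' hy' => (hB y hy y' hy').trans (le_max_left _ _)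
    exact ⟨V, hV, fun x hx => hVc hx.2⟩
  obtain ⟨R0, _, hR0⟩ := hs
  have h3 := raising β hβ (m + 1) n _ h1 h2
  have e : m + 1 + n - 1 = m + n := by omega
  rw [e] at h3
  obtain ⟨D, hD⟩ := h3 (r + 2 * R0)
  rw [eventually_pure] at hD
  refine ⟨D + 2 * R0, hD.pull ?_⟩
  intro y _
  obtain ⟨x, hx⟩ := hR0 y
  exact ⟨f x, ⟨x, mem_univ _, rfl⟩, hx⟩

theorem asdimLE_of_ctl {d : ℕ} (h : ∀ r : ℝ, ∃ D, Ctl (Set.univ : Set Y) (d + 1) r D) :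
    ASDimLE Y d := by
  intro R _
  obtain ⟨D, χ, l, H⟩ := h R
  refine ⟨fun i => {U | ∃ v, U = {y | χ y = i ∧ l y = v}}, ?_, ?_, ?_⟩
  · intro i
    refine ⟨D, ?_⟩
    rintro U ⟨v, rfl⟩ x ⟨_, hx⟩ y ⟨_, hy⟩
    exact H.bdd x trivial y trivial (hx.trans hy.symm)
  · rintro i U ⟨v, rfl⟩ W ⟨w, rfl⟩ hne x ⟨hx1, hx2⟩ y ⟨hy1, hy2⟩
    by_contra hcon
    apply hne
    have := H.same x trivial y trivial (hx1.trans hy1.symm) (not_lt.1 hcon)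
    rw [← hx2, ← hy2, this]
  · intro x
    exact ⟨⟨χ x, H.lt x trivial⟩, _, ⟨l x, rfl⟩, rfl, rfl⟩

theorem asdim_le_of_asdimLE {d : ℕ} (h : ASDimLE Y d) : asdim Y ≤ d :=
  sInf_le ⟨d, rfl, h⟩

theorem exists_of_asdim_ne_top (h : asdim X ≠ ⊤) : ∃ m : ℕ, asdim X = m ∧ ASDimLE X m := by
  have hne : {n : ℕ∞ | ∃ m : ℕ, n = (m : ℕ∞) ∧ ASDimLE X m}.Nonempty := by
    by_contra hcon
    rw [Set.not_nonempty_iff_eq_empty] at hcon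
    apply h
    rw [asdim, hcon, sInf_empty]
  exact csInf_mem hne

end main

end CDR

/-- Coarse dimension raising theorem: if `f : X → Y` is coarse,
coarsely `n`-to-1 and coarsely surjective between proper metric spaces, then
`asdim Y ≤ asdim X + n - 1`. -/
theorem asdim_le_of_coarselyNTo1 {X Y : Type*} [MetricSpace X] [ProperSpace X]
    [MetricSpace Y] [ProperSpace Y] (n : ℕ) (f : X → Y)
    (hf : CoarseMap f) (hn : CoarselyNTo1 f n) (hs : CoarselySurjective f) :
    asdim Y ≤ asdim X + (n : ℕ∞) - 1 := by
  by_cases hX : asdim X = ⊤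
  · rw [hX, top_add]
    exact le_top
  obtain ⟨m, hm, hmX⟩ := CDR.exists_of_asdim_ne_top hX
  have key := CDR.final hf hn hs hmX
  rw [hm]
  have hle : ASDimLE Y (m + n - 1) := by
    apply CDR.asdimLE_of_ctl
    intro r
    obtain ⟨D, hD⟩ := key r
    exact ⟨D, hD.mono subset_rfl (by omega) le_rfl le_rfl⟩
  have := CDR.asdim_le_of_asdimLE hle
  push_cast at this
  exact this
end

section
/- Let X and Y be nonempty proper metric spaces, let n ∈ ℕ, and let f : X → Y be coarse, coarsely open, coarsely n-to-1 and coarsely surjective. Then asdim(Y) = asdim(X). -/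
open Metric Bornology Function Set

namespace CoarseAux

universe u v w

/-- `A` can be covered by `k` families that are `r`-disjoint and `D`-bounded, in terms of
colours and labels. -/
def Col {Y : Type u} [MetricSpace Y] (k : ℕ) (A : Set Y) (r D : ℝ) : Prop :=
  ∃ (col : Y → ℕ) (lab : Y → Set Y), (∀ y ∈ A, col y < k) ∧
    (∀ y ∈ A, ∀ y' ∈ A, col y = col y' → dist y y' ≤ r → lab y = lab y') ∧
    (∀ y ∈ A, ∀ y' ∈ A, col y = col y' → lab y = lab y' → dist y y' ≤ D)

lemma Col.of {Y : Type u} [MetricSpace Y] {k : ℕ} {A : Set Y} {r D : ℝ} {ι : Type w}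
    (col : Y → ℕ) (lab : Y → ι) (h1 : ∀ y ∈ A, col y < k)
    (h2 : ∀ y ∈ A, ∀ y' ∈ A, col y = col y' → dist y y' ≤ r → lab y = lab y')
    (h3 : ∀ y ∈ A, ∀ y' ∈ A, col y = col y' → lab y = lab y' → dist y y' ≤ D) :
    Col k A r D := by
  refine ⟨col, fun y => {z | z ∈ A ∧ col z = col y ∧ lab z = lab y}, h1, ?_, ?_⟩
  · intro y hy y' hy' hc hd
    have := h2 y hy y' hy' hc hd
    simp only [hc, this]
  · intro y hy y' hy' hc hl
    have : y ∈ {z | z ∈ A ∧ col z = col y ∧ lab z = lab y} := ⟨hy, rfl, rfl⟩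
    simp only at hl
    rw [hl] at this
    exact h3 y hy y' hy' hc this.2.2

lemma Col.mono {Y : Type u} [MetricSpace Y] {k : ℕ} {A B : Set Y} {r r' D D' : ℝ}
    (h : Col k A r D) (hB : B ⊆ A) (hr : r' ≤ r) (hD : D ≤ D') : Col k B r' D' := by
  obtain ⟨col, lab, h1, h2, h3⟩ := h
  exact ⟨col, lab, fun y hy => h1 y (hB hy),
    fun y hy y' hy' hc hd => h2 y (hB hy) y' (hB hy') hc (hd.trans hr),
    fun y hy y' hy' hc hl => (h3 y (hB hy) y' (hB hy') hc hl).trans hD⟩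

lemma ASDimLE_iff {Y : Type u} [MetricSpace Y] (m : ℕ) :
    ASDimLE Y m ↔ ∀ R > (0:ℝ), ∃ D, Col (m + 1) (univ : Set Y) R D := by
  constructor
  · intro h R hR
    obtain ⟨U, hb, hd, hc⟩ := h R hR
    choose S hS using hb
    choose i W hW hx using hc
    refine ⟨∑ i, |S i|, Col.of (fun y => (i y : ℕ)) W (fun y _ => (i y).2) ?_ ?_⟩
    · intro y _ y' _ hc hdist
      have hc : i y = i y' := Fin.ext hc
      by_contra hne
      have := hd (i y) (W y) (hW y) (W y') (hc ▸ hW y') hne y (hx y) y' (hx y')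
      linarith
    · intro y _ y' _ hc hl
      have h1 := hS (i y) (W y) (hW y) y (hx y) y' (hl ▸ hx y')
      have h2 : |S (i y)| ≤ ∑ i, |S i| :=
        Finset.single_le_sum (f := fun i => |S i|) (fun j _ => abs_nonneg _) (Finset.mem_univ _)
      exact h1.trans ((le_abs_self _).trans h2)
  · intro h R hR
    obtain ⟨D, col, lab, h1, h2, h3⟩ := h R hR
    refine ⟨fun i => {U | ∃ l, U = {y | col y = i ∧ lab y = l}}, ?_, ?_, ?_⟩
    · intro i
      refine ⟨D, ?_⟩
      rintro _ ⟨l, rfl⟩ x ⟨hx1, hx2⟩ y ⟨hy1, hy2⟩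
      exact h3 x trivial y trivial (hx1.trans hy1.symm) (hx2.trans hy2.symm)
    · rintro i _ ⟨l, rfl⟩ _ ⟨l', rfl⟩ hne x ⟨hx1, hx2⟩ y ⟨hy1, hy2⟩
      by_contra hlt
      have := h2 x trivial y trivial (hx1.trans hy1.symm) (not_lt.1 hlt)
      apply hne
      rw [← hx2, ← hy2, this]
    · intro x
      exact ⟨⟨col x, h1 x trivial⟩, _, ⟨lab x, rfl⟩, rfl, rfl⟩

lemma Col.merge {Y : Type u} [MetricSpace Y] {k : ℕ} {A B : Set Y} {r r' D D' : ℝ}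
    (hA : Col k A r D) (hB : Col k B r' D') (hr : 0 ≤ r) (hD : 0 ≤ D) (hD' : 0 ≤ D')
    (hr' : 2 * r + D ≤ r') :
    Col k (A ∪ B) r (D' + 2 * (D + r)) := by
  classical
  obtain ⟨cA, lA, a1, a2, a3⟩ := hA
  obtain ⟨cB, lB, b1, b2, b3⟩ := hB
  let P : ℕ → Set Y → Y → Prop := fun c l b =>
    b ∈ B ∧ cB b = c ∧ ∃ u ∈ A, u ∉ B ∧ cA u = c ∧ lA u = l ∧ dist u b ≤ r
  let lab : Y → Set Y ⊕ Set Y := fun y =>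
    if y ∈ B then Sum.inr (lB y)
    else if h : ∃ b, P (cA y) (lA y) b then Sum.inr (lB h.choose) else Sum.inl (lA y)
  let col : Y → ℕ := fun y => if y ∈ B then cB y else cA y
  have key : ∀ y ∈ A, y ∉ B → ∀ b, P (cA y) (lA y) b → dist y b ≤ D + r := by
    rintro y hy hyB b ⟨_, _, u, hu, _, huc, hul, hub⟩
    have := a3 y hy u hu huc.symm hul.symm
    linarith [dist_triangle y u b]
  -- mixed case
  have mixed : ∀ y ∈ B, ∀ y' ∈ A, y' ∉ B → cB y = cA y' → dist y y' ≤ r → lab y = lab y' := by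
    intro y hy y' hy' hyB hc hd
    have hex : ∃ b, P (cA y') (lA y') b :=
      ⟨y, hy, hc, y', hy', hyB, rfl, rfl, by rwa [dist_comm]⟩
    simp only [lab, hy, hyB, if_true, if_false, hex, dif_pos]
    congr 1
    have hp := hex.choose_spec
    have hk := key y' hy' hyB _ hp
    exact b2 y hy _ hp.1 (hc.trans hp.2.1.symm)
      (by linarith [dist_triangle y y' hex.choose])
  have near : ∀ y ∈ A ∪ B, ∀ l, lab y = Sum.inr l →
      ∃ b ∈ B, cB b = col y ∧ lB b = l ∧ dist y b ≤ D + r := by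
    intro y hy l hl
    by_cases hyB : y ∈ B
    · simp only [lab, hyB, if_true, Sum.inr.injEq] at hl
      exact ⟨y, hyB, by simp [col, hyB], hl, by rw [dist_self]; linarith⟩
    · have hyA : y ∈ A := hy.resolve_right hyB
      by_cases hex : ∃ b, P (cA y) (lA y) b
      · simp only [lab, hyB, if_false, hex, dif_pos, Sum.inr.injEq] at hl
        have hp := hex.choose_spec
        exact ⟨hex.choose, hp.1, by simp only [col, hyB, if_false]; exact hp.2.1, hl,
          key y hyA hyB _ hp⟩
      · simp [lab, hyB, hex] at hl
  have nearl : ∀ y ∈ A ∪ B, ∀ l, lab y = Sum.inl l →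
      y ∈ A ∧ cA y = col y ∧ lA y = l := by
    intro y hy l hl
    by_cases hyB : y ∈ B
    · simp [lab, hyB] at hl
    · have hyA : y ∈ A := hy.resolve_right hyB
      by_cases hex : ∃ b, P (cA y) (lA y) b
      · simp [lab, hyB, hex] at hl
      · simp only [lab, hyB, if_false, hex, dif_neg, not_false_eq_true, Sum.inl.injEq] at hl
        exact ⟨hyA, by simp [col, hyB], hl⟩
  refine Col.of col lab ?_ ?_ ?_
  · intro y hy
    by_cases hyB : y ∈ B
    · simp only [col, hyB, if_true]; exact b1 y hyB
    · simp only [col, hyB, if_false]; exact a1 y (hy.resolve_right hyB)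
  · intro y hy y' hy' hc hd
    by_cases hyB : y ∈ B <;> by_cases hyB' : y' ∈ B <;>
      simp only [col, hyB, hyB', if_true, if_false] at hc
    · simp only [lab, hyB, hyB', if_true]
      rw [b2 y hyB y' hyB' hc (by linarith)]
    · exact mixed y hyB y' (hy'.resolve_right hyB') hyB' hc hd
    · exact (mixed y' hyB' y (hy.resolve_right hyB) hyB hc.symm (by rwa [dist_comm])).symm
    · have := a2 y (hy.resolve_right hyB) y' (hy'.resolve_right hyB') hc hd
      simp only [lab, hyB, hyB', if_false, hc, this]
  · intro y hy y' hy' hc hl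
    rcases hly : lab y with l | l
    · obtain ⟨p1, p2, p3⟩ := nearl y hy l hly
      obtain ⟨q1, q2, q3⟩ := nearl y' hy' l (hl ▸ hly)
      have := a3 y p1 y' q1 (by rw [p2, q2, hc]) (by rw [p3, q3])
      linarith
    · obtain ⟨b, p1, p2, p3, p4⟩ := near y hy l hly
      obtain ⟨b', q1, q2, q3, q4⟩ := near y' hy' l (hl ▸ hly)
      have := b3 b p1 b' q1 (by rw [p2, q2, hc]) (by rw [p3, q3])
      have h4 := dist_triangle4 y b b' y'
      rw [dist_comm b' y'] at h4
      linarith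

/-- Stabilisation of an increasing sequence of small sets. -/
lemma exists_stable {κ : Type w} (T : ℕ → Set κ) (n : ℕ) (hmono : ∀ a, T a ⊆ T (a + 1))
    (h0 : (T 0).Nonempty) (hfin : (T n).Finite) (hcard : (T n).ncard ≤ n) :
    ∃ a < n, T a = T (a + 1) := by
  by_contra! hne
  have hm : Monotone T := monotone_nat_of_le_succ hmono
  have : ∀ a ≤ n, a + 1 ≤ (T a).ncard := by
    intro a
    induction a with
    | zero =>
      intro h
      have : (T 0).Finite := hfin.subset (hm (Nat.zero_le n))
      exact (Set.ncard_pos this).2 h0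
    | succ a ih =>
      intro h
      have h1 := ih (by omega)
      have h2 : (T a).ncard < (T (a+1)).ncard :=
        Set.ncard_lt_ncard ((hmono a).ssubset_of_ne (hne a (by omega))) (hfin.subset (hm h))
      omega
  have := this n le_rfl
  omega

/-- The easy direction. -/
lemma easy {X : Type u} {Y : Type v} [MetricSpace X] [MetricSpace Y] (n : ℕ) (f : X → Y)
    (hf : ∀ R > (0:ℝ), ∃ S > (0:ℝ), ∀ x x' : X, dist x x' ≤ R → dist (f x) (f x') ≤ S)
    (hn : CoarselyNTo1 f n) (m : ℕ) (h : ASDimLE Y m) : ASDimLE X m := by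
  rw [ASDimLE_iff] at h ⊢
  intro R hR
  obtain ⟨S, hS, hfS⟩ := hf R hR
  obtain ⟨D, col, lab, h1, h2, h3⟩ := h S hS
  obtain ⟨T, hT, hV⟩ := hn (max D 1) (by positivity)
  let step : X → X → Prop := fun z w =>
    col (f z) = col (f w) ∧ lab (f z) = lab (f w) ∧ dist z w ≤ R
  have hsymm : ∀ z w, step z w → step w z := fun z w ⟨a, b, c⟩ =>
    ⟨a.symm, b.symm, by rwa [dist_comm]⟩
  refine ⟨n * (T + R) + T, Col.of (fun x => col (f x))
    (fun x => {w | Relation.ReflTransGen step x w}) (fun y _ => h1 _ trivial) ?_ ?_⟩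
  · intro y _ y' _ hc hd
    have hs : step y y' := ⟨hc, h2 _ trivial _ trivial hc (hfS _ _ hd), hd⟩
    ext w
    exact ⟨fun h => Relation.ReflTransGen.head (hsymm _ _ hs) h,
      fun h => Relation.ReflTransGen.head hs h⟩
  · intro x _ x' _ _ hl
    have hx' : Relation.ReflTransGen step x x' := by
      have : x' ∈ {w | Relation.ReflTransGen step x' w} := Relation.ReflTransGen.refl
      rw [← hl] at this
      exact this
    obtain ⟨V, hVd, hVc⟩ := hV {y | col y = col (f x) ∧ lab y = lab (f x)} (by
      rintro y ⟨p, q⟩ y' ⟨p', q'⟩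
      exact (h3 y trivial y' trivial (p.trans p'.symm) (q.trans q'.symm)).trans (le_max_left _ _))
    let B : ℕ → Set (Fin n) := fun a =>
      {p | ∃ z ∈ V p, dist x z ≤ a * (T + R)}
    have hcov : ∀ z, col (f z) = col (f x) → lab (f z) = lab (f x) → ∃ p, z ∈ V p := by
      intro z p q
      exact mem_iUnion.1 (hVc (show f z ∈ {y | col y = col (f x) ∧ lab y = lab (f x)} from ⟨p, q⟩))
    obtain ⟨a, ha, hst⟩ := exists_stable B n (by
        rintro a p ⟨z, hz, hd⟩
        refine ⟨z, hz, hd.trans ?_⟩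
        push_cast
        nlinarith) (by
        obtain ⟨p, hp⟩ := hcov x rfl rfl
        exact ⟨p, x, hp, by simp⟩) (Set.toFinite _) (by
        refine (Set.ncard_le_card _).trans ?_
        simp)
    have hind : ∀ w, Relation.ReflTransGen step x w →
        col (f w) = col (f x) ∧ lab (f w) = lab (f x) ∧ ∃ p ∈ B a, w ∈ V p := by
      intro w hw
      induction hw with
      | refl =>
        obtain ⟨p, hp⟩ := hcov x rfl rfl
        exact ⟨rfl, rfl, p, ⟨x, hp, by rw [dist_self]; positivity⟩, hp⟩
      | @tail z w _ hs ih =>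
        obtain ⟨i1, i2, p, ⟨z', hz', hd'⟩, hp⟩ := ih
        obtain ⟨s1, s2, s3⟩ := hs
        have e1 := s1.symm.trans i1
        have e2 := s2.symm.trans i2
        obtain ⟨q, hq⟩ := hcov w e1 e2
        refine ⟨e1, e2, q, ?_, hq⟩
        rw [hst]
        refine ⟨w, hq, ?_⟩
        have := hVd p z' hz' z hp
        have h4 := dist_triangle4 x z' z w
        push_cast
        linarith
    obtain ⟨_, _, p, ⟨z, hz, hd⟩, hp⟩ := hind x' hx'
    have := hVd p z hz x' hp
    have hle : (a:ℝ) * (T + R) ≤ n * (T + R) := by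
      have : (a:ℝ) ≤ n := by exact_mod_cast ha.le
      gcongr
    linarith [dist_triangle x z x']

section multi

variable {X : Type u} {Y : Type v} [MetricSpace X] [MetricSpace Y]

/-- Points whose fibre has a gap `(a, b]` in its distance set. -/
def Gap (F : Y → Set X) (a b : ℝ) : Set Y :=
  {y | ∀ x ∈ F y, ∀ x' ∈ F y, dist x x' ≤ b → dist x x' ≤ a}

lemma Gap.anti {F : Y → Set X} {a b b' : ℝ} (h : b ≤ b') : Gap F a b' ⊆ Gap F a b :=
  fun _ hy x hx x' hx' hd => hy x hx x' hx' (hd.trans h)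

variable (F : Y → Set X) (hne : ∀ y, (F y).Nonempty)
  (hσ : ∀ R : ℝ, ∃ σ : ℝ, 0 ≤ σ ∧ ∀ y y', dist y y' ≤ R → ∀ x ∈ F y, ∃ x' ∈ F y', dist x x' ≤ σ)
  (hτ : ∀ R : ℝ, ∃ τ : ℝ, 0 ≤ τ ∧ ∀ y y', ∀ x ∈ F y, ∀ x' ∈ F y', dist x x' ≤ R → dist y y' ≤ τ)
  (n : ℕ)
  (hV : ∀ R : ℝ, ∃ S > (0:ℝ), ∀ y, ∃ V : Fin n → Set X,
    (∀ i, ∀ x ∈ V i, ∀ x' ∈ V i, dist x x' ≤ S) ∧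
      ∀ y', dist y y' ≤ R → ∀ x ∈ F y', ∃ i, x ∈ V i)
  (m : ℕ) (hX : ∀ R : ℝ, ∃ D, Col (m + 1) (univ : Set X) R D)

include hne hσ hτ hX in
lemma piece (a r : ℝ) : ∃ D, 0 ≤ D ∧ ∀ L' : ℝ, ∃ b, ∀ Z ⊆ Gap F a b, Col 1 Z r L' →
    Col (m + 1) Z r D := by
  obtain ⟨s, hs0, hs⟩ := hσ r
  obtain ⟨DX, cX, lX, x1, x2, x3⟩ := hX (s + a)
  obtain ⟨D, hD0, hD⟩ := hτ DX
  refine ⟨D, hD0, fun L' => ?_⟩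
  obtain ⟨t, ht0, ht⟩ := hσ L'
  refine ⟨s + 2 * t, ?_⟩
  rintro Z hZ ⟨c, l, z1, z2, z3⟩
  have hc : ∀ y ∈ Z, ∀ y' ∈ Z, c y = c y' := by
    intro y hy y' hy'
    have := z1 y hy
    have := z1 y' hy'
    omega
  by_cases hYe : Nonempty Y
  swap
  · exact Col.of (fun y => 0) (fun y => (hYe ⟨y⟩).elim) (fun y => (hYe ⟨y⟩).elim)
      (fun y => (hYe ⟨y⟩).elim) (fun y => (hYe ⟨y⟩).elim) (ι := Unit)
  obtain ⟨yy⟩ := hYe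
  have hbase : ∀ w : Set Y, ∃ x0 : X, ∀ y ∈ Z, l y = w → ∃ x ∈ F y, dist x0 x ≤ t := by
    intro w
    by_cases hex : ∃ y0 ∈ Z, l y0 = w
    · obtain ⟨y0, hy0, hl0⟩ := hex
      obtain ⟨x0, hx0⟩ := hne y0
      refine ⟨x0, fun y hy hl => ?_⟩
      exact ht y0 y (z3 y0 hy0 y hy (hc _ hy0 _ hy) (hl0.trans hl.symm)) x0 hx0
    · exact ⟨(hne yy).some, fun y hy hl => (hex ⟨y, hy, hl⟩).elim⟩
  choose β hβ using hbase
  have hg : ∀ y, ∃ x, y ∈ Z → x ∈ F y ∧ dist (β (l y)) x ≤ t := by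
    intro y
    by_cases hy : y ∈ Z
    · obtain ⟨x, hx, hd⟩ := hβ (l y) y hy rfl
      exact ⟨x, fun _ => ⟨hx, hd⟩⟩
    · exact ⟨(hne yy).some, fun h => (hy h).elim⟩
  choose g hg using hg
  refine Col.of (fun y => cX (g y)) (fun y => (l y, lX (g y))) (fun y _ => x1 _ trivial) ?_ ?_
  · intro y hy y' hy' hcc hd
    have hl := z2 y hy y' hy' (hc _ hy _ hy') hd
    obtain ⟨g1, g2⟩ := hg y hy
    obtain ⟨g1', g2'⟩ := hg y' hy'
    obtain ⟨x', hx', hxd⟩ := hs y y' hd (g y) g1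
    rw [← hl] at g2'
    have e1 : dist x' (g y') ≤ s + 2 * t := by
      have h4 := dist_triangle4 x' (g y) (β (l y)) (g y')
      rw [dist_comm x' (g y), dist_comm (g y) (β (l y))] at h4
      linarith
    have e2 := hZ hy' x' hx' (g y') g1' e1
    have e3 := x2 (g y) trivial (g y') trivial hcc
      (by linarith [dist_triangle (g y) x' (g y')])
    simp only [hl, e3]
  · intro y hy y' hy' hcc hl
    have hl2 : lX (g y) = lX (g y') := (Prod.ext_iff.1 hl).2
    exact hD y y' _ (hg y hy).1 _ (hg y' hy').1 (x3 _ trivial _ trivial hcc hl2)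

include hne hσ hτ hX in
lemma pieces (a : ℝ) (j : ℕ) (r : ℝ) (hr : 0 ≤ r) : ∃ L D, 0 ≤ D ∧ ∀ L' : ℝ, ∃ b,
    ∀ Z ⊆ Gap F a b, Col j Z L L' → Col (m + 1) Z r D := by
  induction j with
  | zero =>
    refine ⟨0, 0, le_rfl, fun L' => ⟨0, ?_⟩⟩
    rintro Z hZ ⟨c, l, h1, _, _⟩
    exact ⟨c, l, fun y hy => absurd (h1 y hy) (by omega), fun y hy => absurd (h1 y hy) (by omega),
      fun y hy => absurd (h1 y hy) (by omega)⟩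
  | succ j ih =>
    obtain ⟨L, D, hD, ih⟩ := ih
    obtain ⟨D', hD', hp⟩ := piece F hne hσ hτ m hX a (2 * r + D)
    refine ⟨max L (2 * r + D), D' + 2 * (D + r), by positivity, fun L' => ?_⟩
    obtain ⟨b1, hb1⟩ := ih L'
    obtain ⟨b2, hb2⟩ := hp L'
    refine ⟨max b1 b2, ?_⟩
    rintro Z hZ ⟨c, l, h1, h2, h3⟩
    have e1 : Col (m + 1) {y ∈ Z | c y < j} r D := by
      apply hb1 _ (fun y hy => Gap.anti (le_max_left _ _) (hZ hy.1))
      exact ⟨c, l, fun y hy => hy.2,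
        fun y hy y' hy' hc hd => h2 y hy.1 y' hy'.1 hc (hd.trans (le_max_left _ _)),
        fun y hy y' hy' hc hd => h3 y hy.1 y' hy'.1 hc hd⟩
    have e2 : Col (m + 1) {y ∈ Z | c y = j} (2 * r + D) D' := by
      apply hb2 _ (fun y hy => Gap.anti (le_max_right _ _) (hZ hy.1))
      exact ⟨fun _ => 0, l, fun y hy => one_pos,
        fun y hy y' hy' hc hd => h2 y hy.1 y' hy'.1 (hy.2.trans hy'.2.symm)
          (hd.trans (le_max_right _ _)),
        fun y hy y' hy' hc hd => h3 y hy.1 y' hy'.1 (hy.2.trans hy'.2.symm) hd⟩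
    refine (e1.merge e2 hr hD hD' le_rfl).mono ?_ le_rfl le_rfl
    intro y hy
    have := h1 y hy
    rcases Nat.lt_succ_iff_lt_or_eq.1 this with h | h
    · exact Or.inl ⟨hy, h⟩
    · exact Or.inr ⟨hy, h⟩

include hne hτ hV hX in
/-- `Y` has finite asymptotic dimension. -/
lemma finite_dim (L : ℝ) : ∃ L', Col ((m + 1) * n) (univ : Set Y) L L' := by
  classical
  wlog hL : 0 ≤ L generalizing L
  · obtain ⟨L', h⟩ := this 0 le_rfl
    exact ⟨L', h.mono le_rfl (not_le.1 hL).le le_rfl⟩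
  obtain ⟨S, hS, hS'⟩ := hV (n * L)
  choose V hVd hVc using hS'
  obtain ⟨DX, cX, lX, x1, x2, x3⟩ := hX S
  obtain ⟨D, hD0, hD⟩ := hτ DX
  choose g hg using hne
  let T : ℕ → ℕ → Y → Set (Set X) := fun c a y =>
    {l | ∃ y', dist y y' ≤ a * L ∧ ∃ x ∈ F y', cX x = c ∧ lX x = l}
  have hmono : ∀ c y a, T c a y ⊆ T c (a + 1) y := by
    rintro c y a l ⟨y', hd, h⟩
    refine ⟨y', hd.trans ?_, h⟩
    push_cast
    nlinarith
  have hst : ∀ y, ∃ a < n, T (cX (g y)) a y = T (cX (g y)) (a + 1) y := by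
    intro y
    have hidx : ∀ l : T (cX (g y)) n y, ∃ p : Fin n, ∃ x ∈ V y p, cX x = cX (g y) ∧ lX x = l := by
      rintro ⟨l, y', hd, x, hx, hc, hl⟩
      obtain ⟨p, hp⟩ := hVc y y' hd x hx
      exact ⟨p, x, hp, hc, hl⟩
    choose p xx hxx hcc hll using hidx
    have hinj : Function.Injective p := by
      intro l l' h
      apply Subtype.ext
      rw [← hll l, ← hll l']
      exact x2 _ trivial _ trivial ((hcc l).trans (hcc l').symm)
        (hVd y (p l) _ (hxx l) _ (h ▸ hxx l'))
    have hfin : Finite (T (cX (g y)) n y) := Finite.of_injective p hinj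
    refine exists_stable (fun a => T (cX (g y)) a y) n (hmono _ y) ?_ (Set.toFinite _) ?_
    · exact ⟨lX (g y), y, by simp, g y, hg y, rfl, rfl⟩
    · have := Nat.card_le_card_of_injective p hinj
      rw [Nat.card_fin] at this
      exact this
  choose a ha hT using hst
  refine ⟨D + 2 * (n * L), Col.of (fun y => a y + n * cX (g y))
    (fun y => T (cX (g y)) (a y) y) ?_ ?_ ?_⟩
  · intro y _
    have h1 := x1 (g y) trivial
    have h2 := ha y
    nlinarith
  all_goals
    intro y _ y' _ hc hd
    have hn0 : 0 < n := (Nat.zero_le _).trans_lt (ha y)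
    have hc1 : cX (g y) = cX (g y') := by
      have := congrArg (· / n) hc
      simpa [Nat.add_mul_div_left _ _ hn0, Nat.div_eq_of_lt (ha _)] using this
    have hc2 : a y = a y' := by
      simp only [hc1] at hc
      omega
  · have sub : ∀ y y', dist y y' ≤ L → cX (g y) = cX (g y') → a y = a y' →
        T (cX (g y)) (a y) y ⊆ T (cX (g y')) (a y') y' := by
      rintro y y' hd hc1 hc2 l ⟨z, hz, h⟩
      rw [hT y', ← hc1, ← hc2]
      refine ⟨z, ?_, h⟩
      push_cast
      linarith [dist_triangle y' y z, dist_comm y y']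
    exact Set.Subset.antisymm (sub y y' hd hc1 hc2)
      (sub y' y (by rwa [dist_comm]) hc1.symm hc2.symm)
  · have hmem : lX (g y) ∈ T (cX (g y)) (a y) y :=
      ⟨y, by rw [dist_self]; positivity, g y, hg y, rfl, rfl⟩
    rw [hd] at hmem
    obtain ⟨z, hz, x, hx, hxc, hxl⟩ := hmem
    have e1 := x3 x trivial (g y) trivial (hxc.trans hc1.symm) hxl
    have e2 := hD z y x hx (g y) (hg y) e1
    have e3 : (a y' : ℝ) * L ≤ n * L := by
      have : (a y' : ℝ) ≤ n := by exact_mod_cast (ha y').le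
      gcongr
    have e4 : 0 ≤ (n:ℝ) * L := by positivity
    have := dist_triangle y z y'
    rw [dist_comm y z, dist_comm z y'] at this
    linarith

include hne hσ hτ hV hX in
lemma gap_col (a r : ℝ) (hr : 0 ≤ r) : ∃ b D, 0 ≤ D ∧ Col (m + 1) (Gap F a b) r D := by
  obtain ⟨L, D, hD, h⟩ := pieces F hne hσ hτ m hX a ((m + 1) * n) r hr
  obtain ⟨L', hL'⟩ := finite_dim F hne hτ n hV m hX L
  obtain ⟨b, hb⟩ := h L'
  exact ⟨b, D, hD, hb _ le_rfl (hL'.mono (subset_univ _) le_rfl le_rfl)⟩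

include hne hσ hτ hV hX in
lemma hard (r : ℝ) (hr : 0 ≤ r) : ∃ D, Col (m + 1) (univ : Set Y) r D := by
  classical
  obtain ⟨S, hS, hS'⟩ := hV 0
  choose V hVd hVc using hS'
  have main : ∀ k : ℕ, ∃ (A : Set Y) (D β : ℝ), 0 ≤ D ∧ Col (m + 1) A r D ∧ ∀ y ∉ A,
      ∃ T : Finset (Fin n × Fin n), T.card = k ∧ ∀ p ∈ T, ∃ x ∈ V y p.1, ∃ x' ∈ V y p.2,
        dist x x' ≤ β := by
    intro k
    induction k with
    | zero =>
      exact ⟨∅, 0, 0, le_rfl, ⟨fun _ => 0, fun _ => ∅, by simp, by simp, by simp⟩,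
        fun y _ => ⟨∅, by simp, by simp⟩⟩
    | succ k ih =>
      obtain ⟨A, D, β, hD, hA, hT⟩ := ih
      obtain ⟨b, D', hD', hG⟩ := gap_col F hne hσ hτ n hV m hX (β + 2 * S) (2 * r + D)
        (by positivity)
      refine ⟨A ∪ Gap F (β + 2 * S) b, _, max b β, ?_, hA.merge hG hr hD hD' le_rfl, ?_⟩
      · positivity
      intro y hy
      rw [mem_union, not_or] at hy
      obtain ⟨T, hTc, hT⟩ := hT y hy.1
      have hy2 := hy.2
      simp only [Gap, mem_ofPred_eq] at hy2
      push Not at hy2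
      obtain ⟨x, hx, x', hx', h1, h2⟩ := hy2
      obtain ⟨p, hp⟩ := hVc y y (by simp) x hx
      obtain ⟨q, hq⟩ := hVc y y (by simp) x' hx'
      have hnot : (p, q) ∉ T := by
        intro hmem
        obtain ⟨z, hz, z', hz', hd⟩ := hT _ hmem
        have e1 := hVd y p x hp z hz
        have e2 := hVd y q z' hz' x' hq
        linarith [dist_triangle4 x z z' x']
      refine ⟨insert (p, q) T, by rw [Finset.card_insert_of_notMem hnot, hTc], ?_⟩
      intro t ht
      rcases Finset.mem_insert.1 ht with rfl | ht
      · exact ⟨x, hp, x', hq, h1.trans (le_max_left _ _)⟩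
      · obtain ⟨z, hz, z', hz', hd⟩ := hT t ht
        exact ⟨z, hz, z', hz', hd.trans (le_max_right _ _)⟩
  obtain ⟨A, D, β, hD, hA, hT⟩ := main (n * n + 1)
  refine ⟨D, hA.mono ?_ le_rfl le_rfl⟩
  intro y _
  by_contra hy
  obtain ⟨T, hc, _⟩ := hT y hy
  have := Finset.card_le_univ T
  simp at this
  omega

end multi

/-- Uniform form of coarse openness. -/
lemma open_unif {X : Type u} {Y : Type v} [MetricSpace X] [MetricSpace Y] (f : X → Y)
    (hf : CoarseMap f) (x₀ : X) (y₀ : Y) (hopen : CoarselyOpen f x₀ y₀) (R₀ : ℝ) (hR₀ : 0 < R₀)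
    (hs : ∀ y : Y, ∃ x : X, dist y (f x) ≤ R₀) (R : ℝ) :
    ∃ S : ℝ, ∀ x y, dist y (f x) ≤ R → ∃ x', dist x x' ≤ S ∧ dist y (f x') ≤ R₀ := by
  by_contra! hbad
  -- images and preimages of bounded sets are bounded
  have hpre : ∀ (y : Y) (t : ℝ), ∃ M : ℝ, ∀ x, dist (f x) y ≤ t → dist x x₀ ≤ M := by
    intro y t
    obtain ⟨M, hM⟩ := (isBounded_iff_subset_closedBall x₀).1 (hf.1 _ (isBounded_closedBall (x := y) (r := t)))
    exact ⟨M, fun x hx => hM hx⟩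
  have himg : ∀ (x : X) (t : ℝ), ∃ M : ℝ, ∀ z, dist z x ≤ t → dist (f z) (f x) ≤ M := by
    intro x t
    obtain ⟨M, _, hM⟩ := hf.2 (max t 1) (by positivity)
    exact ⟨M, fun z hz => hM z x (hz.trans (le_max_left _ _))⟩
  have hfar : ∀ T : ℝ, ∀ s : ℕ, ∃ (x : X) (y : Y), T < dist x x₀ ∧
      dist y (f x) ≤ R ∧ ∀ x', dist x x' ≤ s → R₀ < dist y (f x') := by
    intro T s
    obtain ⟨M, hM⟩ := himg x₀ T
    obtain ⟨M2, hM2⟩ := hpre (f x₀) (R₀ + R + M)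
    obtain ⟨x, y, hxy, hb⟩ := hbad (max s (T + M2))
    refine ⟨x, y, ?_, hxy, fun x' hx' => hb x' (hx'.trans (le_max_left _ _))⟩
    by_contra hle
    push Not at hle
    obtain ⟨x', hx'⟩ := hs y
    have e1 := hM x hle
    have e2 := hM2 x' (by
      have := dist_triangle4 (f x') y (f x) (f x₀)
      rw [dist_comm (f x') y] at this
      linarith)
    have e3 := hb x' (by
      refine le_trans ?_ (le_max_right _ _)
      have := dist_triangle x x₀ x'
      rw [dist_comm x₀ x'] at this
      linarith)
    linarith
  obtain ⟨p, hP, hr⟩ := exists_seq_of_forall_finset_exists (α := X × Y × ℕ)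
    (fun p => (p.2.2 : ℝ) < dist p.1 x₀ ∧ dist p.2.1 (f p.1) ≤ R ∧
      ∀ x', dist p.1 x' ≤ p.2.2 → R₀ < dist p.2.1 (f x'))
    (fun p q => p.2.2 < q.2.2 ∧ (∀ z, dist z p.1 ≤ p.2.2 → f z ≠ q.2.1) ∧
      (∀ z, dist z q.1 ≤ q.2.2 → f z ≠ p.2.1)) (by
    intro F _
    have hM : ∀ p : X × Y × ℕ, ∃ M : ℝ, 0 ≤ M ∧ ∀ x y (s : ℕ), M + s < dist x x₀ →
        dist y (f x) ≤ R → (∀ z, dist z p.1 ≤ p.2.2 → f z ≠ y) ∧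
          (∀ z, dist z x ≤ s → f z ≠ p.2.1) := by
      rintro ⟨x1, y1, s1⟩
      obtain ⟨M1, hM1⟩ := himg x1 s1
      obtain ⟨M2, hM2⟩ := hpre (f x1) (R + M1)
      obtain ⟨M3, hM3⟩ := hpre y1 0
      refine ⟨max |M2| |M3|, by positivity, fun x y s hx hxy => ⟨?_, ?_⟩⟩
      · rintro z hz rfl
        have e1 := hM1 z hz
        have e2 := hM2 x (by
          have := dist_triangle (f x) (f z) (f x1)
          rw [dist_comm (f x) (f z)] at this
          linarith)
        have e3 := (le_abs_self M2).trans (le_max_left _ |M3|)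
        have : (0:ℝ) ≤ s := Nat.cast_nonneg s
        linarith
      · rintro z hz hzy
        have e1 := hM3 z (by rw [hzy]; simp)
        have e3 := (le_abs_self M3).trans (le_max_right |M2| _)
        have := dist_triangle x z x₀
        rw [dist_comm x z] at this
        linarith
    choose M hM0 hM using hM
    obtain ⟨x, y, hT, hxy, hb⟩ := hfar (∑ p ∈ F, M p + ((∑ p ∈ F, p.2.2 + 1 : ℕ) : ℝ))
      (∑ p ∈ F, p.2.2 + 1)
    refine ⟨(x, y, ∑ p ∈ F, p.2.2 + 1), ⟨?_, hxy, hb⟩, ?_⟩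
    · have : 0 ≤ ∑ p ∈ F, M p := Finset.sum_nonneg fun p _ => hM0 p
      simp only
      linarith
    · intro p hp
      have e1 : p.2.2 ≤ ∑ p ∈ F, p.2.2 :=
        Finset.single_le_sum (f := fun p : X × Y × ℕ => p.2.2) (fun _ _ => Nat.zero_le _) hp
      have e2 : M p ≤ ∑ p ∈ F, M p := Finset.single_le_sum (fun p _ => hM0 p) hp
      exact ⟨Nat.lt_succ_of_le e1, hM p x y _ (by linarith) hxy⟩)
  have hsm : StrictMono fun k => (p k).2.2 := fun i j hij => (hr i j hij).1
  have hge : ∀ k, k ≤ (p k).2.2 := fun k => hsm.le_apply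
  have hgr : ∀ k : ℕ, (k : ℝ) < dist (p k).1 x₀ := fun k =>
    lt_of_le_of_lt (by exact_mod_cast hge k) (hP k).1
  let Q : NNReal → Set ℕ := fun t => {s | ∃ j, (p j).2.2 = s ∧ t ≤ nndist (p j).1 x₀}
  have hQne : ∀ t, (Q t).Nonempty := by
    intro t
    obtain ⟨k, hk⟩ := exists_nat_ge (t : ℝ)
    refine ⟨_, k, rfl, ?_⟩
    rw [← NNReal.coe_le_coe, coe_nndist]
    exact hk.trans (hgr k).le
  let ρ : NNReal → NNReal := fun t => ((sInf (Q t) : ℕ) : NNReal)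
  have hρ : TIIncreasing ρ := by
    constructor
    · intro t t' htt
      have : sInf (Q t) ≤ sInf (Q t') := by
        obtain ⟨j, hj, hjt⟩ := Nat.sInf_mem (hQne t')
        exact Nat.sInf_le ⟨j, hj, htt.trans hjt⟩
      exact Nat.cast_le.2 this
    · rw [Filter.tendsto_atTop]
      intro b
      obtain ⟨N, hN⟩ := exists_nat_ge b
      filter_upwards [Filter.eventually_gt_atTop
        (∑ j ∈ Finset.range (N + 1), nndist (p j).1 x₀)] with t ht
      obtain ⟨j, hj, hjt⟩ := Nat.sInf_mem (hQne t)
      refine hN.trans ?_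
      have : N ≤ sInf (Q t) := by
        rw [← hj]
        by_contra hlt
        have hjN : j ∈ Finset.range (N + 1) := Finset.mem_range.2 (by have := hge j; omega)
        have := Finset.single_le_sum (f := fun j => nndist (p j).1 x₀)
          (fun _ _ => zero_le) hjN
        exact absurd (ht.trans_le (hjt.trans this)) (lt_irrefl _)
      exact Nat.cast_le.2 this
  have hρk : ∀ k, ρ (nndist (p k).1 x₀) ≤ (p k).2.2 := by
    intro k
    have : sInf (Q (nndist (p k).1 x₀)) ≤ (p k).2.2 := Nat.sInf_le ⟨k, rfl, le_rfl⟩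
    exact Nat.cast_le.2 this
  obtain ⟨ρ', hρ', hsub⟩ := hopen (range fun k => (p k).1) (by
    intro hbdd
    obtain ⟨M, hM⟩ := (isBounded_iff_subset_closedBall x₀).1 hbdd
    obtain ⟨k, hk⟩ := exists_nat_ge M
    have := hM ⟨k, rfl⟩
    rw [mem_closedBall] at this
    simp only at this
    linarith [hgr k]) ρ hρ
  obtain ⟨t, ht⟩ := (Filter.tendsto_atTop_atTop.1 hρ'.2) R.toNNReal
  obtain ⟨M, hM⟩ := hpre y₀ t
  obtain ⟨k, hk⟩ := exists_nat_ge M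
  have hfk : t ≤ nndist (f (p k).1) y₀ := by
    by_contra hlt
    push Not at hlt
    have := hM (p k).1 (by rw [← coe_nndist]; exact_mod_cast hlt.le)
    linarith [hgr k]
  have hmem : (p k).2.1 ∈ GrowNbhd y₀ (f '' range fun k => (p k).1) ρ' := by
    refine ⟨f (p k).1, ⟨_, ⟨k, rfl⟩, rfl⟩, le_trans ?_ (ht _ hfk)⟩
    rw [← NNReal.coe_le_coe, coe_nndist]
    exact (hP k).2.1.trans (Real.le_coe_toNNReal R)
  obtain ⟨z, ⟨_, ⟨j, rfl⟩, hzj⟩, hzk⟩ := hsub hmem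
  have hzj' : dist z (p j).1 ≤ (p j).2.2 := by
    have := hzj.trans (hρk j)
    rw [← NNReal.coe_le_coe, coe_nndist] at this
    exact_mod_cast this
  rcases lt_trichotomy j k with h | h | h
  · exact (hr j k h).2.1 z hzj' hzk
  · subst h
    have := (hP j).2.2 z (by rwa [dist_comm])
    rw [hzk, dist_self] at this
    linarith
  · exact (hr k j h).2.2 z hzj' hzk

lemma hard' {X : Type u} {Y : Type v} [MetricSpace X] [Nonempty X] [MetricSpace Y] [Nonempty Y]
    (n : ℕ) (f : X → Y)
    (hf : CoarseMap f) (hopen : ∀ (x₀ : X) (y₀ : Y), CoarselyOpen f x₀ y₀)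
    (hn : CoarselyNTo1 f n) (hs : CoarselySurjective f) (m : ℕ) (h : ASDimLE X m) :
    ASDimLE Y m := by
  rw [ASDimLE_iff] at h ⊢
  intro R hR
  obtain ⟨R₀, hR₀, hs⟩ := hs
  obtain ⟨x₀⟩ := ‹Nonempty X›
  obtain ⟨y₀⟩ := ‹Nonempty Y›
  refine hard (fun y => {x | dist y (f x) ≤ R₀}) hs ?_ ?_ n ?_ m ?_ R hR.le
  · intro r
    obtain ⟨S, hS⟩ := open_unif f hf x₀ y₀ (hopen x₀ y₀) R₀ hR₀ hs (r + R₀)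
    refine ⟨max S 0, le_max_right _ _, ?_⟩
    intro y y' hd x hx
    simp only [mem_ofPred_eq] at hx
    obtain ⟨x', h1, h2⟩ := hS x y' (by
      have := dist_triangle y' y (f x)
      rw [dist_comm y' y] at this
      linarith)
    exact ⟨x', h2, h1.trans (le_max_left _ _)⟩
  · intro r
    obtain ⟨S, hS0, hS⟩ := hf.2 (max r 1) (by positivity)
    refine ⟨S + 2 * R₀, by positivity, ?_⟩
    intro y y' x hx x' hx' hd
    simp only [mem_ofPred_eq] at hx hx'
    have e1 := hS x x' (hd.trans (le_max_left _ _))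
    have := dist_triangle4 y (f x) (f x') y'
    rw [dist_comm (f x') y'] at this
    linarith
  · intro r
    obtain ⟨S, hS0, hS⟩ := hn (2 * (|r| + R₀)) (by positivity)
    refine ⟨S, hS0, fun y => ?_⟩
    obtain ⟨V, hV1, hV2⟩ := hS (closedBall y (|r| + R₀)) (by
      intro a ha b hb
      rw [mem_closedBall] at ha hb
      have := dist_triangle a y b
      rw [dist_comm y b] at this
      linarith)
    refine ⟨V, hV1, fun y' hd x hx => ?_⟩
    simp only [mem_ofPred_eq] at hx
    refine mem_iUnion.1 (hV2 ?_)
    rw [mem_preimage, mem_closedBall, dist_comm]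
    linarith [dist_triangle y y' (f x), le_abs_self r]
  · intro r
    obtain ⟨D, hD⟩ := h (max r 1) (by positivity)
    exact ⟨D, hD.mono le_rfl (le_max_left _ _) le_rfl⟩

end CoarseAux

/-- A coarse, coarsely open, coarsely `n`-to-1 and coarsely
surjective map between nonempty proper metric spaces preserves the asymptotic
dimension. -/
theorem asdim_eq_of_coarselyOpen_coarselyNTo1 {X Y : Type*}
    [MetricSpace X] [ProperSpace X] [Nonempty X]
    [MetricSpace Y] [ProperSpace Y] [Nonempty Y] (n : ℕ) (f : X → Y)
    (hf : CoarseMap f) (hopen : ∀ (x₀ : X) (y₀ : Y), CoarselyOpen f x₀ y₀)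
    (hn : CoarselyNTo1 f n) (hs : CoarselySurjective f) :
    asdim Y = asdim X := by
  have key : ∀ m, ASDimLE Y m ↔ ASDimLE X m := fun m =>
    ⟨CoarseAux.easy n f hf.2 hn m, CoarseAux.hard' n f hf hopen hn hs m⟩
  simp only [asdim, key]
end

section
/- Let X be a proper metric space and let G be a finite group acting on X by isometries. Then the orbit space G\X, equipped with the Hausdorff distance between orbits, has the same asymptotic dimension as X: asdim(G\X) = asdim(X). -/
open Metric Bornology Function Set

/-! ### Chains and small sets -/

namespace OrbAsdim

/-- one step of an `r`-chain inside `A` -/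
def Step {Y : Type*} [MetricSpace Y] (A : Set Y) (r : ℝ) (a b : Y) : Prop :=
  a ∈ A ∧ b ∈ A ∧ dist a b ≤ r

/-- `a` and `b` are joined by an `r`-chain inside `A` -/
def Chain {Y : Type*} [MetricSpace Y] (A : Set Y) (r : ℝ) : Y → Y → Prop :=
  Relation.ReflTransGen (Step A r)

/-- all `r`-chain components of `A` have diameter at most `D` -/
def Small {Y : Type*} [MetricSpace Y] (A : Set Y) (r D : ℝ) : Prop :=
  ∀ x ∈ A, ∀ y, Chain A r x y → dist x y ≤ D

/-- `P` is covered by `n+1` many `(r, D)`-small sets -/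
def Cov {Y : Type*} [MetricSpace Y] (n : ℕ) (P : Set Y) (r D : ℝ) : Prop :=
  ∃ A : Fin (n + 1) → Set Y, (∀ y ∈ P, ∃ i, y ∈ A i) ∧ ∀ i, Small (A i) r D

section basic
variable {Y : Type*} [MetricSpace Y]

theorem Chain.symm {A : Set Y} {r : ℝ} {x y : Y} (h : Chain A r x y) : Chain A r y x := by
  induction h with
  | refl => exact Relation.ReflTransGen.refl
  | tail _ h2 ih =>
    exact Relation.ReflTransGen.head ⟨h2.2.1, h2.1, by rw [dist_comm]; exact h2.2.2⟩ ih

theorem Chain.mem {A : Set Y} {r : ℝ} {x y : Y} (h : Chain A r x y) (hx : x ∈ A) : y ∈ A := by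
  induction h with
  | refl => exact hx
  | tail _ h2 _ => exact h2.2.1

theorem Chain.mono {A B : Set Y} {r s : ℝ} (hAB : A ⊆ B) (hrs : r ≤ s) {x y : Y}
    (h : Chain A r x y) : Chain B s x y :=
  Relation.ReflTransGen.mono (fun _ _ h => ⟨hAB h.1, hAB h.2.1, h.2.2.trans hrs⟩) _ _ h

theorem Small.mono {A B : Set Y} {r s D : ℝ} (h : Small B s D) (hAB : A ⊆ B) (hrs : r ≤ s) :
    Small A r D := fun x hx y hxy => h x (hAB hx) y (hxy.mono hAB hrs)

theorem Small.union {A B : Set Y} {r D D' : ℝ} (hr : 0 ≤ r) (hD : 0 ≤ D) (hD' : 0 ≤ D')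
    (hA : Small A r D) (hB : Small B (D + 2 * r) D') :
    Small (A ∪ B) r (D' + 2 * (D + r)) := by
  intro x hx y hxy
  have key : (x ∈ A ∧ Chain A r x y) ∨ ∃ b0 ∈ B, ∃ b1 ∈ B, dist x b0 ≤ D + r ∧
      Chain B (D + 2 * r) b0 b1 ∧ (y = b1 ∨ ∃ a ∈ A, dist b1 a ≤ r ∧ Chain A r a y) := by
    induction hxy with
    | refl =>
      rcases hx with hx | hx
      · exact Or.inl ⟨hx, Relation.ReflTransGen.refl⟩
      · refine Or.inr ⟨x, hx, x, hx, ?_, Relation.ReflTransGen.refl, Or.inl rfl⟩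
        rw [dist_self]; linarith
    | @tail y z _ hyz ih =>
      obtain ⟨-, hz, hd⟩ := hyz
      rcases hz with hz | hz
      · rcases ih with ⟨hxA, hc⟩ | ⟨b0, hb0, b1, hb1, h0, hc, h1⟩
        · exact Or.inl ⟨hxA, hc.tail ⟨Chain.mem hc hxA, hz, hd⟩⟩
        · refine Or.inr ⟨b0, hb0, b1, hb1, h0, hc, Or.inr ?_⟩
          rcases h1 with rfl | ⟨a, ha, hba, hay⟩
          · exact ⟨z, hz, hd, Relation.ReflTransGen.refl⟩
          · exact ⟨a, ha, hba, hay.tail ⟨Chain.mem hay ha, hz, hd⟩⟩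
      · rcases ih with ⟨hxA, hc⟩ | ⟨b0, hb0, b1, hb1, h0, hc, h1⟩
        · refine Or.inr ⟨z, hz, z, hz, ?_, Relation.ReflTransGen.refl, Or.inl rfl⟩
          have := hA x hxA y hc
          linarith [dist_triangle x y z]
        · refine Or.inr ⟨b0, hb0, z, hz, h0, hc.tail ⟨hb1, hz, ?_⟩, Or.inl rfl⟩
          rcases h1 with rfl | ⟨a, ha, hba, hay⟩
          · linarith
          · have := hA a ha y hay
            linarith [dist_triangle b1 a z, dist_triangle a y z]
  rcases key with ⟨hxA, hc⟩ | ⟨b0, hb0, b1, hb1, h0, hc, h1⟩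
  · have := hA x hxA y hc
    linarith
  · have h2 := hB b0 hb0 b1 hc
    have h3 : dist b1 y ≤ D + r := by
      rcases h1 with rfl | ⟨a, ha, hba, hay⟩
      · rw [dist_self]; linarith
      · have := hA a ha y hay
        linarith [dist_triangle b1 a y]
    linarith [dist_triangle x b0 y, dist_triangle b0 b1 y]

theorem Cov.mono {n : ℕ} {P P' : Set Y} {r s D : ℝ} (h : Cov n P' s D) (hP : P ⊆ P')
    (hrs : r ≤ s) : Cov n P r D := by
  obtain ⟨A, h1, h2⟩ := h
  exact ⟨A, fun y hy => h1 y (hP hy), fun i => (h2 i).mono subset_rfl hrs⟩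

theorem Cov.union {n : ℕ} {P P' : Set Y} {r D D' : ℝ} (hr : 0 ≤ r) (hD : 0 ≤ D) (hD' : 0 ≤ D')
    (hA : Cov n P r D) (hB : Cov n P' (D + 2 * r) D') :
    Cov n (P ∪ P') r (D' + 2 * (D + r)) := by
  obtain ⟨A, h1, h2⟩ := hA
  obtain ⟨B, h3, h4⟩ := hB
  refine ⟨fun i => A i ∪ B i, ?_, fun i => (h2 i).union hr hD hD' (h4 i)⟩
  rintro y (hy | hy)
  · obtain ⟨i, hi⟩ := h1 y hy
    exact ⟨i, Or.inl hi⟩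
  · obtain ⟨i, hi⟩ := h3 y hy
    exact ⟨i, Or.inr hi⟩

theorem Cov.empty {n : ℕ} (r D : ℝ) : Cov n (∅ : Set Y) r D :=
  ⟨fun _ => ∅, fun _ h => h.elim, fun _ _ h => h.elim⟩

theorem cov_iUnion (n : ℕ) (D : ℝ → ℝ) (hD : ∀ t, 0 ≤ D t) (m : ℕ) (r : ℝ) (hr : 0 ≤ r) :
    ∃ F L : ℝ, 0 ≤ F ∧ ∀ P : ℕ → Set Y, (∀ k < m, ∀ t ≤ L, Cov n (P k) t (D t)) →
      Cov n {y | ∃ k < m, y ∈ P k} r F := by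
  induction m with
  | zero =>
    refine ⟨0, 0, le_rfl, fun P _ => ?_⟩
    exact (Cov.empty r 0).mono (by rintro y ⟨k, hk, -⟩; omega) le_rfl
  | succ m ih =>
    obtain ⟨F, L, hF, h⟩ := ih
    refine ⟨D (F + 2 * r) + 2 * (F + r), max L (F + 2 * r), ?_, fun P hP => ?_⟩
    · have := hD (F + 2 * r)
      positivity
    · have h1 := h P (fun k hk t ht => hP k (by omega) t (ht.trans (le_max_left _ _)))
      have h2 := hP m (by omega) (F + 2 * r) (le_max_right _ _)
      refine (h1.union hr hF (hD _) h2).mono ?_ le_rfl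
      rintro y ⟨k, hk, hy⟩
      rcases Nat.lt_succ_iff_lt_or_eq.1 hk with hk | rfl
      · exact Or.inl ⟨k, hk, hy⟩
      · exact Or.inr hy

theorem asdimLE_iff (n : ℕ) :
    ASDimLE Y n ↔ ∀ R : ℝ, ∃ D : ℝ, 0 ≤ D ∧ Cov n (univ : Set Y) R D := by
  constructor
  · intro h R
    obtain ⟨𝒰, hb, hd, hc⟩ := h (max R 1) (by positivity)
    choose S hS using hb
    refine ⟨∑ i, |S i|, by positivity, fun i => ⋃₀ 𝒰 i, fun y _ => ?_, fun i => ?_⟩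
    · obtain ⟨i, U, hU, hy⟩ := hc y
      exact ⟨i, U, hU, hy⟩
    · rintro x ⟨U, hU, hx⟩ y hxy
      have : y ∈ U := by
        induction hxy with
        | refl => exact hx
        | tail _ h2 ih =>
          obtain ⟨-, ⟨V, hV, hz⟩, hdd⟩ := h2
          by_contra hcon
          have hne : U ≠ V := by rintro rfl; exact hcon hz
          have := hd i U hU V hV hne _ ih _ hz
          linarith [le_max_left R 1]
      calc dist x y ≤ S i := hS i U hU x hx y this
        _ ≤ |S i| := le_abs_self _
        _ ≤ _ := Finset.single_le_sum (f := fun i => |S i|) (fun i _ => abs_nonneg _)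
          (Finset.mem_univ i)
  · intro h R _
    obtain ⟨D, -, A, hA, hS⟩ := h R
    refine ⟨fun i => {U | ∃ x ∈ A i, U = {y | Chain (A i) R x y}}, fun i => ⟨D, ?_⟩, ?_, ?_⟩
    · rintro U ⟨x, hx, rfl⟩ a ha b hb
      exact hS i a (Chain.mem ha hx) b (Relation.ReflTransGen.trans (Chain.symm ha) hb)
    · rintro i U ⟨x, hx, rfl⟩ V ⟨x', hx', rfl⟩ hne a ha b hb
      by_contra hcon
      apply hne
      have hxx : Chain (A i) R x x' :=
        (Relation.ReflTransGen.tail ha ⟨Chain.mem ha hx, Chain.mem hb hx', not_lt.1 hcon⟩).trans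
          (Chain.symm hb)
      ext z
      exact ⟨fun hz => (Chain.symm hxx).trans hz, fun hz => hxx.trans hz⟩
    · intro x
      obtain ⟨i, hi⟩ := hA x (mem_univ x)
      exact ⟨i, _, ⟨x, hi, rfl⟩, Relation.ReflTransGen.refl⟩

end basic

theorem gap {ι : Type*} [Finite ι] (s : ℕ → ℝ) (hs : Monotone s) (v : ι → ℝ) :
    ∃ j < Nat.card ι + 1, ∀ i, v i ≤ s j ∨ s (j + 1) < v i := by
  by_contra hcon
  push Not at hcon
  haveI : Nonempty ι := ⟨(hcon 0 (Nat.succ_pos _)).choose⟩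
  choose! f hf using hcon
  have hinj : Function.Injective (fun j : Fin (Nat.card ι + 1) => f j) := by
    have key : ∀ a b : Fin (Nat.card ι + 1), a < b → f a ≠ f b := by
      intro a b hab heq
      have h1 := (hf a a.2).2
      have h2 := (hf b b.2).1
      rw [heq] at h1
      have h3 : s ((a : ℕ) + 1) ≤ s b := hs (by simpa [Nat.succ_le_iff] using hab)
      linarith
    intro a b hab
    rcases lt_trichotomy a b with h | h | h
    · exact (key a b h hab).elim
    · exact h
    · exact (key b a h hab.symm).elim
  have := Nat.card_le_card_of_injective _ hinj
  simp at this

section quot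
variable {X : Type*} [MetricSpace X] {G : Type*} [Group G] [Finite G] [MulAction G X]
  {Q : Type*} [MetricSpace Q] {q : X → Q}

/-- finite (but too large) colourings of the quotient -/
theorem coloring (n : ℕ)
    (hX : ∀ R : ℝ, ∃ D : ℝ, 0 ≤ D ∧ Cov n (univ : Set X) R D)
    (hsurj : Function.Surjective q)
    (hisod : ∀ (g : G) (x y : X), dist (g • x) (g • y) = dist x y)
    (hinv : ∀ (g : G) (x : X), q (g • x) = q x)
    (h1 : ∀ x y, dist (q x) (q y) ≤ dist x y)
    (h2 : ∀ x y, ∃ g : G, dist x (g • y) ≤ dist (q x) (q y)) (t : ℝ) (ht : 0 < t) :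
    ∃ E : ℝ, 0 ≤ E ∧ ∃ Z : ℕ → Set Q, (∀ k, Small (Z k) t E) ∧
      ∀ p, ∃ k < Nat.card (G × Fin (n + 1)) + 1, p ∈ Z k := by
  set K := Nat.card (G × Fin (n + 1)) + 1 with hK
  obtain ⟨D, hD, A, hA, hS⟩ := hX ((2 * K + 3) * t)
  refine ⟨D + 2 * (K + 1) * t, by positivity,
    fun k => {p | k < K ∧ ∀ x, q x = p → ∀ (i : Fin (n + 1)),
      infDist x (A i) ≤ k * t ∨ (k + 1) * t < infDist x (A i)}, ?_, ?_⟩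
  · rintro k p ⟨hk, hp⟩ p' hpp
    obtain ⟨x, rfl⟩ := hsurj p
    obtain ⟨i, hi⟩ := hA x (mem_univ x)
    have hkK : (k : ℝ) ≤ K := by exact_mod_cast hk.le
    have hkt : (k : ℝ) * t ≤ K * t := by gcongr
    have key : ∃ y a, q y = p' ∧ infDist y (A i) ≤ k * t ∧ a ∈ A i ∧ dist y a ≤ (k + 1) * t ∧
        Chain (A i) ((2 * K + 3) * t) x a := by
      induction hpp with
      | refl =>
        refine ⟨x, x, rfl, ?_, hi, ?_, Relation.ReflTransGen.refl⟩
        · rw [infDist_zero_of_mem hi]; positivity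
        · rw [dist_self]; positivity
      | @tail p1 p2 _ hst ih =>
        obtain ⟨y, a, rfl, hy, ha, hya, hch⟩ := ih
        obtain ⟨-, ⟨-, hz⟩, hd⟩ := hst
        obtain ⟨z0, rfl⟩ := hsurj p2
        obtain ⟨g, hg⟩ := h2 y z0
        have hgz := hz (g • z0) (hinv g z0) i
        have h3 : infDist (g • z0) (A i) ≤ k * t := by
          rcases hgz with h | h
          · exact h
          · have h4 : infDist (g • z0) (A i) ≤ infDist y (A i) + dist (g • z0) y :=
              infDist_le_infDist_add_dist
            rw [dist_comm] at h4
            linarith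
        obtain ⟨b, hb, hzb⟩ := (infDist_lt_iff ⟨x, hi⟩).1
          (show infDist (g • z0) (A i) < (k + 1) * t by linarith)
        refine ⟨g • z0, b, hinv g z0, h3, hb, hzb.le, hch.tail ⟨ha, hb, ?_⟩⟩
        have h5 := dist_triangle4 a y (g • z0) b
        rw [dist_comm a y] at h5
        linarith
    obtain ⟨y, a, rfl, -, ha, hya, hch⟩ := key
    have h3 := hS i x hi a hch
    have h4 := h1 x y
    have h5 := dist_triangle x a y
    rw [dist_comm a y] at h5
    have : (k + 1) * t ≤ 2 * (K + 1) * t := by nlinarith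
    linarith
  · intro p
    obtain ⟨x, rfl⟩ := hsurj p
    obtain ⟨k, hk, hgap⟩ := gap (ι := G × Fin (n + 1)) (fun k : ℕ => (k : ℝ) * t)
      (fun a b hab => by
        have : (a : ℝ) ≤ b := by exact_mod_cast hab
        show (a : ℝ) * t ≤ b * t
        gcongr) (fun gi => infDist (gi.1 • x) (A gi.2))
    refine ⟨k, hk, hk, fun y hy i => ?_⟩
    obtain ⟨g, hg⟩ := h2 y x
    have h0 : y = g • x := by
      rw [hy, dist_self] at hg
      exact dist_le_zero.1 hg
    have := hgap (g, i)
    subst h0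
    push_cast at this
    exact this

theorem piece (n : ℕ) (DX : ℝ → ℝ) (hX : ∀ R : ℝ, Cov n (univ : Set X) R (DX R))
    (hsurj : Function.Surjective q)
    (hinv : ∀ (g : G) (x : X), q (g • x) = q x)
    (h1 : ∀ x y, dist (q x) (q y) ≤ dist x y)
    (h2 : ∀ x y, ∃ g : G, dist x (g • y) ≤ dist (q x) (q y))
    (P : Set Q) (L E s s' : ℝ) (hs' : L + 2 * E ≤ s') (hP : Small P L E)
    (hgap : ∀ x, q x ∈ P → ∀ g : G, dist x (g • x) ≤ s ∨ s' < dist x (g • x))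
    (t : ℝ) (ht : t ≤ L) : Cov n P t (DX (t + s)) := by
  obtain ⟨A, hA, hS⟩ := hX (t + s)
  let S : Setoid Q := ⟨Chain P L, fun _ => Relation.ReflTransGen.refl, fun h => Chain.symm h,
    fun h h' => Relation.ReflTransGen.trans h h'⟩
  let rep : Q → Q := fun p => (Quotient.mk S p).out
  have hrep : ∀ p, Chain P L p (rep p) := fun p => Chain.symm (Quotient.mk_out (s := S) p)
  have hrep2 : ∀ p p', Chain P L p p' → rep p = rep p' := fun p p' h => by
    show (Quotient.mk S p).out = (Quotient.mk S p').out
    rw [Quotient.sound (s := S) h]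
  obtain ⟨lift, hlift⟩ := hsurj.hasRightInverse
  have hσ : ∀ p, ∃ x, q x = p ∧ (p ∈ P → dist x (lift (rep p)) ≤ E) := by
    intro p
    obtain ⟨g, hg⟩ := h2 (lift (rep p)) (lift p)
    refine ⟨g • lift p, by rw [hinv, hlift p], fun hp => ?_⟩
    rw [hlift, hlift] at hg
    have := hP p hp _ (hrep p)
    rw [dist_comm] at hg this
    linarith
  choose σ hσq hσd using hσ
  have step : ∀ p ∈ P, ∀ p' ∈ P, dist p p' ≤ t → dist (σ p) (σ p') ≤ t + s := by
    intro p hp p' hp' hd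
    have hr := hrep2 p p' (Relation.ReflTransGen.single ⟨hp, hp', hd.trans ht⟩)
    have e1 := hσd p hp
    have e2 := hσd p' hp'
    rw [← hr] at e2
    obtain ⟨g, hg⟩ := h2 (σ p) (σ p')
    rw [hσq, hσq] at hg
    have e3 : dist (σ p) (σ p') ≤ 2 * E := by
      linarith [dist_triangle_right (σ p) (σ p') (lift (rep p))]
    have e4 := dist_triangle_left (σ p') (g • σ p') (σ p)
    have e5 := dist_triangle_right (σ p) (σ p') (g • σ p')
    rcases hgap (σ p') (by rwa [hσq]) g with h | h
    · linarith
    · linarith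
  refine ⟨fun i => {p | p ∈ P ∧ σ p ∈ A i}, fun p hp => ?_, fun i => ?_⟩
  · obtain ⟨i, hi⟩ := hA (σ p) (mem_univ _)
    exact ⟨i, hp, hi⟩
  · rintro p ⟨hp, hpi⟩ p' hpp
    have hch : Chain (A i) (t + s) (σ p) (σ p') := by
      refine Relation.ReflTransGen.lift σ ?_ _ _ hpp
      rintro a b ⟨ha, hb, hab⟩
      exact ⟨ha.2, hb.2, step a ha.1 b hb.1 hab⟩
    have e1 := hS i _ hpi _ hch
    have e2 := h1 (σ p) (σ p')
    rw [hσq, hσq] at e2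
    linarith

theorem stage (n : ℕ)
    (hX : ∀ R : ℝ, ∃ D : ℝ, 0 ≤ D ∧ Cov n (univ : Set X) R D)
    (hsurj : Function.Surjective q)
    (hisod : ∀ (g : G) (x y : X), dist (g • x) (g • y) = dist x y)
    (hinv : ∀ (g : G) (x : X), q (g • x) = q x)
    (h1 : ∀ x y, dist (q x) (q y) ≤ dist x y)
    (h2 : ∀ x y, ∃ g : G, dist x (g • y) ≤ dist (q x) (q y)) (r s : ℝ) :
    ∃ F s' : ℝ, 0 ≤ r → 0 ≤ F ∧ s ≤ s' ∧ ∀ P : Set Q,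
      (∀ x, q x ∈ P → ∀ g : G, dist x (g • x) ≤ s ∨ s' < dist x (g • x)) → Cov n P r F := by
  by_cases hr : 0 ≤ r
  swap
  · exact ⟨0, 0, fun h => (hr h).elim⟩
  have hX' := hX
  choose DX hDX0 hDX using hX'
  obtain ⟨F, L, hF, h⟩ := cov_iUnion (Y := Q) n (fun t => DX (t + s)) (fun t => hDX0 _)
    (Nat.card (G × Fin (n + 1)) + 1) r hr
  obtain ⟨E, hE, Z, hZ, hZc⟩ := coloring (G := G) n hX hsurj hisod hinv h1 h2 (max L 1)
    (by positivity)
  refine ⟨F, max s (max L 1 + 2 * E), fun _ => ⟨hF, le_max_left _ _, fun P hP => ?_⟩⟩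
  refine (h (fun k => P ∩ Z k) fun k _ t ht => ?_).mono ?_ le_rfl
  · exact piece (G := G) n DX hDX hsurj hinv h1 h2 (P ∩ Z k) (max L 1) E s _ (le_max_right _ _)
      ((hZ k).mono inter_subset_right le_rfl) (fun x hx g => hP x hx.1 g) t
      (ht.trans (le_max_left _ _))
  · intro p hp
    obtain ⟨k, hk, hpk⟩ := hZc p
    exact ⟨k, hk, hp, hpk⟩

theorem down (n : ℕ)
    (hX : ∀ R : ℝ, ∃ D : ℝ, 0 ≤ D ∧ Cov n (univ : Set X) R D)
    (hsurj : Function.Surjective q)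
    (hisod : ∀ (g : G) (x y : X), dist (g • x) (g • y) = dist x y)
    (hinv : ∀ (g : G) (x : X), q (g • x) = q x)
    (h1 : ∀ x y, dist (q x) (q y) ≤ dist x y)
    (h2 : ∀ x y, ∃ g : G, dist x (g • y) ≤ dist (q x) (q y)) (R : ℝ) :
    ∃ D : ℝ, 0 ≤ D ∧ Cov n (univ : Set Q) R D := by
  set r := max R 0 with hrdef
  have hr : 0 ≤ r := le_max_right _ _
  choose Fs ss hst using stage (G := G) n hX hsurj hisod hinv h1 h2
  let st : ℕ → ℝ × ℝ := fun j => Nat.rec (0, 0)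
    (fun _ a => (Fs (a.1 + 2 * r) a.2 + 2 * (a.1 + r), ss (a.1 + 2 * r) a.2)) j
  have st1 : ∀ j, (st (j + 1)).1 = Fs ((st j).1 + 2 * r) (st j).2 + 2 * ((st j).1 + r) :=
    fun j => rfl
  have st2 : ∀ j, (st (j + 1)).2 = ss ((st j).1 + 2 * r) (st j).2 := fun j => rfl
  have hF : ∀ j, 0 ≤ (st j).1 := by
    intro j
    induction j with
    | zero => exact le_rfl
    | succ j ih =>
      rw [st1]
      have := (hst ((st j).1 + 2 * r) (st j).2 (by positivity)).1
      positivity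
  have hmono : Monotone fun j => (st j).2 := monotone_nat_of_le_succ fun j => by
    rw [st2]
    exact (hst ((st j).1 + 2 * r) (st j).2 (by have := hF j; positivity)).2.1
  let QQ : ℕ → Set Q := fun j =>
    {p | ∀ x, q x = p → ∀ g : G, dist x (g • x) ≤ (st j).2 ∨ (st (j + 1)).2 < dist x (g • x)}
  have hcov : ∀ J, Cov n {p | ∃ j < J, p ∈ QQ j} r (st J).1 := by
    intro J
    induction J with
    | zero => exact (Cov.empty _ _).mono (by rintro y ⟨k, hk, -⟩; omega) le_rfl
    | succ J ih =>
      have hp : 0 ≤ (st J).1 + 2 * r := by have := hF J; positivity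
      obtain ⟨a1, -, a3⟩ := hst ((st J).1 + 2 * r) (st J).2 hp
      have a4 := a3 (QQ J) (fun x hx g => hx x rfl g)
      rw [st1]
      refine (ih.union hr (hF J) a1 a4).mono ?_ le_rfl
      rintro y ⟨k, hk, hy⟩
      rcases Nat.lt_succ_iff_lt_or_eq.1 hk with hk | rfl
      · exact Or.inl ⟨k, hk, hy⟩
      · exact Or.inr hy
  refine ⟨_, hF (Nat.card G + 1), (hcov (Nat.card G + 1)).mono ?_ (le_max_left _ _)⟩
  intro p _
  obtain ⟨x, rfl⟩ := hsurj p
  obtain ⟨j, hj, hgap⟩ := gap (fun j => (st j).2) hmono (fun g : G => dist x (g • x))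
  refine ⟨j, hj, fun y hy g => ?_⟩
  obtain ⟨h, hh⟩ := h2 y x
  have h0 : y = h • x := by
    rw [hy, dist_self] at hh
    exact dist_le_zero.1 hh
  have e : dist y (g • y) = dist x ((h⁻¹ * g * h) • x) := by
    rw [h0, ← hisod h x]
    congr 1
    simp only [smul_smul]
    congr 1
    group
  rw [e]
  exact hgap _

theorem up (n : ℕ)
    (hQ : ∀ R : ℝ, ∃ D : ℝ, 0 ≤ D ∧ Cov n (univ : Set Q) R D)
    (h1 : ∀ x y, dist (q x) (q y) ≤ dist x y)
    (h2 : ∀ x y, ∃ g : G, dist x (g • y) ≤ dist (q x) (q y)) (R : ℝ) :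
    ∃ D : ℝ, 0 ≤ D ∧ Cov n (univ : Set X) R D := by
  set r := max R 0 with hrdef
  have hr : 0 ≤ r := le_max_right _ _
  obtain ⟨D, hD, A, hA, hS⟩ := hQ r
  obtain ⟨F, L, hF, h⟩ := cov_iUnion (Y := X) 0 (fun _ => 2 * D) (fun _ => by positivity)
    (Nat.card G) r hr
  refine ⟨F, hF, fun i => q ⁻¹' (A i), fun x _ => hA (q x) (mem_univ _), fun i => ?_⟩
  intro x hx y hxy
  have hxy' : Chain (q ⁻¹' (A i)) r x y := hxy.mono subset_rfl (le_max_left _ _)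
  let e := (Finite.equivFin G).symm
  let P : ℕ → Set X := fun k => {z | ∃ hk : k < Nat.card G, dist z (e ⟨k, hk⟩ • x) ≤ D}
  obtain ⟨B, hB, hBS⟩ := h P (by
    intro k hk t _
    refine ⟨fun _ => P k, fun y hy => ⟨0, hy⟩, fun _ a ha b hab => ?_⟩
    obtain ⟨_, hb⟩ := Chain.mem hab ha
    obtain ⟨_, ha⟩ := ha
    linarith [dist_triangle_right a b (e ⟨k, hk⟩ • x)])
  have hreach : ∀ z, Chain (q ⁻¹' (A i)) r x z → z ∈ B 0 := by
    intro z hz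
    have hq : Chain (A i) r (q x) (q z) := by
      refine Relation.ReflTransGen.lift q ?_ _ _ hz
      rintro a b ⟨ha, hb, hab⟩
      exact ⟨ha, hb, (h1 a b).trans hab⟩
    have hd := hS i _ hx _ hq
    obtain ⟨g, hg⟩ := h2 z x
    rw [dist_comm (q z)] at hg
    obtain ⟨j, hj⟩ := hB z ⟨(e.symm g : ℕ), (e.symm g).2, (e.symm g).2, by
      simpa using hg.trans hd⟩
    have hj0 : j = 0 := Fin.ext (by have := j.2; simp)
    rwa [hj0] at hj
  have hfin : Chain (B 0) r x y := by
    clear hxy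
    induction hxy' with
    | refl => exact Relation.ReflTransGen.refl
    | tail ha hb ih => exact ih.tail ⟨hreach _ ha, hreach _ (ha.tail hb), hb.2.2⟩
  exact hBS 0 x (hreach x Relation.ReflTransGen.refl) y hfin

end quot

end OrbAsdim

/-- If a finite group `G` acts by isometries on a proper metric
space `X`, then the orbit space `G\X` (a metric space `Q` whose points are in
bijection with the orbits, with the Hausdorff distance between orbits) has the
same asymptotic dimension as `X`. -/
theorem asdim_orbitSpace_eq {X : Type*} [MetricSpace X] [ProperSpace X]
    (G : Type*) [Group G] [Finite G] [MulAction G X]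
    (hiso : ∀ g : G, Isometry fun x : X => g • x)
    (Q : Type*) [MetricSpace Q] (q : X → Q)
    (hsurj : Function.Surjective q)
    (hq : ∀ x y : X, q x = q y ↔ MulAction.orbit G x = MulAction.orbit G y)
    (hdist : ∀ x y : X,
      dist (q x) (q y) = hausdorffDist (MulAction.orbit G x) (MulAction.orbit G y)) :
    asdim Q = asdim X := by
  classical
  have hisod : ∀ (g : G) (x y : X), dist (g • x) (g • y) = dist x y :=
    fun g x y => (hiso g).dist_eq x y
  have hinv : ∀ (g : G) (x : X), q (g • x) = q x := fun g x =>
    (hq _ _).2 (MulAction.orbit_eq_iff.2 (MulAction.mem_orbit x g))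
  have hfin : ∀ x : X, (MulAction.orbit G x).Finite := fun x => Set.finite_range _
  have h1 : ∀ x y, dist (q x) (q y) ≤ dist x y := by
    intro x y
    rw [hdist]
    refine hausdorffDist_le_of_mem_dist dist_nonneg ?_ ?_
    · rintro _ ⟨g, rfl⟩
      exact ⟨g • y, MulAction.mem_orbit y g, (hisod g x y).le⟩
    · rintro _ ⟨g, rfl⟩
      exact ⟨g • x, MulAction.mem_orbit x g, by
        show dist (g • y) (g • x) ≤ _
        rw [hisod, dist_comm]⟩
  have h2 : ∀ x y, ∃ g : G, dist x (g • y) ≤ dist (q x) (q y) := by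
    intro x y
    obtain ⟨z, ⟨g, rfl⟩, hz⟩ := (hfin y).isCompact.exists_infDist_eq_dist
      (MulAction.nonempty_orbit y) x
    refine ⟨g, ?_⟩
    rw [hdist]
    refine hz.symm.le.trans (infDist_le_hausdorffDist_of_mem (MulAction.mem_orbit_self x) ?_)
    exact hausdorffEDist_ne_top_of_nonempty_of_bounded (MulAction.nonempty_orbit x)
      (MulAction.nonempty_orbit y) (hfin x).isBounded (hfin y).isBounded
  have key : ∀ n, ASDimLE Q n ↔ ASDimLE X n := by
    intro n
    rw [OrbAsdim.asdimLE_iff, OrbAsdim.asdimLE_iff]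
    exact ⟨fun h R => OrbAsdim.up (G := G) n h h1 h2 R,
      fun h R => OrbAsdim.down (G := G) n h hsurj hisod hinv h1 h2 R⟩
  unfold asdim
  simp only [key]
end

section
/- Let X and Y be nonempty proper metric spaces of finite asymptotic dimension and let f : X → Y be coarse, coarsely open, coarsely surjective, and such that there exists no countable gradually disjoint collection A₁, A₂, … of pairwise disjoint subsets of X for which the collection f(A₁), f(A₂), … does not diverge. Then asdim(Y) = asdim(X). -/
open Metric Bornology Function Set

/-! ### Chains and coverings -/

/-- One step of a monochromatic `R`-chain in `Z`. -/
def CStep {Y : Type*} [MetricSpace Y] (c : Y → ℕ) (Z : Set Y) (R : ℝ) (z w : Y) : Prop :=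
  z ∈ Z ∧ w ∈ Z ∧ c z = c w ∧ dist z w ≤ R

/-- `Z` has a colouring with `N` colours all of whose monochromatic `R`-chains have size `≤ D`. -/
def Cov {Y : Type*} [MetricSpace Y] (Z : Set Y) (N : ℕ) (R D : ℝ) : Prop :=
  0 ≤ D ∧ ∃ c : Y → ℕ, (∀ z ∈ Z, c z < N) ∧
    ∀ z w, Relation.ReflTransGen (CStep c Z R) z w → dist z w ≤ D

lemma CStep.mono {Y : Type*} [MetricSpace Y] {c : Y → ℕ} {Z Z' : Set Y} {R R' : ℝ}
    (hZ : Z ⊆ Z') (hR : R ≤ R') {z w : Y} (h : CStep c Z R z w) : CStep c Z' R' z w :=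
  ⟨hZ h.1, hZ h.2.1, h.2.2.1, h.2.2.2.trans hR⟩

lemma CStep.symm {Y : Type*} [MetricSpace Y] {c : Y → ℕ} {Z : Set Y} {R : ℝ}
    {z w : Y} (h : CStep c Z R z w) : CStep c Z R w z :=
  ⟨h.2.1, h.1, h.2.2.1.symm, by rw [dist_comm]; exact h.2.2.2⟩

lemma Cov.mono {Y : Type*} [MetricSpace Y] {Z Z' : Set Y} {N : ℕ} {R R' D D' : ℝ}
    (h : Cov Z' N R' D') (hZ : Z ⊆ Z') (hR : R ≤ R') (hD : D' ≤ D) : Cov Z N R D := by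
  obtain ⟨h0, c, hc, hd⟩ := h
  refine ⟨h0.trans hD, c, fun z hz => hc z (hZ hz), fun z w hzw => (hd z w ?_).trans hD⟩
  exact Relation.ReflTransGen.mono (fun a b (hab : CStep c Z R a b) => hab.mono hZ hR) _ _ hzw

lemma Cov.union {Y : Type*} [MetricSpace Y] {A B : Set Y} {N : ℕ} {R R' D D' : ℝ} (hR : 0 ≤ R)
    (hA : Cov A N R D) (hB : Cov B N R' D') (hRR : D + 2 * R ≤ R') :
    Cov (A ∪ B) N R (D' + 2 * (D + R)) := by
  classical
  obtain ⟨hD0, cA, hcA, hdA⟩ := hA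
  obtain ⟨hD0', cB, hcB, hdB⟩ := hB
  refine ⟨by positivity, fun z => if z ∈ B then cB z else cA z, ?_, ?_⟩
  · intro z hz
    by_cases h : z ∈ B
    · simp only [h, if_true]; exact hcB z h
    · simp only [h, if_false]; exact hcA z (hz.resolve_right h)
  · intro z w hzw
    set c : Y → ℕ := fun z => if z ∈ B then cB z else cA z with hc
    have cb : ∀ z, z ∈ B → c z = cB z := fun z h => by simp [hc, h]
    have ca : ∀ z, z ∉ B → c z = cA z := fun z h => by simp [hc, h]
    have inv : (w ∉ B ∧ Relation.ReflTransGen (CStep cA A R) z w) ∨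
        ∃ b b', b' ∈ B ∧ dist z b ≤ D + R ∧ Relation.ReflTransGen (CStep cB B R') b b' ∧
          cB b' = c w ∧
          (b' = w ∨ (w ∉ B ∧ ∃ a, dist b' a ≤ R ∧ Relation.ReflTransGen (CStep cA A R) a w)) := by
      induction hzw with
      | refl =>
        by_cases h : z ∈ B
        · exact Or.inr ⟨z, z, h, by rw [dist_self]; positivity, .refl, (cb z h).symm, Or.inl rfl⟩
        · exact Or.inl ⟨h, .refl⟩
      | @tail u v _ hs ih =>
        obtain ⟨huZ, hvZ, hcol, hduv⟩ := hs
        rcases ih with ⟨hu, hch⟩ | ⟨b, b', hb', hzb, hch, hcc, hlast⟩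
        · by_cases hv : v ∈ B
          · refine Or.inr ⟨v, v, hv, ?_, .refl, (cb v hv).symm, Or.inl rfl⟩
            have := hdA _ _ hch
            linarith [dist_triangle z u v]
          · refine Or.inl ⟨hv, hch.tail ⟨huZ.resolve_right hu, hvZ.resolve_right hv, ?_, hduv⟩⟩
            rw [← ca u hu, ← ca v hv, hcol]
        · by_cases hv : v ∈ B
          · refine Or.inr ⟨b, v, hv, hzb, hch.tail ⟨hb', hv, ?_, ?_⟩, (cb v hv).symm, Or.inl rfl⟩
            · rw [hcc, ← cb v hv, hcol]
            · rcases hlast with rfl | ⟨hu, a, hba, hau⟩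
              · linarith
              · have := hdA _ _ hau
                linarith [dist_triangle4 b' a u v]
          · refine Or.inr ⟨b, b', hb', hzb, hch, hcc.trans hcol, Or.inr ⟨hv, ?_⟩⟩
            rcases hlast with rfl | ⟨hu, a, hba, hau⟩
            · exact ⟨v, hduv, .refl⟩
            · refine ⟨a, hba, hau.tail ⟨huZ.resolve_right hu, hvZ.resolve_right hv, ?_, hduv⟩⟩
              rw [← ca u hu, ← ca v hv, hcol]
    rcases inv with ⟨_, hch⟩ | ⟨b, b', hb', hzb, hch, hcc, hlast⟩
    · have := hdA _ _ hch
      linarith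
    · have h1 := hdB _ _ hch
      rcases hlast with rfl | ⟨hu, a, hba, hau⟩
      · linarith [dist_triangle z b b']
      · have := hdA _ _ hau
        linarith [dist_triangle4 z b b' w, dist_triangle b' a w]

lemma Cov.disjUnion {Y β : Type*} [MetricSpace Y] {W : Set Y} {N : ℕ} {R D : ℝ} (v : Y → β)
    (hD : 0 ≤ D) (hv : ∀ z ∈ W, ∀ w ∈ W, dist z w ≤ R → v z = v w)
    (h : ∀ y ∈ W, Cov {z | z ∈ W ∧ v z = v y} N R D) : Cov W N R D := by
  have h' : ∀ b : β, Cov {z | z ∈ W ∧ v z = b} N R D := by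
    intro b
    by_cases hb : ∃ y ∈ W, v y = b
    · obtain ⟨y, hy, rfl⟩ := hb
      exact h y hy
    · refine ⟨hD, fun _ => 0, fun z hz => (hb ⟨z, hz.1, hz.2⟩).elim, fun z w hzw => ?_⟩
      induction hzw with
      | refl => simpa using hD
      | @tail a c _ hs _ => exact (hb ⟨a, hs.1.1, hs.1.2⟩).elim
  choose _ c hc hd using h'
  refine ⟨hD, fun z => c (v z) z, fun z hz => hc _ z ⟨hz, rfl⟩, fun z w hzw => ?_⟩
  have : v z = v w ∧ Relation.ReflTransGen (CStep (c (v z)) {y | y ∈ W ∧ v y = v z} R) z w := by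
    induction hzw with
    | refl => exact ⟨rfl, .refl⟩
    | @tail a b _ hs ih =>
      obtain ⟨ha, hb, hcol, hdist⟩ := hs
      have hab := hv a ha b hb hdist
      refine ⟨ih.1.trans hab, ih.2.tail ⟨⟨ha, ih.1.symm⟩, ⟨hb, (ih.1.trans hab).symm⟩, ?_, hdist⟩⟩
      have e1 := ih.1
      have e2 := ih.1.trans hab
      simp only at hcol
      rw [← hab, ← e1] at hcol
      exact hcol
  exact hd _ _ _ this.2

lemma Cov.pull {X Y : Type*} [MetricSpace X] [MetricSpace Y] {Z : Set X} {W : Set Y} {N : ℕ}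
    {R D T E : ℝ} (hE : 0 ≤ E) (g : Y → X) (hg : ∀ y ∈ W, g y ∈ Z) (h : Cov Z N T D)
    (hs : ∀ y ∈ W, ∀ y' ∈ W, dist y y' ≤ R → dist (g y) (g y') ≤ T)
    (hb : ∀ y ∈ W, ∀ y' ∈ W, dist (g y) (g y') ≤ D → dist y y' ≤ E) : Cov W N R E := by
  obtain ⟨_, c, hc, hd⟩ := h
  refine ⟨hE, c ∘ g, fun z hz => hc _ (hg z hz), fun z w hzw => ?_⟩
  have h1 : Relation.ReflTransGen (CStep c Z T) (g z) (g w) :=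
    Relation.ReflTransGen.lift g
      (fun a b (hab : CStep (c ∘ g) W R a b) =>
        ⟨hg a hab.1, hg b hab.2.1, hab.2.2.1, hs a hab.1 b hab.2.1 hab.2.2.2⟩) _ _ hzw
  have h2 := hd _ _ h1
  have h3 : z = w ∨ (z ∈ W ∧ w ∈ W) := by
    clear h1 h2
    induction hzw with
    | refl => exact Or.inl rfl
    | @tail a b _ hs ih =>
      rcases ih with rfl | ih
      · exact Or.inr ⟨hs.1, hs.2.1⟩
      · exact Or.inr ⟨ih.1, hs.2.1⟩
  rcases h3 with rfl | h3
  · simpa using hE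
  · exact hb _ h3.1 _ h3.2 h2

lemma asdimLE_iff {X : Type*} [MetricSpace X] (n : ℕ) :
    ASDimLE X n ↔ ∀ R > (0:ℝ), ∃ D, Cov (univ : Set X) (n + 1) R D := by
  constructor
  · intro h R hR
    obtain ⟨U, hb, hd, hc⟩ := h R hR
    choose S hS using hb
    choose i V hV hx using hc
    refine ⟨∑ j, |S j|, Finset.sum_nonneg fun _ _ => abs_nonneg _, fun x => (i x : ℕ),
      fun z _ => (i z).2, fun z w hzw => ?_⟩
    have : i z = i w ∧ V z = V w := by
      induction hzw with
      | refl => exact ⟨rfl, rfl⟩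
      | @tail a b _ hs ih =>
        have h1 : i a = i b := Fin.ext hs.2.2.1
        refine ⟨ih.1.trans h1, ih.2.trans ?_⟩
        by_contra hne
        have h2 := hV b
        rw [← h1] at h2
        have := hd (i a) (V a) (hV a) (V b) h2 hne a (hx a) b (hx b)
        linarith [hs.2.2.2]
    have h1 : dist z w ≤ S (i z) := by
      refine hS (i z) (V z) (hV z) z (hx z) w ?_
      rw [this.2]; exact hx w
    refine h1.trans ((le_abs_self _).trans ?_)
    exact Finset.single_le_sum (f := fun j => |S j|) (fun _ _ => abs_nonneg _) (Finset.mem_univ _)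
  · intro h R hR
    obtain ⟨D, hD, c, hc, hd⟩ := h R hR
    have hsym : ∀ {z w}, Relation.ReflTransGen (CStep c univ R) z w →
        Relation.ReflTransGen (CStep c univ R) w z := by
      intro z w hzw
      induction hzw with
      | refl => exact .refl
      | @tail a b _ hs ih => exact Relation.ReflTransGen.head hs.symm ih
    have hcol : ∀ z w, Relation.ReflTransGen (CStep c univ R) z w → c z = c w := by
      intro z w hzw
      induction hzw with
      | refl => rfl
      | @tail a b _ hs ih => exact ih.trans hs.2.2.1
    refine ⟨fun i => {U | ∃ z, c z = (i : ℕ) ∧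
      U = {w | Relation.ReflTransGen (CStep c univ R) z w}}, ?_, ?_, ?_⟩
    · intro i
      refine ⟨D, ?_⟩
      rintro U ⟨z, hz, rfl⟩ x hx y hy
      exact hd _ _ ((hsym hx).trans hy)
    · rintro i U ⟨z, hz, rfl⟩ V ⟨z', hz', rfl⟩ hne x hx y hy
      by_contra hlt
      apply hne
      have hxy : CStep c univ R x y := by
        refine ⟨trivial, trivial, ?_, not_lt.mp hlt⟩
        rw [← hcol _ _ hx, ← hcol _ _ hy, hz, hz']
      have hzz : Relation.ReflTransGen (CStep c univ R) z z' :=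
        (Relation.ReflTransGen.tail hx hxy).trans (hsym hy)
      ext w
      exact ⟨fun hw => (hsym hzz).trans hw, fun hw => hzz.trans hw⟩
    · intro x
      exact ⟨⟨c x, hc x trivial⟩, _, ⟨x, rfl, rfl⟩, .refl⟩

/-! ### Consequences of the hypotheses on `f` -/

/-- Uniform form of coarse openness. -/
lemma unif_open {X Y : Type*} [MetricSpace X] [MetricSpace Y] (f : X → Y) (x₀ : X) (y₀ : Y)
    (hf : CoarseMap f) (hopen : CoarselyOpen f x₀ y₀) (R : ℝ) (hR : 0 < R) :
    ∃ S : ℝ, 0 < S ∧ ∀ x x' : X, dist (f x) (f x') ≤ R → ∃ w, f w = f x' ∧ dist x w ≤ S := by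
  by_contra hcon
  push Not at hcon
  obtain ⟨hprop, hctrl⟩ := hf
  have hball : ∀ (x : X) (r : ℝ), ∃ T > (0:ℝ), ∀ w, dist w x ≤ r → dist (f w) (f x) ≤ T := by
    intro x r
    obtain ⟨T, hT, h⟩ := hctrl (max r 1) (by positivity)
    exact ⟨T, hT, fun w hw => h w x (hw.trans (le_max_left _ _))⟩
  -- points that fail at level `κ` exist far away
  have hfar : ∀ (κ : ℕ) (Q : ℝ), ∃ x, Q < dist x x₀ ∧
      ∃ x', dist (f x) (f x') ≤ R ∧ ∀ w, f w = f x' → (κ:ℝ) < dist x w := by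
    intro κ Q
    obtain ⟨T, hT, hT'⟩ := hball x₀ Q
    obtain ⟨Q', hQ'⟩ := (Metric.isBounded_iff_subset_closedBall x₀).1
      (hprop (closedBall (f x₀) (R + T)) isBounded_closedBall)
    obtain ⟨x, x', hxx, hw⟩ := hcon (max (κ + 1) (Q + Q')) (by positivity)
    refine ⟨x, ?_, x', hxx, fun w hw' => ?_⟩
    · by_contra hle
      push Not at hle
      have h1 : x' ∈ f ⁻¹' closedBall (f x₀) (R + T) := by
        simp only [mem_preimage, mem_closedBall]
        have := hT' x hle
        have h2 := dist_triangle (f x') (f x) (f x₀)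
        rw [dist_comm (f x') (f x)] at h2
        linarith
      have h2 := hQ' h1
      rw [mem_closedBall] at h2
      have h3 := (le_max_right _ _).trans_lt (hw x' rfl)
      have h4 := dist_triangle_right x x' x₀
      linarith
    · have := (le_max_left _ _).trans_lt (hw w hw')
      linarith
  obtain ⟨g, hgP, hgr⟩ := exists_seq_of_forall_finset_exists
    (α := ℕ × X)
    (fun p => (p.1 : ℝ) < dist p.2 x₀ ∧
      ∃ x', dist (f p.2) (f x') ≤ R ∧ ∀ w, f w = f x' → (p.1:ℝ) < dist p.2 w)
    (fun p q => p.1 < q.1 ∧ (∀ w, dist w p.2 ≤ p.1 → R < dist (f w) (f q.2)) ∧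
      (∀ w, dist w q.2 ≤ q.1 → R < dist (f w) (f p.2))) (by
    intro s _
    have hκ : ∃ κ : ℕ, ∀ p ∈ s, p.1 < κ :=
      ⟨s.sup (fun p => p.1) + 1, fun p hp => Nat.lt_succ_of_le (Finset.le_sup (f := fun p : ℕ × X => p.1) hp)⟩
    obtain ⟨κ, hκ⟩ := hκ
    have hQ : ∀ p : ℕ × X, ∃ Q : ℝ, ∀ x, Q < dist x x₀ →
        (∀ w, dist w p.2 ≤ p.1 → R < dist (f w) (f x)) ∧
        (∀ w, dist w x ≤ κ → R < dist (f w) (f p.2)) := by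
      intro p
      obtain ⟨T, hT, hT'⟩ := hball p.2 p.1
      obtain ⟨Q', hQ'⟩ := (Metric.isBounded_iff_subset_closedBall x₀).1
        (hprop (closedBall (f p.2) (R + T)) isBounded_closedBall)
      refine ⟨Q' + κ, fun x hx => ⟨fun w hw => ?_, fun w hw => ?_⟩⟩
      · by_contra hle
        push Not at hle
        have h1 : x ∈ f ⁻¹' closedBall (f p.2) (R + T) := by
          simp only [mem_preimage, mem_closedBall]
          have := hT' w hw
          have h2 := dist_triangle (f x) (f w) (f p.2)
          rw [dist_comm (f x) (f w)] at h2
          linarith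
        have h2 := hQ' h1
        rw [mem_closedBall] at h2
        have : (0:ℝ) ≤ κ := Nat.cast_nonneg _
        linarith
      · by_contra hle
        push Not at hle
        have h1 : w ∈ f ⁻¹' closedBall (f p.2) (R + T) := by
          simp only [mem_preimage, mem_closedBall]
          linarith
        have h2 := hQ' h1
        rw [mem_closedBall] at h2
        have h3 := dist_triangle_left x x₀ w
        linarith
    choose Q hQ using hQ
    obtain ⟨x, hx, hbad⟩ := hfar κ (κ + ∑ p ∈ s, |Q p|)
    have hsum : (0:ℝ) ≤ ∑ p ∈ s, |Q p| := Finset.sum_nonneg fun _ _ => abs_nonneg _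
    refine ⟨(κ, x), ⟨by simp only; linarith, hbad⟩, fun p hp => ⟨hκ p hp, hQ p x ?_⟩⟩
    have h1 : |Q p| ≤ ∑ p ∈ s, |Q p| :=
      Finset.single_le_sum (f := fun p => |Q p|) (fun _ _ => abs_nonneg _) hp
    have : (0:ℝ) ≤ κ := Nat.cast_nonneg _
    linarith [le_abs_self (Q p)])
  have hmono : StrictMono (fun n => (g n).1) := fun m n hmn => (hgr m n hmn).1
  have hge : ∀ n, n ≤ (g n).1 := fun n => hmono.id_le n
  have hnorm : ∀ n : ℕ, (n:ℝ) < dist (g n).2 x₀ := fun n =>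
    lt_of_le_of_lt (by exact_mod_cast hge n) (hgP n).1
  have hunb : ∀ t : NNReal, ∃ l, t ≤ nndist (g l).2 x₀ := by
    intro t
    obtain ⟨l, hl⟩ := exists_nat_ge (t:ℝ)
    refine ⟨l, ?_⟩
    have h := hl.trans (hnorm l).le
    rw [← NNReal.coe_le_coe, coe_nndist]
    exact h
  classical
  set ρ : NNReal → NNReal := fun t => (Nat.find (hunb t) : NNReal) with hρ
  have hρm : Monotone ρ := by
    intro s t hst
    simp only [hρ, Nat.cast_le]
    exact Nat.find_mono fun n hn => hst.trans hn
  have hρt : TIIncreasing ρ := by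
    refine ⟨hρm, Filter.tendsto_atTop_atTop_of_monotone hρm fun b => ?_⟩
    obtain ⟨n, hn⟩ := exists_nat_ge b
    refine ⟨∑ l ∈ Finset.range n, nndist (g l).2 x₀ + 1, hn.trans ?_⟩
    simp only [hρ, Nat.cast_le]
    rw [Nat.le_find_iff]
    intro m hm hle
    have : nndist (g m).2 x₀ ≤ ∑ l ∈ Finset.range n, nndist (g l).2 x₀ :=
      Finset.single_le_sum (f := fun l => nndist (g l).2 x₀) (fun _ _ => zero_le)
        (Finset.mem_range.2 hm)
    have h3 := hle.trans this
    exact absurd h3 (not_le.2 (lt_add_of_pos_right _ one_pos))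
  have hρl : ∀ l, ρ (nndist (g l).2 x₀) ≤ ((g l).1 : NNReal) := by
    intro l
    simp only [hρ, Nat.cast_le]
    exact (Nat.find_min' (hunb (nndist (g l).2 x₀)) le_rfl).trans (hge l)
  have hAunb : ∀ K, IsBounded K → ∃ l, (g l).2 ∉ K := by
    intro K hK
    obtain ⟨Q, hQ⟩ := (Metric.isBounded_iff_subset_closedBall x₀).1 hK
    obtain ⟨l, hl⟩ := exists_nat_ge Q
    refine ⟨l, fun hmem => ?_⟩
    have := hQ hmem
    rw [mem_closedBall] at this
    linarith [hnorm l]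
  obtain ⟨ρ', hρ', hsub⟩ := hopen (range fun l => (g l).2) (by
    intro hb
    obtain ⟨l, hl⟩ := hAunb _ hb
    exact hl ⟨l, rfl⟩) ρ hρt
  obtain ⟨t, ht⟩ := (hρ'.2.eventually_ge_atTop (Real.toNNReal R)).exists
  obtain ⟨l, hl⟩ := hAunb _ (hprop (closedBall y₀ t) isBounded_closedBall)
  obtain ⟨x', hx', hbad⟩ := (hgP l).2
  have hmem : f x' ∈ GrowNbhd y₀ (f '' range fun l => (g l).2) ρ' := by
    refine ⟨f (g l).2, ⟨_, ⟨l, rfl⟩, rfl⟩, ?_⟩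
    have h1 : t ≤ nndist (f (g l).2) y₀ := by
      rw [mem_preimage, mem_closedBall, not_le] at hl
      rw [← NNReal.coe_le_coe, coe_nndist]
      exact hl.le
    have h2 := ht.trans (hρ'.1 h1)
    refine le_trans ?_ h2
    rw [← NNReal.coe_le_coe, coe_nndist, dist_comm, Real.coe_toNNReal R hR.le]
    exact hx'
  obtain ⟨w, ⟨_, ⟨m, rfl⟩, hw⟩, hfw⟩ := hsub hmem
  have hw' : dist w (g m).2 ≤ (g m).1 := by
    have := hw.trans (hρl m)
    rw [← NNReal.coe_le_coe, coe_nndist] at this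
    simpa using this
  have hfw' : dist (f w) (f (g l).2) ≤ R := by rw [hfw, dist_comm]; exact hx'
  rcases lt_trichotomy m l with hml | rfl | hml
  · linarith [(hgr m l hml).2.1 w hw']
  · have := hbad w hfw
    rw [dist_comm] at this
    linarith
  · have hlast := (hgr l m hml).2.2 w hw'
    exact (not_lt.2 hfw' hlast).elim

/-- Coarse finiteness of fibres. -/
lemma fin_sep {X Y : Type*} [MetricSpace X] [MetricSpace Y] [Nonempty X] (f : X → Y)
    (hf : CoarseMap f)
    (hno : ¬ ∃ A : ℕ → Set X, (Pairwise fun i j => Disjoint (A i) (A j)) ∧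
      GraduallyDisjointSeq A ∧ ¬ DivergesSeq fun i => f '' A i) (R : ℝ) (hR : 0 < R) :
    ∃ k : ℕ, ∀ x : ℕ → X, (∀ i < k, ∀ j < k, i ≠ j → (k:ℝ) < dist (x i) (x j)) →
      ¬ ∀ i < k, ∀ j < k, dist (f (x i)) (f (x j)) ≤ R := by
  by_contra hcon
  push Not at hcon
  apply hno
  obtain ⟨hprop, hctrl⟩ := hf
  obtain ⟨x₀⟩ := ‹Nonempty X›
  have hfar : ∀ (κ : ℕ) (Q : ℝ), ∃ x : ℕ → X, (∀ i < κ, Q < dist (x i) x₀) ∧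
      (∀ i < κ, ∀ j < κ, i ≠ j → (κ:ℝ) < dist (x i) (x j)) ∧
      (∀ i < κ, ∀ j < κ, dist (f (x i)) (f (x j)) ≤ R) := by
    intro κ Q
    obtain ⟨T, hT, hT'⟩ := hctrl (max Q 1) (by positivity)
    obtain ⟨Q', hQ'⟩ := (Metric.isBounded_iff_subset_closedBall x₀).1
      (hprop (closedBall (f x₀) (R + T)) isBounded_closedBall)
    obtain ⟨k, hk⟩ := exists_nat_ge (max ((κ:ℝ) + 2) (2 * Q'))
    obtain ⟨x, hx, hfx⟩ := hcon k
    have hk1 : (κ:ℝ) + 2 ≤ k := (le_max_left _ _).trans hk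
    have hk2 : 2 * Q' ≤ k := (le_max_right _ _).trans hk
    have hk3 : κ + 2 ≤ k := by exact_mod_cast hk1
    refine ⟨x, fun i hi => ?_, fun i hi j hj hij => ?_, fun i hi j hj =>
      hfx i (by omega) j (by omega)⟩
    · by_contra hle
      push Not at hle
      have hall : ∀ j < k, dist (x j) x₀ ≤ Q' := by
        intro j hj
        apply hQ'
        simp only [mem_preimage, mem_closedBall]
        have h1 := hT' (x i) x₀ (hle.trans (le_max_left _ _))
        have h2 := hfx j hj i (by omega)
        linarith [dist_triangle (f (x j)) (f (x i)) (f x₀)]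
      have h0 := hall 0 (by omega)
      have h1 := hall 1 (by omega)
      have h2 := hx 0 (by omega) 1 (by omega) (by omega)
      linarith [dist_triangle_right (x 0) (x 1) x₀]
    · have := hx i (by omega) j (by omega) hij
      linarith
  obtain ⟨g, hgP, hgr⟩ := exists_seq_of_forall_finset_exists
    (α := ℕ × (ℕ → X))
    (fun p => 0 < p.1 ∧ (p.1 : ℝ) < dist (p.2 0) x₀ ∧
      (∀ i < p.1, ∀ j < p.1, i ≠ j → (p.1:ℝ) < dist (p.2 i) (p.2 j)) ∧
      (∀ i < p.1, ∀ j < p.1, dist (f (p.2 i)) (f (p.2 j)) ≤ R))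
    (fun p q => p.1 < q.1 ∧ ∀ i < p.1, ∀ j < q.1, (q.1:ℝ) < dist (p.2 i) (q.2 j)) (by
    intro s _
    have hκ : ∃ κ : ℕ, 0 < κ ∧ ∀ p ∈ s, p.1 < κ :=
      ⟨s.sup (fun p => p.1) + 1, Nat.succ_pos _, fun p hp =>
        Nat.lt_succ_of_le (Finset.le_sup (f := fun p : ℕ × (ℕ → X) => p.1) hp)⟩
    obtain ⟨κ, hκ0, hκ⟩ := hκ
    obtain ⟨x, hx, hsep, hfx⟩ := hfar κ (κ + ∑ p ∈ s, ∑ i ∈ Finset.range p.1, dist (p.2 i) x₀)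
    have hnn : ∀ p ∈ s, 0 ≤ ∑ i ∈ Finset.range p.1, dist (p.2 i) x₀ :=
      fun p _ => Finset.sum_nonneg fun _ _ => dist_nonneg
    refine ⟨(κ, x), ⟨hκ0, ?_, hsep, hfx⟩, fun p hp => ⟨hκ p hp, fun i hi j hj => ?_⟩⟩
    · have := hx 0 hκ0
      have h2 := Finset.sum_nonneg hnn
      simp only
      linarith
    · have h1 := hx j hj
      have h2 := Finset.single_le_sum hnn hp
      have h3 : dist (p.2 i) x₀ ≤ ∑ i ∈ Finset.range p.1, dist (p.2 i) x₀ :=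
        Finset.single_le_sum (f := fun i => dist (p.2 i) x₀) (fun _ _ => dist_nonneg)
          (Finset.mem_range.2 hi)
      have h4 := dist_triangle_left (x j) x₀ (p.2 i)
      simp only
      linarith)
  have hmono : StrictMono (fun n => (g n).1) := fun m n hmn => (hgr m n hmn).1
  have hge : ∀ n, n < (g n).1 := by
    intro n
    induction n with
    | zero => exact (hgP 0).1
    | succ n ih => exact lt_of_le_of_lt ih (hmono (Nat.lt_succ_self n))
  -- key separation
  have hkey : ∀ i j l l', i ≤ l → j ≤ l' → i ≠ j →
      ((max l l' : ℕ) : ℝ) < dist ((g l).2 i) ((g l').2 j) := by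
    intro i j l l' hi hj hij
    have hi' := lt_of_le_of_lt hi (hge l)
    have hj' := lt_of_le_of_lt hj (hge l')
    rcases lt_trichotomy l l' with h | rfl | h
    · rw [max_eq_right h.le]
      exact lt_trans (by exact_mod_cast hge l') ((hgr l l' h).2 i hi' j hj')
    · rw [max_self]
      exact lt_trans (by exact_mod_cast hge l) ((hgP l).2.2.1 i hi' j hj' hij)
    · rw [max_eq_left h.le, dist_comm]
      exact lt_trans (by exact_mod_cast hge l) ((hgr l' l h).2 j hj' i hi')
  refine ⟨fun i => {x | ∃ l, i ≤ l ∧ x = (g l).2 i}, ?_, ?_, ?_⟩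
  · intro i j hij
    rw [Set.disjoint_left]
    rintro x ⟨l, hl, rfl⟩ ⟨l', hl', h⟩
    have := hkey i j l l' hl hl' hij
    rw [h, dist_self] at this
    exact absurd this (not_lt.2 (Nat.cast_nonneg _))
  · intro s r hr
    obtain ⟨n, hn⟩ := exists_nat_ge (2 * r)
    refine ⟨⋃ l ∈ Finset.range (n+1), ⋃ i ∈ s, closedBall ((g l).2 i) r, ?_, ?_⟩
    · rw [isBounded_biUnion_finset]
      intro l _
      rw [isBounded_biUnion_finset]
      intro i _
      exact isBounded_closedBall
    · intro i hi j hj hij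
      rw [Set.disjoint_left]
      rintro w ⟨⟨_, ⟨l, hl, rfl⟩, hd⟩, hwB⟩ ⟨⟨_, ⟨l', hl', rfl⟩, hd'⟩, _⟩
      apply hwB
      have h1 := hkey i j l l' hl hl' hij
      have h2 := dist_triangle_left ((g l).2 i) ((g l').2 j) w
      have h3 : ((max l l' : ℕ) : ℝ) < n := by linarith
      have h4 : max l l' < n := by exact_mod_cast h3
      simp only [mem_iUnion, Finset.mem_range]
      exact ⟨l, by omega, i, hi, by rw [mem_closedBall]; exact hd⟩
  · rintro ⟨s, hs⟩
    have hb := hprop _ (hs R hR)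
    obtain ⟨Q, hQ⟩ := (Metric.isBounded_iff_subset_closedBall x₀).1 hb
    obtain ⟨n, hn⟩ := exists_nat_ge Q
    set l := max n (s.sup id) with hl
    have hmem : (g l).2 0 ∈ f ⁻¹' ⋂ i ∈ s, NbhdR (f '' {x | ∃ l, i ≤ l ∧ x = (g l).2 i}) R := by
      simp only [mem_preimage, mem_iInter]
      intro i hi
      have hil : i ≤ l := (Finset.le_sup (f := id) hi).trans (le_max_right _ _)
      exact ⟨f ((g l).2 i), ⟨_, ⟨l, hil, rfl⟩, rfl⟩,
        (hgP l).2.2.2 0 (hgP l).1 i (lt_of_le_of_lt hil (hge l))⟩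
    have h1 := hQ hmem
    rw [mem_closedBall] at h1
    have h2 := (hgP l).2.1
    have h3 : (n:ℝ) ≤ (g l).1 := by exact_mod_cast (le_max_left n _).trans (hge l).le
    linarith

/-- Sets with bounded separated families are covered by few balls. -/
lemma centers {X : Type*} [MetricSpace X] (F : Set X) (k : ℕ) (hF : F.Nonempty)
    (h : ∀ x : ℕ → X, (∀ i < k, x i ∈ F) → ¬ ∀ i < k, ∀ j < k, i ≠ j → (k:ℝ) < dist (x i) (x j)) :
    ∃ x : ℕ → X, ∀ u ∈ F, ∃ i < k, dist u (x i) ≤ k := by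
  by_contra hcon
  push Not at hcon
  have key : ∀ n ≤ k, ∃ x : ℕ → X, (∀ i, x i ∈ F) ∧
      ∀ i < n, ∀ j < n, i ≠ j → (k:ℝ) < dist (x i) (x j) := by
    intro n
    induction n with
    | zero =>
      intro _
      obtain ⟨u, hu⟩ := hF
      exact ⟨fun _ => u, fun _ => hu, fun i hi => absurd hi (Nat.not_lt_zero _)⟩
    | succ n ih =>
      intro hn
      obtain ⟨x, hxF, hx⟩ := ih (by omega)
      obtain ⟨u, hu, hux⟩ := hcon x
      refine ⟨fun i => if i = n then u else x i, ?_, ?_⟩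
      · intro i
        by_cases hi : i = n
        · simpa [hi] using hu
        · simpa [hi] using hxF i
      · intro i hi j hj hij
        by_cases hin : i = n
        · have hjn : j ≠ n := fun h => hij (hin.trans h.symm)
          simp only [hin, hjn, if_true, if_false]
          exact hux j (by omega)
        · by_cases hjn : j = n
          · simp only [hin, hjn, if_true, if_false]
            rw [dist_comm]
            exact hux i (by omega)
          · simp only [hin, hjn, if_false]
            exact hx i (by omega) j (by omega) hij
  obtain ⟨x, hxF, hx⟩ := key k le_rfl
  exact h x (fun i _ => hxF i) hx

lemma asdimLE_source {X Y : Type*} [MetricSpace X] [MetricSpace Y] (f : X → Y)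
    (hf : CoarseMap f)
    (hsep : ∀ R > (0:ℝ), ∃ k : ℕ, ∀ x : ℕ → X,
      (∀ i < k, ∀ j < k, i ≠ j → (k:ℝ) < dist (x i) (x j)) →
      ¬ ∀ i < k, ∀ j < k, dist (f (x i)) (f (x j)) ≤ R)
    (n : ℕ) (hY : ASDimLE Y n) : ASDimLE X n := by
  rw [asdimLE_iff] at hY ⊢
  intro R hR
  obtain ⟨T, hT, hT'⟩ := hf.2 R hR
  obtain ⟨D, hD, c, hc, hd⟩ := hY T hT
  obtain ⟨k, hk⟩ := hsep (2 * D + 1) (by positivity)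
  refine ⟨k * (R + k + 1), by positivity, c ∘ f, fun z _ => hc _ trivial, fun z w hzw => ?_⟩
  by_contra hlt
  push Not at hlt
  have ivt : ∀ t, 0 ≤ t → t ≤ dist z w → ∃ u,
      Relation.ReflTransGen (CStep (c ∘ f) univ R) z u ∧ t ≤ dist z u ∧ dist z u ≤ t + R := by
    intro t ht
    clear hlt
    induction hzw with
    | refl => exact fun h => ⟨z, .refl, h, by rw [dist_self]; positivity⟩
    | @tail a b hab hs ih =>
      intro h
      by_cases hta : t ≤ dist z a
      · exact ih hta
      · refine ⟨b, hab.tail hs, h, ?_⟩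
        push Not at hta
        linarith [dist_triangle z a b, hs.2.2.2]
  have hex : ∀ i : ℕ, ∃ u, i < k → Relation.ReflTransGen (CStep (c ∘ f) univ R) z u ∧
      i * (R + k + 1) ≤ dist z u ∧ dist z u ≤ i * (R + k + 1) + R := by
    intro i
    by_cases hi : i < k
    · obtain ⟨u, hu⟩ := ivt (i * (R + k + 1)) (by positivity) (by
        have : (i:ℝ) ≤ k := by exact_mod_cast hi.le
        have h2 : (i:ℝ) * (R + k + 1) ≤ k * (R + k + 1) :=
          mul_le_mul_of_nonneg_right this (by positivity)
        linarith)
      exact ⟨u, fun _ => hu⟩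
    · exact ⟨z, fun h => absurd h hi⟩
  choose u hu using hex
  have hlt' : ∀ i < k, ∀ j < k, i < j → (k:ℝ) < dist (u i) (u j) := by
    intro i hi j hj hij
    have h1 := (hu i hi).2.2
    have h2 := (hu j hj).2.1
    have h3 : (i:ℝ) + 1 ≤ j := by exact_mod_cast hij
    have h4 : ((i:ℝ) + 1) * (R + k + 1) ≤ j * (R + k + 1) :=
      mul_le_mul_of_nonneg_right h3 (by positivity)
    linarith [dist_triangle z (u i) (u j)]
  refine hk u ?_ ?_
  · intro i hi j hj hij
    rcases lt_or_gt_of_ne hij with h | h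
    · exact hlt' i hi j hj h
    · rw [dist_comm]
      exact hlt' j hj i hi h
  · have hz : ∀ i < k, dist (f z) (f (u i)) ≤ D := by
      intro i hi
      refine hd _ _ (Relation.ReflTransGen.lift f
        (fun a b (hab : CStep (c ∘ f) univ R a b) =>
          ⟨trivial, trivial, hab.2.2.1, hT' a b hab.2.2.2⟩) _ _ (hu i hi).1)
    intro i hi j hj
    linarith [hz i hi, hz j hj, dist_triangle_left (f (u i)) (f (u j)) (f z)]

/-- The fibre of `y` has no distances in `(a, L]`. -/
def GoodFib {X Y : Type*} [MetricSpace X] (f : X → Y) (a L : ℝ) (y : Y) : Prop :=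
  ∀ x x' : X, f x = y → f x' = y → dist x x' ≤ L → dist x x' ≤ a

lemma GoodFib.mono {X Y : Type*} [MetricSpace X] {f : X → Y} {a L L' : ℝ} {y : Y}
    (h : GoodFib f a L' y) (hL : L ≤ L') : GoodFib f a L y :=
  fun x x' hx hx' hd => h x x' hx hx' (hd.trans hL)

section Main

variable {X Y : Type*} [MetricSpace X] [MetricSpace Y] (f : X → Y)

lemma local_piece (hf : CoarseMap f)
    (ho : ∀ R > (0:ℝ), ∃ S : ℝ, 0 < S ∧ ∀ x x' : X, dist (f x) (f x') ≤ R →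
      ∃ w, f w = f x' ∧ dist x w ≤ S)
    (n : ℕ) (hX : ASDimLE X n) (R a : ℝ) (hR : 0 < R) (ha : 0 ≤ a) :
    ∃ E, 0 ≤ E ∧ ∀ D', ∃ L, ∀ V : Set Y, V ⊆ range f → (∀ y ∈ V, ∀ y' ∈ V, dist y y' ≤ D') →
      (∀ y ∈ V, GoodFib f a L y) → Cov V (n + 1) R E := by
  rw [asdimLE_iff] at hX
  obtain ⟨SR, hSR, hSR'⟩ := ho R hR
  obtain ⟨D, hD⟩ := hX (SR + a) (by positivity)
  obtain ⟨E, hE, hE'⟩ := hf.2 (max D 1) (by positivity)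
  refine ⟨E, hE.le, fun D' => ?_⟩
  obtain ⟨SD, hSD, hSD'⟩ := ho (max D' 1) (by positivity)
  refine ⟨2 * SD + SR, fun V hV hVD hgood => ?_⟩
  rcases V.eq_empty_or_nonempty with rfl | ⟨v, hv⟩
  · exact Cov.disjUnion (fun _ => ()) hE.le (fun _ h => h.elim) (fun _ h => h.elim)
  obtain ⟨x, rfl⟩ := hV hv
  have hs : ∀ y, ∃ s, y ∈ V → f s = y ∧ dist x s ≤ SD := by
    intro y
    by_cases hy : y ∈ V
    · obtain ⟨x', rfl⟩ := hV hy
      obtain ⟨w, hw⟩ := hSD' x x' ((hVD _ hv _ hy).trans (le_max_left _ _))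
      exact ⟨w, fun _ => hw⟩
    · exact ⟨x, fun h => absurd h hy⟩
  choose s hs using hs
  refine Cov.pull hE.le s (fun _ _ => mem_univ _) hD ?_ ?_
  · intro y hy y' hy' hyy
    obtain ⟨w, hw, hdw⟩ := hSR' (s y) (s y') (by rw [(hs y hy).1, (hs y' hy').1]; exact hyy)
    rw [(hs y' hy').1] at hw
    have h1 : dist w (s y') ≤ a := by
      apply hgood y' hy' w (s y') hw (hs y' hy').1
      have h2 := (hs y hy).2
      have h3 := (hs y' hy').2
      have h4 := dist_triangle4 w (s y) x (s y')
      rw [dist_comm w (s y), dist_comm (s y) x] at h4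
      linarith
    linarith [dist_triangle (s y) w (s y')]
  · intro y hy y' hy' hyy
    have := hE' (s y) (s y') (hyy.trans (le_max_left _ _))
    rwa [(hs y hy).1, (hs y' hy').1] at this

lemma stratum_aux (hf : CoarseMap f)
    (ho : ∀ R > (0:ℝ), ∃ S : ℝ, 0 < S ∧ ∀ x x' : X, dist (f x) (f x') ≤ R →
      ∃ w, f w = f x' ∧ dist x w ≤ S)
    (n : ℕ) (hX : ASDimLE X n) (R a : ℝ) (hR : 0 < R) (ha : 0 ≤ a) (m : ℕ) :
    ∃ T E, 0 < T ∧ 0 ≤ E ∧ ∀ D', ∃ L, ∀ Z : Set Y, Z ⊆ range f → Cov Z m T D' →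
      (∀ y ∈ Z, GoodFib f a L y) → Cov Z (n + 1) R E := by
  induction m with
  | zero =>
    refine ⟨1, 0, one_pos, le_rfl, fun D' => ⟨0, fun Z _ hZ _ => ?_⟩⟩
    obtain ⟨_, c, hc, _⟩ := hZ
    exact Cov.disjUnion (fun _ => ()) le_rfl (fun z h => absurd (hc z h) (Nat.not_lt_zero _))
      (fun z h => absurd (hc z h) (Nat.not_lt_zero _))
  | succ m ih =>
    obtain ⟨T, E, hT, hE, hm⟩ := ih
    obtain ⟨E', hE', hp⟩ := local_piece f hf ho n hX (E + 2 * R) a (by positivity) ha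
    refine ⟨max T (E + 2 * R), E' + 2 * (E + R), lt_max_of_lt_left hT, by positivity,
      fun D' => ?_⟩
    obtain ⟨L₁, hL₁⟩ := hm D'
    obtain ⟨L₂, hL₂⟩ := hp (2 * D')
    refine ⟨max L₁ L₂, fun Z hZ hcov hgood => ?_⟩
    obtain ⟨hD', c, hc, hd⟩ := hcov
    have h1 : Cov {z | z ∈ Z ∧ c z < m} (n + 1) R E := by
      refine hL₁ _ (fun z hz => hZ hz.1) ⟨hD', c, fun z hz => hz.2, fun z w hzw => hd z w ?_⟩
        (fun y hy => (hgood y hy.1).mono (le_max_left _ _))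
      exact Relation.ReflTransGen.mono
        (fun p q (h : CStep c _ T p q) => h.mono (fun z hz => hz.1) (le_max_left _ _)) _ _ hzw
    have h2 : Cov {z | z ∈ Z ∧ c z = m} (n + 1) (E + 2 * R) E' := by
      refine Cov.disjUnion (fun z => {w | Relation.ReflTransGen
        (CStep c Z (max T (E + 2 * R))) w z}) hE' ?_ ?_
      · intro z hz w hw hzw
        have hst : CStep c Z (max T (E + 2 * R)) z w :=
          ⟨hz.1, hw.1, hz.2.trans hw.2.symm, hzw.trans (le_max_right _ _)⟩
        ext u
        exact ⟨fun h => Relation.ReflTransGen.tail h hst,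
          fun h => Relation.ReflTransGen.tail h hst.symm⟩
      · intro y hy
        have hy' : ∀ z ∈ {z | z ∈ {z | z ∈ Z ∧ c z = m} ∧
            {w | Relation.ReflTransGen (CStep c Z (max T (E + 2 * R))) w z} =
            {w | Relation.ReflTransGen (CStep c Z (max T (E + 2 * R))) w y}}, dist z y ≤ D' := by
          rintro z ⟨_, hz⟩
          apply hd
          have : z ∈ {w | Relation.ReflTransGen (CStep c Z (max T (E + 2 * R))) w z} :=
            Relation.ReflTransGen.refl
          rw [hz] at this
          exact this
        refine hL₂ _ (fun z hz => hZ hz.1.1) ?_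
          (fun z hz => (hgood z hz.1.1).mono (le_max_right _ _))
        intro z hz w hw
        linarith [hy' z hz, hy' w hw, dist_triangle_right z w y]
    refine (Cov.union hR.le h1 h2 le_rfl).mono ?_ le_rfl le_rfl
    intro z hz
    rcases Nat.lt_succ_iff_lt_or_eq.1 (hc z hz) with h | h
    · exact Or.inl ⟨hz, h⟩
    · exact Or.inr ⟨hz, h⟩

lemma stratum (hf : CoarseMap f)
    (ho : ∀ R > (0:ℝ), ∃ S : ℝ, 0 < S ∧ ∀ x x' : X, dist (f x) (f x') ≤ R →
      ∃ w, f w = f x' ∧ dist x w ≤ S)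
    (n N : ℕ) (hX : ASDimLE X n) (hY : ASDimLE Y N) (R a : ℝ) (hR : 0 < R) (ha : 0 ≤ a) :
    ∃ E L, 0 ≤ E ∧ ∀ Z : Set Y, Z ⊆ range f →
      (∀ y ∈ Z, GoodFib f a L y) → Cov Z (n + 1) R E := by
  obtain ⟨T, E, hT, hE, h⟩ := stratum_aux f hf ho n hX R a hR ha (N + 1)
  obtain ⟨D, hD⟩ := (asdimLE_iff N).1 hY T hT
  obtain ⟨L, hL⟩ := h D
  exact ⟨E, L, hE, fun Z hZ hg => hL Z hZ (hD.mono (subset_univ _) le_rfl le_rfl) hg⟩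

lemma strata (hf : CoarseMap f)
    (ho : ∀ R > (0:ℝ), ∃ S : ℝ, 0 < S ∧ ∀ x x' : X, dist (f x) (f x') ≤ R →
      ∃ w, f w = f x' ∧ dist x w ≤ S)
    (n N : ℕ) (hX : ASDimLE X n) (hY : ASDimLE Y N) (R gap : ℝ) (hR : 0 < R) (hgap : 0 ≤ gap)
    (M : ℕ) :
    ∃ (E B : ℝ) (p q : ℕ → ℝ), 0 ≤ E ∧ 0 ≤ B ∧ (∀ j < M, q j ≤ B) ∧
      (∀ j < M, ∀ i < j, q i + gap ≤ p j) ∧ ∀ Z : Set Y, Z ⊆ range f →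
      (∀ y ∈ Z, ∃ j < M, GoodFib f (p j) (q j) y) → Cov Z (n + 1) R E := by
  induction M with
  | zero =>
    refine ⟨0, 0, fun _ => 0, fun _ => 0, le_rfl, le_rfl, fun j hj => absurd hj (Nat.not_lt_zero _),
      fun j hj => absurd hj (Nat.not_lt_zero _), fun Z _ h => ?_⟩
    exact Cov.disjUnion (fun _ => ()) le_rfl
      (fun z hz => by obtain ⟨j, hj, _⟩ := h z hz; exact absurd hj (Nat.not_lt_zero _))
      (fun z hz => by obtain ⟨j, hj, _⟩ := h z hz; exact absurd hj (Nat.not_lt_zero _))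
  | succ M ih =>
    obtain ⟨E, B, p, q, hE, hB, hqB, hpq, hcov⟩ := ih
    obtain ⟨E', L, hE', hs⟩ := stratum f hf ho n N hX hY (E + 2 * R) (B + gap) (by positivity)
      (by positivity)
    refine ⟨E' + 2 * (E + R), max B L, fun j => if j = M then B + gap else p j,
      fun j => if j = M then L else q j, by positivity, hB.trans (le_max_left _ _), ?_, ?_, ?_⟩
    · intro j hj
      by_cases h : j = M
      · simp [h]
      · simp only [h, if_false]
        exact (hqB j (by omega)).trans (le_max_left _ _)
    · intro j hj i hi
      have hiM : i ≠ M := by omega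
      by_cases h : j = M
      · simp only [h, hiM, if_true, if_false]
        linarith [hqB i (by omega)]
      · simp only [h, hiM, if_false]
        exact hpq j (by omega) i hi
    · intro Z hZ hgood
      have h1 := hcov {y | y ∈ Z ∧ ∃ j < M, GoodFib f (p j) (q j) y} (fun z hz => hZ hz.1)
        (fun y hy => hy.2)
      have h2 := hs {y | y ∈ Z ∧ GoodFib f (B + gap) L y} (fun z hz => hZ hz.1) (fun y hy => hy.2)
      refine (Cov.union hR.le h1 h2 le_rfl).mono ?_ le_rfl le_rfl
      intro y hy
      obtain ⟨j, hj, hg⟩ := hgood y hy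
      by_cases h : j = M
      · simp only [h, if_true] at hg
        exact Or.inr ⟨hy, hg⟩
      · simp only [h, if_false] at hg
        exact Or.inl ⟨hy, j, by omega, hg⟩

lemma asdimLE_target (hf : CoarseMap f) (hsurj : CoarselySurjective f)
    (ho : ∀ R > (0:ℝ), ∃ S : ℝ, 0 < S ∧ ∀ x x' : X, dist (f x) (f x') ≤ R →
      ∃ w, f w = f x' ∧ dist x w ≤ S)
    (hsep : ∀ R > (0:ℝ), ∃ k : ℕ, ∀ x : ℕ → X,
      (∀ i < k, ∀ j < k, i ≠ j → (k:ℝ) < dist (x i) (x j)) →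
      ¬ ∀ i < k, ∀ j < k, dist (f (x i)) (f (x j)) ≤ R)
    (n N : ℕ) (hX : ASDimLE X n) (hY : ASDimLE Y N) : ASDimLE Y n := by
  rw [asdimLE_iff]
  intro R hR
  obtain ⟨C, hC, hC'⟩ := hsurj
  obtain ⟨k, hk⟩ := hsep 1 one_pos
  obtain ⟨E, B, p, q, hE, -, -, hpq, hcov⟩ := strata f hf ho n N hX hY (R + 2 * C) (4 * k)
    (by positivity) (by positivity) (k * k + 1)
  have hrange : Cov (range f) (n + 1) (R + 2 * C) E := by
    refine hcov _ Subset.rfl ?_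
    rintro _ ⟨x, rfl⟩
    obtain ⟨ctr, hctr⟩ := centers (f ⁻¹' {f x}) k ⟨x, rfl⟩ (by
      intro u hu hsepu
      refine hk u hsepu fun i hi j hj => ?_
      rw [show f (u i) = f x from hu i hi, show f (u j) = f x from hu j hj, dist_self]
      exact zero_le_one)
    by_contra hbad
    simp only [GoodFib] at hbad
    push Not at hbad
    have : Nonempty X := ⟨x⟩
    choose! u v hu hv hle hlt using hbad
    have hcu : ∀ j, ∃ s : Fin k × Fin k, j < k * k + 1 →
        dist (u j) (ctr s.1) ≤ k ∧ dist (v j) (ctr s.2) ≤ k := by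
      intro j
      have h0 : 0 < k * k + 1 := by omega
      obtain ⟨i0, hi0, _⟩ := hctr (u 0) (hu 0 h0)
      by_cases hj : j < k * k + 1
      · obtain ⟨i, hi, hdi⟩ := hctr (u j) (hu j hj)
        obtain ⟨i', hi', hdi'⟩ := hctr (v j) (hv j hj)
        exact ⟨(⟨i, hi⟩, ⟨i', hi'⟩), fun _ => ⟨hdi, hdi'⟩⟩
      · exact ⟨(⟨i0, hi0⟩, ⟨i0, hi0⟩), fun h => absurd h hj⟩
    choose s hs using hcu
    obtain ⟨i, j, hij, hsij⟩ := Fintype.exists_ne_map_eq_of_card_lt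
      (fun j : Fin (k * k + 1) => s j) (by simp)
    have main : ∀ i j : ℕ, i < j → i < k * k + 1 → j < k * k + 1 → s i = s j → False := by
      intro i j hlt' hi hj hsij
      have h1 := hpq j hj i hlt'
      have h2 := hlt j hj
      have h3 := hle i hi
      obtain ⟨a1, a2⟩ := hs i hi
      obtain ⟨b1, b2⟩ := hs j hj
      rw [← hsij] at b1 b2
      have t1 := dist_triangle4 (u j) (ctr (s i).1) (ctr (s i).2) (v j)
      have t2 := dist_triangle4 (ctr (s i).1) (u i) (v i) (ctr (s i).2)
      rw [dist_comm (ctr (s i).2) (v j)] at t1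
      rw [dist_comm (ctr (s i).1) (u i)] at t2
      linarith
    rcases lt_or_gt_of_ne hij with h | h
    · exact main i j h i.2 j.2 hsij
    · exact main j i h j.2 i.2 hsij.symm
  choose g hg using hC'
  refine ⟨E + 2 * C, Cov.pull (by positivity) (fun y => f (g y)) (fun y _ => mem_range_self (g y)) hrange ?_ ?_⟩
  · intro y _ y' _ h
    have h4 := dist_triangle4 (f (g y)) y y' (f (g y'))
    rw [dist_comm (f (g y)) y] at h4
    linarith [hg y, hg y']
  · intro y _ y' _ h
    have h4 := dist_triangle4 y (f (g y)) (f (g y')) y'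
    rw [dist_comm (f (g y')) y'] at h4
    linarith [hg y, hg y']

end Main

/-- Let `X`, `Y` be nonempty proper metric spaces of finite
asymptotic dimension and `f : X → Y` coarse, coarsely open, coarsely surjective,
such that there is no countable gradually disjoint collection of pairwise
disjoint subsets of `X` whose image collection does not diverge. Then
`asdim Y = asdim X`. -/
theorem asdim_eq_of_no_nondivergent_sequence {X Y : Type*}
    [MetricSpace X] [ProperSpace X] [Nonempty X]
    [MetricSpace Y] [ProperSpace Y] [Nonempty Y] (f : X → Y)
    (hdimX : asdim X ≠ ⊤) (hdimY : asdim Y ≠ ⊤)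
    (hf : CoarseMap f) (hopen : ∀ (x₀ : X) (y₀ : Y), CoarselyOpen f x₀ y₀)
    (hs : CoarselySurjective f)
    (hno : ¬ ∃ A : ℕ → Set X, (Pairwise fun i j => Disjoint (A i) (A j)) ∧
      GraduallyDisjointSeq A ∧ ¬ DivergesSeq fun i => f '' A i) :
    asdim Y = asdim X := by

  obtain ⟨x₀⟩ := ‹Nonempty X›
  obtain ⟨y₀⟩ := ‹Nonempty Y›
  have hsep := @fin_sep X Y _ _ ⟨x₀⟩ f hf hno
  have ho := unif_open f x₀ y₀ hf (hopen x₀ y₀)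
  have hN : ∃ N, ASDimLE Y N := by
    by_contra hcon
    push Not at hcon
    apply hdimY
    unfold asdim
    rw [sInf_eq_top]
    rintro a ⟨m, _, hm⟩
    exact absurd hm (hcon m)
  obtain ⟨N, hN⟩ := hN
  have hiff : ∀ m, ASDimLE Y m ↔ ASDimLE X m := fun m =>
    ⟨fun h => asdimLE_source f hf hsep m h, fun h => asdimLE_target f hf hs ho hsep m N h hN⟩
  unfold asdim
  simp only [hiff]
end
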